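/- Let γ ∈ ℝ with γ ≠ 0 and consider the 2-parameter family of surfaces given by f(x,y;t,u) = y² + x²y + (1/4)x⁴ + γx⁴y + tx³ + ux⁴. Then there exists η ∈ {1,−1} (determined by the sign of γ) such that the family of asymptotic BDEs of f(·,·;t,u), parametrized by (t,u) ∈ ℝ², is fiber topologically equivalent at 0 to the family of BDEs dy² + (−y + ηx⁴ + ux² + tx)dx² = 0, i.e. the family with coefficients (a,b,c) = (1, 0, −y + ηx⁴ + ux² + tx). -/

import Mathlib

open Asymptotics Filter Set

noncomputable section

/-- Partial derivative in the first variable (∂/∂x). -/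
def pdx (f : ℝ × ℝ → ℝ) (p : ℝ × ℝ) : ℝ := deriv (fun s => f (s, p.2)) p.1

/-- Partial derivative in the second variable (∂/∂y). -/
def pdy (f : ℝ × ℝ → ℝ) (p : ℝ × ℝ) : ℝ := deriv (fun s => f (p.1, s)) p.2

/-- f_xx -/
def fxx (f : ℝ × ℝ → ℝ) : ℝ × ℝ → ℝ := pdx (pdx f)
/-- f_xy -/
def fxy (f : ℝ × ℝ → ℝ) : ℝ × ℝ → ℝ := pdy (pdx f)
/-- f_yy -/
def fyy (f : ℝ × ℝ → ℝ) : ℝ × ℝ → ℝ := pdy (pdy f)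

/-- The discriminant δ = f_xy² − f_xx·f_yy of the asymptotic BDE of `f`. -/
def bdeDiscr (f : ℝ × ℝ → ℝ) : ℝ × ℝ → ℝ := fun p => (fxy f p) ^ 2 - fxx f p * fyy f p

/-- The BDE `a dy² + 2b dxdy + c dx² = 0`, regarded as the family of quadratic
forms `ω_p(v) = a(p)v₂² + 2b(p)v₁v₂ + c(p)v₁²`. -/
def BDE (a b c : ℝ × ℝ → ℝ) : (ℝ × ℝ) → (ℝ × ℝ) → ℝ :=
  fun p v => a p * v.2 ^ 2 + 2 * b p * v.1 * v.2 + c p * v.1 ^ 2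

/-- The asymptotic BDE `f_yy dy² + 2 f_xy dxdy + f_xx dx² = 0` of the surface `z = f(x,y)`. -/
def asymBDE (f : ℝ × ℝ → ℝ) : (ℝ × ℝ) → (ℝ × ℝ) → ℝ := BDE (fyy f) (fxy f) (fxx f)

/-- `j^k f(0) = P` : the degree-k Taylor polynomial of `f` at the origin is `P`,
i.e. `f − P = o(‖(x,y)‖^k)` as `(x,y) → 0`. -/
def HasJetAt0 (f P : ℝ × ℝ → ℝ) (k : ℕ) : Prop :=
  (fun p => f p - P p) =o[nhds (0 : ℝ × ℝ)] fun p => ‖p‖ ^ k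

/-- `γ` is an integral curve of the BDE `ω` on the open interval `I`:
`γ` is C¹ on `I` with nowhere-vanishing derivative annihilating `ω`. -/
def IsIntegralCurveOnBDE (ω : (ℝ × ℝ) → (ℝ × ℝ) → ℝ) (γ : ℝ → ℝ × ℝ) (I : Set ℝ) : Prop :=
  (∃ a b : ℝ, I = Set.Ioo a b) ∧
  ∃ dγ : ℝ → ℝ × ℝ, ContinuousOn dγ I ∧
    ∀ t ∈ I, HasDerivAt γ (dγ t) t ∧ dγ t ≠ 0 ∧ ω (γ t) (dγ t) = 0

/-- Topological equivalence of two BDEs at the origin: a local homeomorphism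
fixing `0` sending integral curves of one to integral curves of the other. -/
def TopEquivAt0 (ω Ω : (ℝ × ℝ) → (ℝ × ℝ) → ℝ) : Prop :=
  ∃ (U V : Set (ℝ × ℝ)) (h hinv : ℝ × ℝ → ℝ × ℝ),
    IsOpen U ∧ IsOpen V ∧ (0 : ℝ × ℝ) ∈ U ∧ (0 : ℝ × ℝ) ∈ V ∧ h 0 = 0 ∧
    ContinuousOn h U ∧ ContinuousOn hinv V ∧
    Set.BijOn h U V ∧ Set.InvOn hinv h U V ∧
    (∀ γ I, IsIntegralCurveOnBDE ω γ I → Set.MapsTo γ I U →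
      ∃ σ J, IsIntegralCurveOnBDE Ω σ J ∧ h '' (γ '' I) = σ '' J) ∧
    (∀ σ J, IsIntegralCurveOnBDE Ω σ J → Set.MapsTo σ J V →
      ∃ γ I, IsIntegralCurveOnBDE ω γ I ∧ hinv '' (σ '' J) = γ '' I)

/-- Smooth equivalence of two BDEs at the origin: a local C^∞ diffeomorphism `h`
fixing `0` pulling one family of quadratic forms back to a nonvanishing multiple
of the other. -/
def SmoothEquivAt0 (ω Ω : (ℝ × ℝ) → (ℝ × ℝ) → ℝ) : Prop :=
  ∃ (U V : Set (ℝ × ℝ)) (h hinv : ℝ × ℝ → ℝ × ℝ) (ρ : ℝ × ℝ → ℝ),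
    IsOpen U ∧ IsOpen V ∧ (0 : ℝ × ℝ) ∈ U ∧ (0 : ℝ × ℝ) ∈ V ∧ h 0 = 0 ∧
    ContDiffOn ℝ (⊤ : ℕ∞) h U ∧ ContDiffOn ℝ (⊤ : ℕ∞) hinv V ∧
    Set.BijOn h U V ∧ Set.InvOn hinv h U V ∧
    ContDiffOn ℝ (⊤ : ℕ∞) ρ U ∧ (∀ p ∈ U, ρ p ≠ 0) ∧
    (∀ p ∈ U, ∀ v : ℝ × ℝ, Ω (h p) (fderiv ℝ h p v) = ρ p * ω p v)

/-- Fiber topological equivalence at `0` of two 2-parameter families of BDEs: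
a homeomorphism `φ` of parameter spaces (onto its image), fixing `0`, such that
corresponding members of the families are topologically equivalent at `0`. -/
def FiberTopEquivAt0 (ω Ω : (ℝ × ℝ) → (ℝ × ℝ) → (ℝ × ℝ) → ℝ) : Prop :=
  ∃ (W : Set (ℝ × ℝ)) (φ ψ : ℝ × ℝ → ℝ × ℝ),
    W ∈ nhds (0 : ℝ × ℝ) ∧ φ 0 = 0 ∧
    ContinuousOn φ W ∧ ContinuousOn ψ (φ '' W) ∧
    Set.InvOn ψ φ W (φ '' W) ∧
    ∀ q ∈ W, TopEquivAt0 (ω q) (Ω (φ q))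

/-!
Completing the square in `dy` and normalizing the coefficient of `y dx²` turns the asymptotic BDE
of `f(·, ·; t, u)` into `dy² = (y - s x) dx²`, where near the origin, up to an odd change of the
abscissa, `s x = t x a(x) + u x² b(x) + x⁴ c(x)` with `a 0, b 0 > 0` and `c 0` of the sign of `-γ`.
The fold of the model family has an expansion of the same kind, with `c = η`, so for `η = -sign γ`
the two families can be compared at equal parameters.

Above the fold `y = s x` the integral curves are composed of ascending leaves `y' = √(y - s x)` and
descending leaves `y' = -√(y - s x)`, and a point is determined by the two leaves through it. The
set of pairs of leaves that meet depends only on the topological type of the fold germ: a regular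
fold point when `t ≠ 0`, and, when `t = 0`, a folded saddle if `u < 0` and a folded node if `u > 0`,
the sign of `c` deciding if `u = 0`. Hence matching the labels of leaves is a homeomorphism above
the folds of two germs of the same type. For `t = 0` the fold is symmetric in `x` and it suffices to
match the right halves. Below the fold there are no integral curves, and the homeomorphism is
extended by vertical translation.
-/

namespace FoldedBDE

open Topology

/-! ### The clamped square root -/

/-- The clamp `max 0 (min z 1)` of a real number to the interval `[0, 1]`. -/
def clamp (z : ℝ) : ℝ := max 0 (min z 1)

/-- The square root of the clamp of `z` to `[0, 1]`. It agrees with `√z` for `0 ≤ z ≤ 1` and is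
bounded and monotone, so the solutions of `y' = ±clampSqrt (y - s x)` are globally defined. -/
def clampSqrt (z : ℝ) : ℝ := √(clamp z)

lemma clamp_nonneg (z : ℝ) : 0 ≤ clamp z := le_max_left _ _

lemma clamp_le_one (z : ℝ) : clamp z ≤ 1 := max_le zero_le_one (min_le_right _ _)

lemma monotone_clamp : Monotone clamp := fun _ _ h => max_le_max le_rfl (min_le_min h le_rfl)

lemma continuous_clamp : Continuous clamp := by unfold clamp; fun_prop

lemma clamp_eq_self {z : ℝ} (h₀ : 0 ≤ z) (h₁ : z ≤ 1) : clamp z = z := by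
  rw [clamp, min_eq_left h₁, max_eq_right h₀]

lemma clamp_sub_clamp_le {u v : ℝ} (h : u ≤ v) : clamp v - clamp u ≤ v - u := by
  unfold clamp
  grind

lemma continuous_clampSqrt : Continuous clampSqrt := continuous_clamp.sqrt

lemma clampSqrt_nonneg (z : ℝ) : 0 ≤ clampSqrt z := Real.sqrt_nonneg _

lemma clampSqrt_le_one (z : ℝ) : clampSqrt z ≤ 1 := Real.sqrt_le_one.2 (clamp_le_one z)

lemma monotone_clampSqrt : Monotone clampSqrt := fun _ _ h => Real.sqrt_le_sqrt (monotone_clamp h)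

lemma sq_clampSqrt (z : ℝ) : clampSqrt z ^ 2 = clamp z := Real.sq_sqrt (clamp_nonneg z)

lemma clampSqrt_eq_sqrt {z : ℝ} (h₀ : 0 ≤ z) (h₁ : z ≤ 1) : clampSqrt z = √z := by
  rw [clampSqrt, clamp_eq_self h₀ h₁]

lemma clampSqrt_eq_zero_iff {z : ℝ} : clampSqrt z = 0 ↔ z ≤ 0 := by
  rw [clampSqrt, Real.sqrt_eq_zero (clamp_nonneg z), clamp]
  grind

lemma clampSqrt_of_nonpos {z : ℝ} (h : z ≤ 0) : clampSqrt z = 0 := clampSqrt_eq_zero_iff.2 h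

lemma clampSqrt_pos {z : ℝ} (h : 0 < z) : 0 < clampSqrt z :=
  (clampSqrt_nonneg z).lt_of_ne fun h₀ => h.not_ge (clampSqrt_eq_zero_iff.1 h₀.symm)

lemma sq_clampSqrt_sub_le {u v : ℝ} (h : u ≤ v) : clampSqrt v ^ 2 - clampSqrt u ^ 2 ≤ v - u := by
  simpa only [sq_clampSqrt] using clamp_sub_clamp_le h

lemma exists_clampSqrt_sub_le_mul {k : ℝ} (hk : 0 < k) :
    ∃ K : ℝ, ∀ u v : ℝ, k ≤ u → u ≤ v → clampSqrt v - clampSqrt u ≤ K * (v - u) := by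
  refine ⟨(clampSqrt k)⁻¹, fun u v hu huv => ?_⟩
  rw [inv_mul_eq_div, le_div_iff₀ (clampSqrt_pos hk)]
  nlinarith [monotone_clampSqrt hu, monotone_clampSqrt huv, clampSqrt_nonneg v,
    sq_clampSqrt_sub_le huv]

lemma abs_clampSqrt_sub_le (u v : ℝ) : |clampSqrt u - clampSqrt v| ≤ √|u - v| := by
  wlog h : u ≤ v generalizing u v
  · rw [abs_sub_comm, abs_sub_comm u]
    exact this v u (le_of_not_ge h)
  apply Real.abs_le_sqrt
  rw [abs_of_nonpos (by linarith)]
  nlinarith [monotone_clampSqrt h, sq_clampSqrt_sub_le h, clampSqrt_nonneg u]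

/-! ### Calculus on intervals -/

section Interval

variable {f f' : ℝ → ℝ} {a b : ℝ}

lemma antitoneOn_Icc_of_hasDerivAt (hc : ContinuousOn f (Icc a b))
    (hd : ∀ x ∈ Ioo a b, HasDerivAt f (f' x) x) (hn : ∀ x ∈ Ioo a b, f' x ≤ 0) :
    AntitoneOn f (Icc a b) :=
  antitoneOn_of_hasDerivWithinAt_nonpos (convex_Icc a b) hc
    (fun x hx => (hd x (by simpa using hx)).hasDerivWithinAt)
    (fun x hx => hn x (by simpa using hx))

lemma monotoneOn_Icc_of_hasDerivAt (hc : ContinuousOn f (Icc a b))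
    (hd : ∀ x ∈ Ioo a b, HasDerivAt f (f' x) x) (hn : ∀ x ∈ Ioo a b, 0 ≤ f' x) :
    MonotoneOn f (Icc a b) :=
  monotoneOn_of_hasDerivWithinAt_nonneg (convex_Icc a b) hc
    (fun x hx => (hd x (by simpa using hx)).hasDerivWithinAt)
    (fun x hx => hn x (by simpa using hx))

lemma strictMonoOn_Icc_of_hasDerivAt (hc : ContinuousOn f (Icc a b))
    (hd : ∀ x ∈ Ioo a b, HasDerivAt f (f' x) x) (hn : ∀ x ∈ Ioo a b, 0 < f' x) :
    StrictMonoOn f (Icc a b) :=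
  strictMonoOn_of_hasDerivWithinAt_pos (convex_Icc a b) hc
    (fun x hx => (hd x (by simpa using hx)).hasDerivWithinAt)
    (fun x hx => hn x (by simpa using hx))

lemma exists_Ico_forall_of_eventually_nhdsLT {z : ℝ} (haz : a < z) {p : ℝ → Prop}
    (h : ∀ᶠ x in 𝓝[<] z, p x) : ∃ w, a ≤ w ∧ w < z ∧ ∀ x ∈ Ico w z, p x := by
  obtain ⟨w, hwz, hw⟩ :=
    mem_nhdsLT_iff_exists_Ico_subset.1 (h.and (Ioo_mem_nhdsLT haz))
  exact ⟨w, (hw ⟨le_rfl, hwz⟩).2.1.le, hwz, fun x hx => (hw hx).1⟩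

lemma neg_mem_Icc_neg {x : ℝ} (hx : x ∈ Icc a b) : -x ∈ Icc (-b) (-a) :=
  ⟨neg_le_neg hx.2, neg_le_neg hx.1⟩

end Interval

/-! ### Descending leaves: uniqueness to the right -/

/-- `y` is a descending leaf over `[a, b]` of the BDE `dy² = (y - s x) dx²`, that is, a solution of
`y' = -√(y - s x)`. With the clamped root, a leaf reaching the region `y ≤ s x` stays constant
there. -/
structure IsDescending (s : ℝ → ℝ) (a b : ℝ) (y : ℝ → ℝ) : Prop where
  continuousOn : ContinuousOn y (Icc a b)
  hasDerivAt : ∀ x ∈ Ioo a b, HasDerivAt y (-(clampSqrt (y x - s x))) x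

namespace IsDescending

variable {s y y₁ y₂ : ℝ → ℝ} {a b x z : ℝ}

lemma mono {a' b' : ℝ} (h : IsDescending s a b y) (ha : a ≤ a') (hb : b' ≤ b) :
    IsDescending s a' b' y :=
  ⟨h.continuousOn.mono (Icc_subset_Icc ha hb),
    fun x hx => h.hasDerivAt x (Ioo_subset_Ioo ha hb hx)⟩

lemma antitoneOn (h : IsDescending s a b y) : AntitoneOn y (Icc a b) :=
  antitoneOn_Icc_of_hasDerivAt h.continuousOn h.hasDerivAt
    fun _ _ => neg_nonpos.2 (clampSqrt_nonneg _)

lemma monotoneOn_add_id (h : IsDescending s a b y) : MonotoneOn (fun x => y x + x) (Icc a b) :=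
  monotoneOn_Icc_of_hasDerivAt (h.continuousOn.add continuousOn_id)
    (fun x hx => (h.hasDerivAt x hx).add (hasDerivAt_id x))
    fun x _ => by linarith [clampSqrt_le_one (y x - s x)]

lemma antitoneOn_sq_sub (h₁ : IsDescending s a b y₁) (h₂ : IsDescending s a b y₂) :
    AntitoneOn (fun x => (y₁ x - y₂ x) ^ 2) (Icc a b) := by
  apply antitoneOn_Icc_of_hasDerivAt ((h₁.continuousOn.sub h₂.continuousOn).pow 2)
    (fun x hx => ((h₁.hasDerivAt x hx).sub (h₂.hasDerivAt x hx)).pow 2)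
  intro x _
  simp only [Pi.sub_apply, pow_one, Nat.cast_ofNat, Nat.add_one_sub_one]
  rcases le_total (y₁ x) (y₂ x) with h | h <;>
    nlinarith [monotone_clampSqrt (sub_le_sub_right h (s x))]

lemma abs_sub_le (h₁ : IsDescending s a b y₁) (h₂ : IsDescending s a b y₂) (hx : x ∈ Icc a b) :
    |y₁ x - y₂ x| ≤ |y₁ a - y₂ a| :=
  sq_le_sq.1 (antitoneOn_sq_sub h₁ h₂ (left_mem_Icc.2 (hx.1.trans hx.2)) hx hx.1)

lemma eq_of_eq_left (h₁ : IsDescending s a b y₁) (h₂ : IsDescending s a b y₂)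
    (he : y₁ a = y₂ a) (hx : x ∈ Icc a b) : y₁ x = y₂ x := by
  have := abs_sub_le h₁ h₂ hx
  rw [he, sub_self, abs_zero] at this
  exact sub_eq_zero.1 (abs_nonpos_iff.1 this)

lemma le_of_le_left (h₁ : IsDescending s a b y₁) (h₂ : IsDescending s a b y₂)
    (he : y₁ a ≤ y₂ a) (hx : x ∈ Icc a b) : y₁ x ≤ y₂ x := by
  by_contra! hlt
  have hc : ContinuousOn (fun t => y₁ t - y₂ t) (Icc a x) :=
    (h₁.continuousOn.sub h₂.continuousOn).mono (Icc_subset_Icc le_rfl hx.2)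
  obtain ⟨z, hz, hz₀⟩ := intermediate_value_Icc hx.1 hc
    (show (0 : ℝ) ∈ Icc _ _ from ⟨sub_nonpos.2 he, sub_nonneg.2 hlt.le⟩)
  exact hlt.ne' (eq_of_eq_left (h₁.mono hz.1 le_rfl) (h₂.mono hz.1 le_rfl)
    (sub_eq_zero.1 hz₀) ⟨hz.2, hx.2⟩)

lemma tendsto_sub_nhdsLT (hs : Continuous s) (haz : a < z) (h : IsDescending s a z y) :
    Tendsto (fun x => y x - s x) (𝓝[<] z) (𝓝 (y z - s z)) := by
  have hy : ContinuousWithinAt y (Iio z) z :=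
    (h.continuousOn z (right_mem_Icc.2 haz.le)).mono_of_mem_nhdsWithin
      (mem_of_superset (Ioo_mem_nhdsLT haz) Ioo_subset_Icc_self)
  exact hy.tendsto.sub hs.continuousWithinAt.tendsto

end IsDescending

/-! ### Descending leaves do not merge -/

/-- Just to the left of `z` the slope of `s` is bounded above by a negative constant. -/
def SlopesDownInto (s : ℝ → ℝ) (z : ℝ) : Prop := ∃ μ > 0, ∀ᶠ x in 𝓝[<] z, deriv s x < -μ

/-- Just to the left of `z` the slope of `s` is positive. -/
def SlopesUpInto (s : ℝ → ℝ) (z : ℝ) : Prop := ∀ᶠ x in 𝓝[<] z, 0 < deriv s x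

namespace IsDescending

variable {s y y₁ y₂ : ℝ → ℝ} {a b x z : ℝ}

lemma lt_right_of_clampSqrt_sub_le {K : ℝ} (haz : a < z) (h₁ : IsDescending s a z y₁)
    (h₂ : IsDescending s a z y₂)
    (hK : ∀ x ∈ Ioo a z, clampSqrt (y₂ x - s x) - clampSqrt (y₁ x - s x) ≤ K * (y₂ x - y₁ x))
    (hlt : y₁ a < y₂ a) : y₁ z < y₂ z := by
  have hmono : MonotoneOn (fun x => (y₂ x - y₁ x) * Real.exp (K * x)) (Icc a z) := by
    apply monotoneOn_Icc_of_hasDerivAt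
      ((h₂.continuousOn.sub h₁.continuousOn).mul (by fun_prop))
      (fun x hx => ((h₂.hasDerivAt x hx).sub (h₁.hasDerivAt x hx)).mul
        (((hasDerivAt_id x).const_mul K).exp))
    intro x hx
    simp only [id_eq, Pi.sub_apply]
    nlinarith [hK x hx, Real.exp_pos (K * x)]
  have h := hmono (left_mem_Icc.2 haz.le) (right_mem_Icc.2 haz.le) haz.le
  have h₀ : 0 < (y₂ a - y₁ a) * Real.exp (K * a) := mul_pos (sub_pos.2 hlt) (Real.exp_pos _)
  exact sub_pos.1 (pos_of_mul_pos_left (h₀.trans_le h) (Real.exp_pos _).le)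

lemma ne_right_of_eventually_nonpos (haz : a < z) (h₁ : IsDescending s a z y₁)
    (h₂ : IsDescending s a z y₂) (hlt : ∀ x ∈ Ico a z, y₁ x < y₂ x)
    (hn₁ : ∀ᶠ x in 𝓝[<] z, y₁ x - s x < 0) (hn₂ : ∀ᶠ x in 𝓝[<] z, y₂ x - s x < 0) :
    y₁ z ≠ y₂ z := by
  obtain ⟨w, haw, hwz, hw⟩ := exists_Ico_forall_of_eventually_nhdsLT haz (hn₁.and hn₂)
  refine (lt_right_of_clampSqrt_sub_le (K := 0) hwz (h₁.mono haw le_rfl) (h₂.mono haw le_rfl)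
    (fun x hx => ?_) (hlt w ⟨haw, hwz⟩)).ne
  obtain ⟨hx₁, hx₂⟩ := hw x ⟨hx.1.le, hx.2⟩
  rw [clampSqrt_of_nonpos hx₁.le, clampSqrt_of_nonpos hx₂.le, sub_self, zero_mul]

lemma ne_right_of_ne (hs : Continuous s) (haz : a < z) (h₁ : IsDescending s a z y₁)
    (h₂ : IsDescending s a z y₂) (hlt : ∀ x ∈ Ico a z, y₁ x < y₂ x) (hz : y₁ z ≠ s z) :
    y₁ z ≠ y₂ z := by
  intro he
  have hlim₁ := h₁.tendsto_sub_nhdsLT hs haz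
  have hlim₂ := h₂.tendsto_sub_nhdsLT hs haz
  rcases lt_or_gt_of_ne hz with hz | hz
  · exact ne_right_of_eventually_nonpos haz h₁ h₂ hlt
      (hlim₁.eventually_lt_const (sub_neg.2 hz))
      (hlim₂.eventually_lt_const (sub_neg.2 (he ▸ hz))) he
  · obtain ⟨K, hK⟩ := exists_clampSqrt_sub_le_mul (half_pos (sub_pos.2 hz))
    obtain ⟨w, haw, hwz, hw⟩ := exists_Ico_forall_of_eventually_nhdsLT haz
      (hlim₁.eventually_const_lt (half_lt_self (sub_pos.2 hz)))
    refine (lt_right_of_clampSqrt_sub_le (K := K) hwz (h₁.mono haw le_rfl) (h₂.mono haw le_rfl)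
      (fun x hx => ?_) (hlt w ⟨haw, hwz⟩)).ne he
    have hx₂ := hlt x ⟨haw.trans hx.1.le, hx.2⟩
    simpa only [sub_sub_sub_cancel_right] using
      hK _ _ (hw x ⟨hx.1.le, hx.2⟩).le (sub_le_sub_right hx₂.le (s x))

lemma eventually_neg_of_slopesDownInto (hs : Continuous s) (haz : a < z) (h : IsDescending s a z y)
    (hz : y z = s z) (hd : SlopesDownInto s z) : ∀ᶠ x in 𝓝[<] z, y x - s x < 0 := by
  obtain ⟨μ, hμ, hslope⟩ := hd
  have hlim := (continuous_clampSqrt.tendsto _).comp (h.tendsto_sub_nhdsLT hs haz)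
  rw [hz, sub_self, clampSqrt_of_nonpos le_rfl] at hlim
  obtain ⟨w, haw, hwz, hw⟩ := exists_Ico_forall_of_eventually_nhdsLT haz
    (hslope.and (hlim.eventually_lt_const hμ))
  have hmono : StrictMonoOn (fun x => y x - s x) (Icc w z) := by
    apply strictMonoOn_Icc_of_hasDerivAt (f' := fun x => -(clampSqrt (y x - s x)) - deriv s x)
      ((h.mono haw le_rfl).continuousOn.sub hs.continuousOn)
    · intro x hx
      have hsx := (hw x ⟨hx.1.le, hx.2⟩).1
      exact (h.hasDerivAt x ⟨haw.trans_lt hx.1, hx.2⟩).sub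
        (differentiableAt_of_deriv_ne_zero (by linarith)).hasDerivAt
    · intro x hx
      obtain ⟨hsx, hyx⟩ := hw x ⟨hx.1.le, hx.2⟩
      simp only [Function.comp] at hyx
      linarith
  filter_upwards [Ioo_mem_nhdsLT hwz] with x hx
  simpa only [hz, sub_self] using hmono ⟨hx.1.le, hx.2.le⟩ (right_mem_Icc.2 hwz.le) hx.2

lemma eventually_pos_of_slopesUpInto (hs : Continuous s) (haz : a < z) (h : IsDescending s a z y)
    (hz : y z = s z) (hd : SlopesUpInto s z) : ∀ᶠ x in 𝓝[<] z, 0 < y x - s x := by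
  obtain ⟨w, haw, hwz, hw⟩ := exists_Ico_forall_of_eventually_nhdsLT haz hd
  have hmono : StrictMonoOn s (Icc w z) :=
    strictMonoOn_of_deriv_pos (convex_Icc w z) hs.continuousOn
      fun x hx => hw x (Ioo_subset_Ico_self (by simpa using hx))
  filter_upwards [Ioo_mem_nhdsLT hwz] with x hx
  have hyx := h.antitoneOn ⟨haw.trans hx.1.le, hx.2.le⟩ (right_mem_Icc.2 haz.le) hx.2.le
  have hsx := hmono ⟨hx.1.le, hx.2.le⟩ (right_mem_Icc.2 hwz.le) hx.2
  linarith

/-- Along a descending leaf, `√(y - s)` has derivative `-1/2 - s' / (2√(y - s))`; for `s' > 0` this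
increases with `y`. -/
lemma monotoneOn_sqrt_sub_sqrt (hs : Continuous s) (h₁ : IsDescending s a b y₁)
    (h₂ : IsDescending s a b y₂) (hle : ∀ x ∈ Ioo a b, y₁ x ≤ y₂ x)
    (hpos : ∀ x ∈ Ioo a b, 0 < y₁ x - s x) (hone : ∀ x ∈ Ioo a b, y₂ x - s x < 1)
    (hd : ∀ x ∈ Ioo a b, 0 < deriv s x) :
    MonotoneOn (fun x => √(y₂ x - s x) - √(y₁ x - s x)) (Icc a b) := by
  have hpos₂ : ∀ x ∈ Ioo a b, 0 < y₂ x - s x := fun x hx => by linarith [hpos x hx, hle x hx]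
  apply monotoneOn_Icc_of_hasDerivAt
    (f' := fun x => (-(clampSqrt (y₂ x - s x)) - deriv s x) / (2 * √(y₂ x - s x)) -
      (-(clampSqrt (y₁ x - s x)) - deriv s x) / (2 * √(y₁ x - s x)))
  · exact (h₂.continuousOn.sub hs.continuousOn).sqrt.sub (h₁.continuousOn.sub hs.continuousOn).sqrt
  · intro x hx
    have hsx := (differentiableAt_of_deriv_ne_zero (hd x hx).ne').hasDerivAt
    exact (((h₂.hasDerivAt x hx).sub hsx).sqrt (hpos₂ x hx).ne').sub
      (((h₁.hasDerivAt x hx).sub hsx).sqrt (hpos x hx).ne')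
  · intro x hx
    have hr₁ := Real.sqrt_pos.2 (hpos x hx)
    have hr₂ := Real.sqrt_pos.2 (hpos₂ x hx)
    have hr : √(y₁ x - s x) ≤ √(y₂ x - s x) := Real.sqrt_le_sqrt (by linarith [hle x hx])
    rw [clampSqrt_eq_sqrt (hpos x hx).le (by linarith [hone x hx, hle x hx]),
      clampSqrt_eq_sqrt (hpos₂ x hx).le (hone x hx).le]
    calc (0 : ℝ) ≤ deriv s x / 2 * ((√(y₁ x - s x))⁻¹ - (√(y₂ x - s x))⁻¹) :=
          mul_nonneg (half_pos (hd x hx)).le (sub_nonneg.2 (inv_anti₀ hr₁ hr))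
      _ = _ := by field_simp; ring

lemma ne_right_of_slopesUpInto (hs : Continuous s) (haz : a < z) (h₁ : IsDescending s a z y₁)
    (h₂ : IsDescending s a z y₂) (hlt : ∀ x ∈ Ico a z, y₁ x < y₂ x) (hz : y₁ z = s z)
    (hd : SlopesUpInto s z) : y₁ z ≠ y₂ z := by
  intro he
  have hlim := h₂.tendsto_sub_nhdsLT hs haz
  rw [← he, hz, sub_self] at hlim
  obtain ⟨w, haw, hwz, hw⟩ := exists_Ico_forall_of_eventually_nhdsLT haz
    (hd.and ((h₁.eventually_pos_of_slopesUpInto hs haz hz hd).and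
      (hlim.eventually_lt_const one_pos)))
  have hmono := monotoneOn_sqrt_sub_sqrt hs (h₁.mono haw le_rfl) (h₂.mono haw le_rfl)
    (fun x hx => (hlt x ⟨haw.trans hx.1.le, hx.2⟩).le)
    (fun x hx => (hw x ⟨hx.1.le, hx.2⟩).2.1) (fun x hx => (hw x ⟨hx.1.le, hx.2⟩).2.2)
    (fun x hx => (hw x ⟨hx.1.le, hx.2⟩).1)
  have hgap := hmono (left_mem_Icc.2 hwz.le) (right_mem_Icc.2 hwz.le) hwz.le
  simp only [← he, hz, sub_self] at hgap
  have : √(y₁ w - s w) < √(y₂ w - s w) :=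
    Real.sqrt_lt_sqrt (hw w ⟨le_rfl, hwz⟩).2.1.le (by linarith [hlt w ⟨haw, hwz⟩])
  linarith

lemma lt_of_lt_left (hs : Continuous s) (h₁ : IsDescending s a b y₁) (h₂ : IsDescending s a b y₂)
    (hlt : y₁ a < y₂ a)
    (hz : ∀ z ∈ Ioc a b, y₁ z = y₂ z → y₁ z ≠ s z ∨ SlopesDownInto s z ∨ SlopesUpInto s z) :
    ∀ x ∈ Icc a b, y₁ x < y₂ x := by
  intro x hx
  by_contra! hcon
  have hxe : y₁ x = y₂ x := le_antisymm (h₁.le_of_le_left h₂ hlt.le hx) hcon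
  have hcompact : IsCompact (Icc a b ∩ (fun t => y₁ t - y₂ t) ⁻¹' {0}) :=
    isCompact_Icc.of_isClosed_subset ((h₁.continuousOn.sub
      h₂.continuousOn).preimage_isClosed_of_isClosed isClosed_Icc isClosed_singleton)
      inter_subset_left
  obtain ⟨z, ⟨hzI, hz₀⟩, hzmin⟩ := hcompact.exists_isLeast ⟨x, hx, sub_eq_zero.2 hxe⟩
  have he : y₁ z = y₂ z := sub_eq_zero.1 hz₀
  have haz : a < z := hzI.1.lt_of_ne fun h => hlt.ne (h ▸ he)
  have hlt' : ∀ t ∈ Ico a z, y₁ t < y₂ t := fun t ht =>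
    have htI : t ∈ Icc a b := ⟨ht.1, ht.2.le.trans hzI.2⟩
    (h₁.le_of_le_left h₂ hlt.le htI).lt_of_ne
      fun h => (hzmin ⟨htI, sub_eq_zero.2 h⟩).not_gt ht.2
  have g₁ := h₁.mono (le_refl a) hzI.2
  have g₂ := h₂.mono (le_refl a) hzI.2
  by_cases hs₁ : y₁ z = s z
  · rcases hz z ⟨haz, hzI.2⟩ he with h | h | h
    · exact h hs₁
    · exact ne_right_of_eventually_nonpos haz g₁ g₂ hlt'
        (g₁.eventually_neg_of_slopesDownInto hs haz hs₁ h)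
        (g₂.eventually_neg_of_slopesDownInto hs haz (he ▸ hs₁) h) he
    · exact g₁.ne_right_of_slopesUpInto hs haz g₂ hlt' hs₁ h he
  · exact g₁.ne_right_of_ne hs haz g₂ hlt' hs₁ he

end IsDescending

/-! ### Existence of descending leaves -/

/-- The regularisation `√(clamp z + e²)` of `clampSqrt z`, which is Lipschitz for `e > 0`. -/
def regClampSqrt (e z : ℝ) : ℝ := √(clamp z + e ^ 2)

lemma clampSqrt_le_regClampSqrt (e z : ℝ) : clampSqrt z ≤ regClampSqrt e z :=
  Real.sqrt_le_sqrt (le_add_of_nonneg_right (sq_nonneg e))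

lemma regClampSqrt_le {e : ℝ} (he : 0 ≤ e) (z : ℝ) : regClampSqrt e z ≤ clampSqrt z + e := by
  have h := clampSqrt_nonneg z
  refine Real.sqrt_le_iff.2 ⟨by linarith, ?_⟩
  nlinarith [sq_clampSqrt z]

lemma abs_regClampSqrt_sub_le {e : ℝ} (he : 0 < e) (u v : ℝ) :
    |regClampSqrt e u - regClampSqrt e v| ≤ e⁻¹ * |u - v| := by
  wlog h : u ≤ v generalizing u v
  · rw [abs_sub_comm, abs_sub_comm u v]
    exact this v u (le_of_not_ge h)
  have hmono : regClampSqrt e u ≤ regClampSqrt e v :=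
    Real.sqrt_le_sqrt (add_le_add_left (monotone_clamp h) _)
  have hsq : ∀ z, regClampSqrt e z ^ 2 = clamp z + e ^ 2 := fun z =>
    Real.sq_sqrt (add_nonneg (clamp_nonneg z) (sq_nonneg e))
  have hge : e ≤ regClampSqrt e u :=
    Real.le_sqrt_of_sq_le (le_add_of_nonneg_left (clamp_nonneg u))
  rw [abs_of_nonpos (by linarith), abs_of_nonpos (by linarith), inv_mul_eq_div, le_div_iff₀ he]
  nlinarith [clamp_sub_clamp_le h, hsq u, hsq v]

lemma exists_hasDerivWithinAt_regClampSqrt {s : ℝ → ℝ} (hs : Continuous s) {a b : ℝ} (hab : a ≤ b)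
    (β : ℝ) {e : ℝ} (he : 0 < e) :
    ∃ y : ℝ → ℝ, y a = β ∧
      ∀ x ∈ Icc a b, HasDerivWithinAt y (-(regClampSqrt e (y x - s x))) (Icc a b) x := by
  have hPicard : IsPicardLindelof (fun t z => -(regClampSqrt e (z - s t)))
      (⟨a, left_mem_Icc.2 hab⟩ : Icc a b) β
      (Real.toNNReal ((1 + e) * (b - a))) 0 (Real.toNNReal (1 + e)) (Real.toNNReal e⁻¹) := by
    constructor
    · intro t _
      apply LipschitzOnWith.of_dist_le_mul
      intro u _ v _
      rw [dist_neg_neg, Real.dist_eq, Real.dist_eq, Real.coe_toNNReal _ (by positivity)]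
      simpa only [sub_sub_sub_cancel_right] using abs_regClampSqrt_sub_le he (u - s t) (v - s t)
    · intro x _
      exact ((continuous_clamp.comp (continuous_const.sub hs)).add
        continuous_const).sqrt.neg.continuousOn
    · intro t _ x _
      rw [norm_neg, Real.norm_of_nonneg (show 0 ≤ regClampSqrt e (x - s t) from Real.sqrt_nonneg _),
        Real.coe_toNNReal _ (by positivity)]
      linarith [regClampSqrt_le he.le (x - s t), clampSqrt_le_one (x - s t)]
    · have hba := sub_nonneg.2 hab
      simp only [sub_self, NNReal.coe_zero, sub_zero]
      rw [Real.coe_toNNReal _ (by positivity), Real.coe_toNNReal _ (by positivity),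
        max_eq_left hba]
  exact hPicard.exists_eq_forall_mem_Icc_hasDerivWithinAt₀

lemma sub_le_of_hasDerivWithinAt_regClampSqrt {s y₁ y₂ : ℝ → ℝ} {a b e₁ e₂ : ℝ} (he₁ : 0 < e₁)
    (he₂ : 0 < e₂)
    (h₁ : ∀ x ∈ Icc a b, HasDerivWithinAt y₁ (-(regClampSqrt e₁ (y₁ x - s x))) (Icc a b) x)
    (h₂ : ∀ x ∈ Icc a b, HasDerivWithinAt y₂ (-(regClampSqrt e₂ (y₂ x - s x))) (Icc a b) x)
    (heq : y₁ a = y₂ a) {x : ℝ} (hx : x ∈ Icc a b) : y₁ x - y₂ x ≤ (e₁ + e₂) * (x - a) := by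
  have hd := fun x hx => (h₁ x hx).sub (h₂ x hx)
  refine image_le_of_deriv_right_lt_deriv_boundary (f := fun x => y₁ x - y₂ x)
    (B := fun x => (e₁ + e₂) * (x - a)) (B' := fun _ => e₁ + e₂)
    (fun t ht => (hd t ht).continuousWithinAt)
    (fun t ht => (hd t (Ico_subset_Icc_self ht)).mono_of_mem_nhdsWithin (Icc_mem_nhdsGE_of_mem ht))
    (by simp [heq])
    (fun t => by simpa using ((hasDerivAt_id t).sub_const a).const_mul (e₁ + e₂)) ?_ hx
  intro t ht hboundary
  have hle : y₂ t ≤ y₁ t := by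
    have := mul_nonneg (add_pos he₁ he₂).le (sub_nonneg.2 ht.1)
    linarith
  linarith [clampSqrt_le_regClampSqrt e₁ (y₁ t - s t), regClampSqrt_le he₂.le (y₂ t - s t),
    monotone_clampSqrt (sub_le_sub_right hle (s t))]

lemma exists_forall_abs_sub_le_of_cauchy {y : ℕ → ℝ → ℝ} {S : Set ℝ} {e : ℕ → ℝ}
    (he : Tendsto e atTop (𝓝 0)) (h : ∀ n m, n ≤ m → ∀ x ∈ S, |y n x - y m x| ≤ e n) :
    ∃ Y : ℝ → ℝ, ∀ n, ∀ x ∈ S, |y n x - Y x| ≤ e n := by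
  have hlim : ∀ x ∈ S, ∃ z, Tendsto (fun n => y n x) atTop (𝓝 z) := fun x hx =>
    cauchySeq_tendsto_of_complete
      (cauchySeq_of_le_tendsto_0' e (fun n m hnm => h n m hnm x hx) he)
  choose! Y hY using hlim
  refine ⟨Y, fun n x hx => ?_⟩
  exact le_of_tendsto (tendsto_const_nhds.sub (hY x hx)).abs
    (eventually_atTop.2 ⟨n, fun m hm => h n m hm x hx⟩)

lemma tendstoUniformlyOn_of_abs_sub_le {y : ℕ → ℝ → ℝ} {Y : ℝ → ℝ} {S : Set ℝ} {e : ℕ → ℝ}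
    (he : Tendsto e atTop (𝓝 0)) (h : ∀ n, ∀ x ∈ S, |y n x - Y x| ≤ e n) :
    TendstoUniformlyOn y Y atTop S := by
  rw [Metric.tendstoUniformlyOn_iff]
  intro ε hε
  filter_upwards [he.eventually_lt_const hε] with n hn x hx
  rw [dist_comm, Real.dist_eq]
  exact (h n x hx).trans_lt hn

lemma abs_sub_le_of_hasDerivWithinAt_regClampSqrt {s y₁ y₂ : ℝ → ℝ} {a b e₁ e₂ : ℝ} (he₂ : 0 < e₂)
    (hle : e₂ ≤ e₁)
    (h₁ : ∀ x ∈ Icc a b, HasDerivWithinAt y₁ (-(regClampSqrt e₁ (y₁ x - s x))) (Icc a b) x)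
    (h₂ : ∀ x ∈ Icc a b, HasDerivWithinAt y₂ (-(regClampSqrt e₂ (y₂ x - s x))) (Icc a b) x)
    (heq : y₁ a = y₂ a) {x : ℝ} (hx : x ∈ Icc a b) : |y₁ x - y₂ x| ≤ 2 * e₁ * (b - a) := by
  have he₁ := he₂.trans_le hle
  have hbound : (e₁ + e₂) * (x - a) ≤ 2 * e₁ * (b - a) := by
    have := sub_nonneg.2 hx.1
    gcongr
    · linarith
    · exact hx.2
  have h₁₂ := sub_le_of_hasDerivWithinAt_regClampSqrt he₁ he₂ h₁ h₂ heq hx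
  have h₂₁ := sub_le_of_hasDerivWithinAt_regClampSqrt he₂ he₁ h₂ h₁ heq.symm hx
  exact abs_sub_le_iff.2 ⟨by linarith, by linarith⟩

namespace IsDescending

variable {s : ℝ → ℝ} {a b : ℝ}

lemma of_abs_sub_le_regClampSqrt_solution {e E : ℕ → ℝ} {y : ℕ → ℝ → ℝ} {Y : ℝ → ℝ}
    (he : ∀ n, 0 ≤ e n) (he₀ : Tendsto e atTop (𝓝 0)) (hE₀ : Tendsto E atTop (𝓝 0))
    (hy : ∀ n, ∀ x ∈ Icc a b,
      HasDerivWithinAt (y n) (-(regClampSqrt (e n) (y n x - s x))) (Icc a b) x)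
    (hY : ∀ n, ∀ x ∈ Icc a b, |y n x - Y x| ≤ E n) : IsDescending s a b Y := by
  have hlim := tendstoUniformlyOn_of_abs_sub_le hE₀ hY
  have hlim' : TendstoUniformlyOn (fun n x => -(regClampSqrt (e n) (y n x - s x)))
      (fun x => -(clampSqrt (Y x - s x))) atTop (Icc a b) := by
    refine tendstoUniformlyOn_of_abs_sub_le (e := fun n => e n + √(E n))
      (by simpa using he₀.add hE₀.sqrt) fun n x hx => ?_
    have hHolder := (abs_clampSqrt_sub_le (y n x - s x) (Y x - s x)).trans
      (Real.sqrt_le_sqrt (by simpa only [sub_sub_sub_cancel_right] using hY n x hx))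
    have hlow := clampSqrt_le_regClampSqrt (e n) (y n x - s x)
    have hupp := regClampSqrt_le (he n) (y n x - s x)
    rw [abs_le] at hHolder ⊢
    constructor <;> linarith
  refine ⟨hlim.continuousOn (Frequently.of_forall fun n x hx => (hy n x hx).continuousWithinAt),
    fun x hx => ?_⟩
  exact hasDerivAt_of_tendstoUniformlyOn isOpen_Ioo (hlim'.mono Ioo_subset_Icc_self)
    (Eventually.of_forall fun n x hx => (hy n x (Ioo_subset_Icc_self hx)).hasDerivAt
      (Icc_mem_nhds hx.1 hx.2))
    (fun x hx => hlim.tendsto_at (Ioo_subset_Icc_self hx)) hx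

lemma exists_left_eq (hs : Continuous s) (hab : a ≤ b) (β : ℝ) :
    ∃ y : ℝ → ℝ, y a = β ∧ IsDescending s a b y := by
  let e : ℕ → ℝ := fun n => 1 / ((n : ℝ) + 1)
  have he : ∀ n, 0 < e n := fun n => Nat.one_div_pos_of_nat
  have he₀ : Tendsto e atTop (𝓝 0) := tendsto_one_div_add_atTop_nhds_zero_nat
  have hE₀ : Tendsto (fun n => 2 * e n * (b - a)) atTop (𝓝 0) := by
    simpa using (he₀.const_mul 2).mul_const (b - a)
  choose y hya hyd using fun n => exists_hasDerivWithinAt_regClampSqrt hs hab β (he n)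
  have hcauchy : ∀ n m, n ≤ m → ∀ x ∈ Icc a b, |y n x - y m x| ≤ 2 * e n * (b - a) :=
    fun n m hnm x hx => abs_sub_le_of_hasDerivWithinAt_regClampSqrt (he m)
      (Nat.one_div_le_one_div hnm) (hyd n) (hyd m) (by rw [hya, hya]) hx
  obtain ⟨Y, hY⟩ := exists_forall_abs_sub_le_of_cauchy hE₀ hcauchy
  refine ⟨Y, ?_, of_abs_sub_le_regClampSqrt_solution (fun n => (he n).le) he₀ hE₀ hyd hY⟩
  have hlim := (tendstoUniformlyOn_of_abs_sub_le hE₀ hY).tendsto_at (left_mem_Icc.2 hab)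
  simp only [hya] at hlim
  exact tendsto_nhds_unique hlim tendsto_const_nhds

end IsDescending

/-! ### Ascending leaves -/

/-- `y` is an ascending leaf over `[a, b]` of the BDE `dy² = (y - s x) dx²`, that is, a solution of
`y' = √(y - s x)` with the root clamped as in `IsDescending`. -/
structure IsAscending (s : ℝ → ℝ) (a b : ℝ) (y : ℝ → ℝ) : Prop where
  continuousOn : ContinuousOn y (Icc a b)
  hasDerivAt : ∀ x ∈ Ioo a b, HasDerivAt y (clampSqrt (y x - s x)) x

/-- The mirror image of a function in the axis `x = 0`; it exchanges descending and ascending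
leaves. -/
def reflect (y : ℝ → ℝ) : ℝ → ℝ := fun x => y (-x)

@[simp] lemma reflect_apply (y : ℝ → ℝ) (x : ℝ) : reflect y x = y (-x) := rfl

@[simp] lemma reflect_reflect (y : ℝ → ℝ) : reflect (reflect y) = y := by funext x; simp

lemma continuous_reflect {y : ℝ → ℝ} (h : Continuous y) : Continuous (reflect y) :=
  h.comp continuous_neg

lemma IsDescending.reflect {s y : ℝ → ℝ} {a b : ℝ} (h : IsDescending s a b y) :
    IsAscending (reflect s) (-b) (-a) (reflect y) where
  continuousOn := h.continuousOn.comp continuousOn_neg fun x hx => by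
    simpa only [neg_neg] using neg_mem_Icc_neg hx
  hasDerivAt x hx := by
    have := (h.hasDerivAt (-x) ⟨by linarith [hx.2], by linarith [hx.1]⟩).scomp x (hasDerivAt_neg x)
    exact this.congr_deriv (by simp)

namespace IsAscending

variable {s y y₁ y₂ : ℝ → ℝ} {a b x : ℝ}

lemma reflect (h : IsAscending s a b y) :
    IsDescending (reflect s) (-b) (-a) (reflect y) where
  continuousOn := h.continuousOn.comp continuousOn_neg fun x hx => by
    simpa only [neg_neg] using neg_mem_Icc_neg hx
  hasDerivAt x hx := by
    have := (h.hasDerivAt (-x) ⟨by linarith [hx.2], by linarith [hx.1]⟩).scomp x (hasDerivAt_neg x)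
    exact this.congr_deriv (by simp)

lemma exists_right_eq (hs : Continuous s) (hab : a ≤ b) (α : ℝ) :
    ∃ y : ℝ → ℝ, y b = α ∧ IsAscending s a b y := by
  obtain ⟨y, hy, h⟩ := IsDescending.exists_left_eq (continuous_reflect hs) (neg_le_neg hab) α
  exact ⟨FoldedBDE.reflect y, by simpa using hy, by simpa using h.reflect⟩

lemma mono {a' b' : ℝ} (h : IsAscending s a b y) (ha : a ≤ a') (hb : b' ≤ b) :
    IsAscending s a' b' y :=
  ⟨h.continuousOn.mono (Icc_subset_Icc ha hb),
    fun x hx => h.hasDerivAt x (Ioo_subset_Ioo ha hb hx)⟩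

lemma monotoneOn (h : IsAscending s a b y) : MonotoneOn y (Icc a b) :=
  monotoneOn_Icc_of_hasDerivAt h.continuousOn h.hasDerivAt fun _ _ => clampSqrt_nonneg _

lemma antitoneOn_sub_id (h : IsAscending s a b y) : AntitoneOn (fun x => y x - x) (Icc a b) :=
  antitoneOn_Icc_of_hasDerivAt (h.continuousOn.sub continuousOn_id)
    (fun x hx => (h.hasDerivAt x hx).sub (hasDerivAt_id x))
    fun x _ => by linarith [clampSqrt_le_one (y x - s x)]

lemma eq_of_eq_right (h₁ : IsAscending s a b y₁) (h₂ : IsAscending s a b y₂)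
    (he : y₁ b = y₂ b) (hx : x ∈ Icc a b) : y₁ x = y₂ x := by
  simpa using h₁.reflect.eq_of_eq_left h₂.reflect (by simpa using he) (neg_mem_Icc_neg hx)

lemma le_of_le_right (h₁ : IsAscending s a b y₁) (h₂ : IsAscending s a b y₂)
    (he : y₁ b ≤ y₂ b) (hx : x ∈ Icc a b) : y₁ x ≤ y₂ x := by
  simpa using h₁.reflect.le_of_le_left h₂.reflect (by simpa using he) (neg_mem_Icc_neg hx)

lemma lt_of_lt_right (hs : Continuous s) (h₁ : IsAscending s a b y₁) (h₂ : IsAscending s a b y₂)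
    (hlt : y₁ b < y₂ b)
    (hz : ∀ z ∈ Ico a b, y₁ z = y₂ z → y₁ z ≠ s z ∨
      SlopesDownInto (FoldedBDE.reflect s) (-z) ∨ SlopesUpInto (FoldedBDE.reflect s) (-z)) :
    ∀ x ∈ Icc a b, y₁ x < y₂ x := by
  intro x hx
  have := h₁.reflect.lt_of_lt_left (continuous_reflect hs) h₂.reflect (by simpa using hlt)
    (fun z hz' he => by
      simpa only [neg_neg, reflect_apply] using
        hz (-z) ⟨by linarith [hz'.2], by linarith [hz'.1]⟩ he)
    (-x) (neg_mem_Icc_neg hx)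
  simpa using this

end IsAscending

/-! ### Crossings of ascending and descending leaves -/

section Crossing

variable {s f g : ℝ → ℝ} {a b c d x k : ℝ}

lemma IsDescending.le_of_left_le_right (hs : Continuous s) (hab : a < b) (hg : IsDescending s a b g)
    (h : g a ≤ g b) : ∀ x ∈ Icc a b, g a ≤ s x := by
  have hconst : ∀ x ∈ Icc a b, g x = g a := fun x hx =>
    le_antisymm (hg.antitoneOn (left_mem_Icc.2 hab.le) hx hx.1)
      (h.trans (hg.antitoneOn hx (right_mem_Icc.2 hab.le) hx.2))
  have hinterior : ∀ x ∈ Ioo a b, g a ≤ s x := by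
    intro x hx
    have hderiv : HasDerivAt g 0 x := by
      apply (hasDerivAt_const x (g a)).congr_of_eventuallyEq
      filter_upwards [Ioo_mem_nhds hx.1 hx.2] with t ht using hconst t (Ioo_subset_Icc_self ht)
    have hzero := neg_eq_zero.1 ((hg.hasDerivAt x hx).unique hderiv)
    rw [clampSqrt_eq_zero_iff, hconst x (Ioo_subset_Icc_self hx)] at hzero
    linarith
  have hclosure := closure_minimal hinterior (isClosed_le continuous_const hs)
  rwa [closure_Ioo hab.ne] at hclosure

lemma IsDescending.eq_const (hg : IsDescending s a b g) (h : ∀ x ∈ Icc a b, k ≤ s x)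
    (he : g a = k) (hx : x ∈ Icc a b) : g x = k := by
  have hk : IsDescending s a b fun _ => k := by
    refine ⟨continuousOn_const, fun x hx => ?_⟩
    rw [clampSqrt_of_nonpos (by linarith [h x (Ioo_subset_Icc_self hx)]), neg_zero]
    exact hasDerivAt_const _ _
  exact hg.eq_of_eq_left hk he hx

lemma IsAscending.eq_const (hf : IsAscending s a b f) (h : ∀ x ∈ Icc a b, k ≤ s x)
    (he : f b = k) (hx : x ∈ Icc a b) : f x = k := by
  simpa using hf.reflect.eq_const (k := k)
    (fun y hy => h (-y) (by simpa only [neg_neg] using neg_mem_Icc_neg hy)) (by simpa using he)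
    (neg_mem_Icc_neg hx)

/-- Over the abscissa `x ∈ [c, d]` the leaves `f` and `g` meet, on or above the fold `y = s x`. -/
structure IsCrossing (s : ℝ → ℝ) (c d : ℝ) (f g : ℝ → ℝ) (x : ℝ) : Prop where
  mem_Icc : x ∈ Icc c d
  eq : f x = g x
  le : s x ≤ g x

/-- Between two crossings both leaves would be constant, which puts both crossings on the fold at
the same height. -/
lemma IsCrossing.unique {x₁ x₂ : ℝ} (hs : Continuous s) (hinj : InjOn s (Icc c d))
    (hf : IsAscending s c d f) (hg : IsDescending s c d g)
    (h₁ : IsCrossing s c d f g x₁) (h₂ : IsCrossing s c d f g x₂) : x₁ = x₂ := by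
  wlog hle : x₁ ≤ x₂ generalizing x₁ x₂
  · exact (this h₂ h₁ (le_of_not_ge hle)).symm
  rcases hle.eq_or_lt with h | hlt
  · exact h
  have hflat : g x₁ ≤ g x₂ := by
    simpa only [h₁.eq, h₂.eq] using hf.monotoneOn h₁.mem_Icc h₂.mem_Icc hle
  have hfold := (hg.mono h₁.mem_Icc.1 h₂.mem_Icc.2).le_of_left_le_right hs hlt hflat
  have hanti := hg.antitoneOn h₁.mem_Icc h₂.mem_Icc hle
  apply hinj h₁.mem_Icc h₂.mem_Icc
  linarith [hfold x₁ (left_mem_Icc.2 hle), hfold x₂ (right_mem_Icc.2 hle), h₁.le, h₂.le]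

/-- Below the fold the clamped roots vanish, so both leaves are constant there. -/
lemma exists_gt_eq_of_eq_of_lt {z : ℝ} (hs : Continuous s) (hf : IsAscending s c d f)
    (hg : IsDescending s c d g) (hz : z ∈ Ico c d) (he : f z = g z) (hlt : g z < s z) :
    ∃ w ∈ Ioc z d, f w = g w := by
  have hle : 𝓝[Ico z d] z ≤ 𝓝[Icc c d] z :=
    nhdsWithin_mono z fun x hx => ⟨hz.1.trans hx.1, hx.2.le⟩
  have hbelow : ∀ y : ℝ → ℝ, ContinuousOn y (Icc c d) → y z < s z →
      ∀ᶠ x in 𝓝[Ico z d] z, y x - s x ≤ 0 := fun y hy hyz => by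
    have hsub := ((hy z (Ico_subset_Icc_self hz)).sub hs.continuousWithinAt).mono_left hle
    filter_upwards [hsub.eventually_lt_const (sub_neg.2 hyz)] with x hx using hx.le
  have hnhds : ∀ᶠ x in 𝓝[≥] z, x < d ∧ f x - s x ≤ 0 ∧ g x - s x ≤ 0 := by
    rw [← nhdsWithin_Ico_eq_nhdsGE hz.2]
    filter_upwards [self_mem_nhdsWithin, hbelow f hf.continuousOn (he ▸ hlt),
      hbelow g hg.continuousOn hlt] with x hx hfx hgx using ⟨hx.2, hfx, hgx⟩
  obtain ⟨w, hzw : z < w, hw⟩ := (mem_nhdsGE_iff_exists_Icc_subset).1 hnhds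
  have hz' := left_mem_Icc.2 hzw.le
  have hw' := right_mem_Icc.2 hzw.le
  have hwd := (hw hw').1.le
  have hf' := hf.mono hz.1 hwd
  have hg' := hg.mono hz.1 hwd
  have hfanti : AntitoneOn f (Icc z w) :=
    antitoneOn_Icc_of_hasDerivAt hf'.continuousOn hf'.hasDerivAt fun x hx =>
      (clampSqrt_of_nonpos (hw (Ioo_subset_Icc_self hx)).2.1).le
  have hgmono : MonotoneOn g (Icc z w) :=
    monotoneOn_Icc_of_hasDerivAt hg'.continuousOn hg'.hasDerivAt fun x hx => by
      rw [clampSqrt_of_nonpos (hw (Ioo_subset_Icc_self hx)).2.2, neg_zero]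
  refine ⟨w, ⟨hzw, hwd⟩, ?_⟩
  linarith [hfanti hz' hw' hzw.le, hf'.monotoneOn hz' hw' hzw.le,
    hgmono hz' hw' hzw.le, hg'.antitoneOn hz' hw' hzw.le]

lemma exists_isCrossing (hs : Continuous s) (hcd : c < d) (hf : IsAscending s c d f)
    (hg : IsDescending s c d g) (hleft : f c ≤ g c) (hright : g d < f d) :
    ∃ x < d, IsCrossing s c d f g x := by
  have hcont : ContinuousOn (fun x => f x - g x) (Icc c d) := hf.continuousOn.sub hg.continuousOn
  obtain ⟨x, hx, hxe⟩ := intermediate_value_Icc hcd.le hcont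
    (show (0 : ℝ) ∈ Icc _ _ from ⟨sub_nonpos.2 hleft, sub_nonneg.2 hright.le⟩)
  have hcompact : IsCompact (Icc c d ∩ (fun x => f x - g x) ⁻¹' {0}) :=
    isCompact_Icc.of_isClosed_subset
      (hcont.preimage_isClosed_of_isClosed isClosed_Icc isClosed_singleton) inter_subset_left
  obtain ⟨z, ⟨hz, hze⟩, hmax⟩ := hcompact.exists_isGreatest ⟨x, hx, hxe⟩
  have hze : f z = g z := sub_eq_zero.1 hze
  have hzd : z < d := hz.2.lt_of_ne fun h => hright.ne' (h ▸ hze)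
  refine ⟨z, hzd, hz, hze, not_lt.1 fun hlt => ?_⟩
  obtain ⟨w, hw, hwe⟩ := exists_gt_eq_of_eq_of_lt hs hf hg ⟨hz.1, hzd⟩ hze hlt
  exact (hmax ⟨⟨hz.1.trans hw.1.le, hw.2⟩, sub_eq_zero.2 hwe⟩).not_gt hw.1

end Crossing

/-! ### Families of leaves -/

/-- The family `F` of ascending leaves over `[c, d]`, indexed by their height at `d`, and the family
`G` of descending leaves, indexed by their height at `c`. -/
structure Leaves (s : ℝ → ℝ) (c d : ℝ) (F G : ℝ → ℝ → ℝ) : Prop where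
  lt : c < d
  right_eq : ∀ a, F a d = a
  isAscending : ∀ a, IsAscending s c d (F a)
  left_eq : ∀ b, G b c = b
  isDescending : ∀ b, IsDescending s c d (G b)

lemma exists_leaves {s : ℝ → ℝ} (hs : Continuous s) {c d : ℝ} (hcd : c < d) :
    ∃ F G, Leaves s c d F G := by
  choose F hF hF' using fun a => IsAscending.exists_right_eq hs hcd.le a
  choose G hG hG' using fun b => IsDescending.exists_left_eq hs hcd.le b
  exact ⟨F, G, hcd, hF, hF', hG, hG'⟩

lemma IsDescending.abs_sub_le_add {s y₁ y₂ : ℝ → ℝ} {a b x x' : ℝ} (h₁ : IsDescending s a b y₁)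
    (h₂ : IsDescending s a b y₂) (hx : x ∈ Icc a b) (hx' : x' ∈ Icc a b) :
    |y₁ x - y₂ x'| ≤ |x - x'| + |y₁ a - y₂ a| := by
  have hlip : |y₂ x - y₂ x'| ≤ |x - x'| := by
    wlog hle : x ≤ x' generalizing x x'
    · simpa only [abs_sub_comm] using this hx' hx (le_of_not_ge hle)
    have hanti := h₂.antitoneOn hx hx' hle
    have hmono := h₂.monotoneOn_add_id hx hx' hle
    rw [abs_of_nonneg (by linarith), abs_of_nonpos (by linarith)]
    linarith
  linarith [h₁.abs_sub_le h₂ hx, _root_.abs_sub_le (y₁ x) (y₂ x) (y₂ x')]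

lemma IsAscending.abs_sub_le_add {s y₁ y₂ : ℝ → ℝ} {a b x x' : ℝ} (h₁ : IsAscending s a b y₁)
    (h₂ : IsAscending s a b y₂) (hx : x ∈ Icc a b) (hx' : x' ∈ Icc a b) :
    |y₁ x - y₂ x'| ≤ |x - x'| + |y₁ b - y₂ b| := by
  have h := h₁.reflect.abs_sub_le_add h₂.reflect (neg_mem_Icc_neg hx) (neg_mem_Icc_neg hx')
  simp only [reflect_apply, neg_neg, neg_sub_neg] at h
  rwa [abs_sub_comm x' x] at h

lemma continuousOn_uncurry_of_abs_sub_le {F : ℝ → ℝ → ℝ} {T : Set ℝ}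
    (h : ∀ a a', ∀ x ∈ T, ∀ x' ∈ T, |F a x - F a' x'| ≤ |x - x'| + |a - a'|) :
    ContinuousOn (fun p : ℝ × ℝ => F p.1 p.2) (univ ×ˢ T) := by
  refine (LipschitzOnWith.of_dist_le_mul (K := 2) ?_).continuousOn
  rintro ⟨a, x⟩ ⟨-, hx⟩ ⟨a', x'⟩ ⟨-, hx'⟩
  have hfst : |a - a'| ≤ dist (a, x) (a', x') := le_max_left _ _
  have hsnd : |x - x'| ≤ dist (a, x) (a', x') := le_max_right _ _
  rw [Real.dist_eq, NNReal.coe_ofNat]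
  linarith [h a a' x hx x' hx']

namespace Leaves

variable {s : ℝ → ℝ} {c d x : ℝ} {F G : ℝ → ℝ → ℝ}

lemma continuousOn_ascending (L : Leaves s c d F G) :
    ContinuousOn (fun p : ℝ × ℝ => F p.1 p.2) (univ ×ˢ Icc c d) :=
  continuousOn_uncurry_of_abs_sub_le fun a a' x hx x' hx' => by
    simpa only [L.right_eq] using (L.isAscending a).abs_sub_le_add (L.isAscending a') hx hx'

lemma continuousOn_descending (L : Leaves s c d F G) :
    ContinuousOn (fun p : ℝ × ℝ => G p.1 p.2) (univ ×ˢ Icc c d) :=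
  continuousOn_uncurry_of_abs_sub_le fun a a' x hx x' hx' => by
    simpa only [L.left_eq] using (L.isDescending a).abs_sub_le_add (L.isDescending a') hx hx'

lemma ascending_le (L : Leaves s c d F G) (hx : x ∈ Icc c d) (a : ℝ) : F a x ≤ a := by
  simpa only [L.right_eq] using (L.isAscending a).monotoneOn hx (right_mem_Icc.2 L.lt.le) hx.2

lemma sub_le_ascending (L : Leaves s c d F G) (hx : x ∈ Icc c d) (a : ℝ) :
    a - (d - c) ≤ F a x := by
  have h := (L.isAscending a).antitoneOn_sub_id hx (right_mem_Icc.2 L.lt.le) hx.2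
  simp only [L.right_eq] at h
  linarith [hx.1]

lemma descending_le (L : Leaves s c d F G) (hx : x ∈ Icc c d) (b : ℝ) : G b x ≤ b := by
  simpa only [L.left_eq] using (L.isDescending b).antitoneOn (left_mem_Icc.2 L.lt.le) hx hx.1

lemma sub_le_descending (L : Leaves s c d F G) (hx : x ∈ Icc c d) (b : ℝ) :
    b - (d - c) ≤ G b x := by
  have h := (L.isDescending b).monotoneOn_add_id (left_mem_Icc.2 L.lt.le) hx hx.1
  simp only [L.left_eq] at h
  linarith [hx.2]

lemma continuous_ascending (L : Leaves s c d F G) (hx : x ∈ Icc c d) :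
    Continuous fun a => F a x :=
  L.continuousOn_ascending.comp_continuous (f := fun a => (a, x)) (by fun_prop)
    fun a => ⟨mem_univ a, hx⟩

lemma continuous_descending (L : Leaves s c d F G) (hx : x ∈ Icc c d) :
    Continuous fun b => G b x :=
  L.continuousOn_descending.comp_continuous (f := fun b => (b, x)) (by fun_prop)
    fun b => ⟨mem_univ b, hx⟩

lemma surjective_ascending (L : Leaves s c d F G) (hx : x ∈ Icc c d) :
    Function.Surjective fun a => F a x := fun y => by
  obtain ⟨a, -, ha⟩ := intermediate_value_Icc (show y ≤ y + (d - c) by linarith [L.lt])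
    (L.continuous_ascending hx).continuousOn
    (show y ∈ Icc _ _ from ⟨L.ascending_le hx y, by linarith [L.sub_le_ascending hx (y + (d - c))]⟩)
  exact ⟨a, ha⟩

lemma surjective_descending (L : Leaves s c d F G) (hx : x ∈ Icc c d) :
    Function.Surjective fun b => G b x := fun y => by
  obtain ⟨b, -, hb⟩ := intermediate_value_Icc (show y ≤ y + (d - c) by linarith [L.lt])
    (L.continuous_descending hx).continuousOn
    (show y ∈ Icc _ _ from
      ⟨L.descending_le hx y, by linarith [L.sub_le_descending hx (y + (d - c))]⟩)
  exact ⟨b, hb⟩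

lemma monotone_ascending (L : Leaves s c d F G) (hx : x ∈ Icc c d) : Monotone fun a => F a x :=
  fun a a' h => (L.isAscending a).le_of_le_right (L.isAscending a')
    (by rwa [L.right_eq, L.right_eq]) hx

lemma monotone_descending (L : Leaves s c d F G) (hx : x ∈ Icc c d) : Monotone fun b => G b x :=
  fun b b' h => (L.isDescending b).le_of_le_left (L.isDescending b')
    (by rwa [L.left_eq, L.left_eq]) hx

end Leaves

/-! ### Charts by leaf labels -/

/-- The region on or above the fold `y = s x` and to the right of `x = c`. -/
def aboveFold (s : ℝ → ℝ) (c : ℝ) : Set (ℝ × ℝ) := {p | c ≤ p.1 ∧ s p.1 ≤ p.2}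

/-- A set `carrier` of labels `(α, β)` naming an ascending and a descending leaf each, together with
the labels whose leaves meet at the origin (`collapsed`), on the left edge (`axis`), and on the
fold (`fold`). -/
structure LabelDomain where
  carrier : Set (ℝ × ℝ)
  collapsed : Set (ℝ × ℝ)
  axis : Set (ℝ × ℝ)
  fold : Set (ℝ × ℝ)

/-- `pt` parametrizes a neighbourhood of the origin in `aboveFold s c` by the labels in `T`,
injectively up to collapsing `T.collapsed` to a point. The solutions of `y' = √(y - s x)` are the
curves of constant first label, those of `y' = -√(y - s x)` the curves of constant second label. -/
structure HalfChart (s : ℝ → ℝ) (c : ℝ) (T : LabelDomain) (pt : ℝ × ℝ → ℝ × ℝ) : Prop where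
  isCompact : IsCompact T.carrier
  continuousOn : ContinuousOn pt T.carrier
  eq_iff : ∀ u ∈ T.carrier, ∀ v ∈ T.carrier,
    pt u = pt v ↔ u = v ∨ (u ∈ T.collapsed ∧ v ∈ T.collapsed)
  le_fst : ∀ u ∈ T.carrier, c ≤ (pt u).1
  fst_eq_iff : ∀ u ∈ T.carrier, (pt u).1 = c ↔ u ∈ T.axis
  deriv_ne_zero : ∀ u ∈ T.carrier, c < (pt u).1 → deriv s (pt u).1 ≠ 0
  le_snd : ∀ u ∈ T.carrier, s (pt u).1 ≤ (pt u).2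
  snd_eq_iff : ∀ u ∈ T.carrier, (pt u).2 = s (pt u).1 ↔ u ∈ T.fold
  image_mem_nhdsWithin : pt '' T.carrier ∈ 𝓝[aboveFold s c] 0
  zero_mem : 0 ∈ T.carrier
  map_zero : pt 0 = 0
  exists_ascending : ∀ α, ∃ f : ℝ → ℝ, ∀ u ∈ T.carrier, u.1 = α → (pt u).2 = f (pt u).1 ∧
    (c < (pt u).1 → HasDerivAt f (√((pt u).2 - s (pt u).1)) (pt u).1)
  exists_descending : ∀ β, ∃ f : ℝ → ℝ, ∀ u ∈ T.carrier, u.2 = β → (pt u).2 = f (pt u).1 ∧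
    (c < (pt u).1 → HasDerivAt f (-√((pt u).2 - s (pt u).1)) (pt u).1)
  fst_eq_of_ascending : ∀ (a b : ℝ) (y : ℝ → ℝ), c ≤ a →
    (∀ x ∈ Ioo a b, (x, y x) ∈ pt '' T.carrier ∧ HasDerivAt y (√(y x - s x)) x) →
    ∀ u ∈ T.carrier, ∀ v ∈ T.carrier, (pt u).1 ∈ Ioo a b → (pt v).1 ∈ Ioo a b →
      (pt u).2 = y (pt u).1 → (pt v).2 = y (pt v).1 → u.1 = v.1
  snd_eq_of_descending : ∀ (a b : ℝ) (y : ℝ → ℝ), c ≤ a →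
    (∀ x ∈ Ioo a b, (x, y x) ∈ pt '' T.carrier ∧ HasDerivAt y (-√(y x - s x)) x) →
    ∀ u ∈ T.carrier, ∀ v ∈ T.carrier, (pt u).1 ∈ Ioo a b → (pt v).1 ∈ Ioo a b →
      (pt u).2 = y (pt u).1 → (pt v).2 = y (pt v).1 → u.2 = v.2

lemma continuousOn_image_of_comp_eq {A B C : Type*} [TopologicalSpace A] [TopologicalSpace B]
    [TopologicalSpace C] [T2Space B] {K : Set A} (hK : IsCompact K) {p : A → B} {f : A → C}
    {h : B → C} (hp : ContinuousOn p K) (hf : ContinuousOn f K) (hh : ∀ u ∈ K, h (p u) = f u) :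
    ContinuousOn h (p '' K) := by
  rw [continuousOn_iff_isClosed]
  intro t ht
  refine ⟨p '' (K ∩ f ⁻¹' t), ?_, ?_⟩
  · have hclosed : IsCompact (K ∩ f ⁻¹' t) := by
      obtain ⟨w, hw, hwe⟩ := continuousOn_iff_isClosed.1 hf t ht
      rw [inter_comm, hwe, inter_comm]
      exact hK.inter_right hw
    exact (hclosed.image_of_continuousOn (hp.mono inter_subset_left)).isClosed
  · ext b
    constructor
    · rintro ⟨hb, u, hu, rfl⟩
      exact ⟨⟨u, ⟨hu, by rwa [mem_preimage, ← hh u hu]⟩, rfl⟩, u, hu, rfl⟩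
    · rintro ⟨⟨u, ⟨hu, hut⟩, rfl⟩, -⟩
      exact ⟨by rwa [mem_preimage, hh u hu], u, hu, rfl⟩

/-- Families `P` of ascending and `Q` of descending leaves over `[c, d]`, indexed by the first and
second labels in `T`, such that the leaves of every label cross and the crossings fill a
neighbourhood of the origin in `aboveFold s c`. -/
structure LeafLabelling (s : ℝ → ℝ) (c d : ℝ) (T : LabelDomain) (P Q : ℝ → ℝ → ℝ) : Prop where
  continuous : Continuous s
  injOn : InjOn s (Icc c d)
  deriv_ne_zero : ∀ x ∈ Ioo c d, deriv s x ≠ 0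
  map_zero : s 0 = 0
  zero_mem_Ico : (0 : ℝ) ∈ Ico c d
  isCompact : IsCompact T.carrier
  zero_mem : 0 ∈ T.carrier
  isAscending : ∀ α, IsAscending s c d (P α)
  isDescending : ∀ β, IsDescending s c d (Q β)
  left_eq : ∀ β, Q β c = β
  ascending_zero : P 0 0 = 0
  descending_zero : Q 0 0 = 0
  continuousOn_ascending :
    ContinuousOn (fun p : ℝ × ℝ => P p.1 p.2) ((Prod.fst '' T.carrier) ×ˢ Icc c d)
  continuousOn_descending : ContinuousOn (fun p : ℝ × ℝ => Q p.1 p.2) (univ ×ˢ Icc c d)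
  sub_le_one : ∀ u ∈ T.carrier, ∀ x ∈ Icc c d, u.2 - s x ≤ 1
  exists_isCrossing : ∀ u ∈ T.carrier, ∃ x < d, IsCrossing s c d (P u.1) (Q u.2) x
  fst_eq_of_eq : ∀ u ∈ T.carrier, ∀ v ∈ T.carrier, ∀ x ∈ Ioo c d, P u.1 x = P v.1 x → u.1 = v.1
  snd_eq_of_eq : ∀ u ∈ T.carrier, ∀ v ∈ T.carrier, ∀ x ∈ Ico c d, Q u.2 x = Q v.2 x → u.2 = v.2
  eventually_exists_label : ∀ᶠ p in 𝓝[aboveFold s c] 0,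
    p.1 ∈ Ico c d ∧ ∃ u ∈ T.carrier, P u.1 p.1 = p.2 ∧ Q u.2 p.1 = p.2
  mem_axis_iff : ∀ u ∈ T.carrier, (P u.1 c = u.2 ∧ s c ≤ u.2) ↔ u ∈ T.axis
  mem_fold_iff : ∀ u ∈ T.carrier, ∀ x < d, IsCrossing s c d (P u.1) (Q u.2) x →
    (Q u.2 x = s x ↔ u ∈ T.fold)
  eq_or_collapsed : ∀ u ∈ T.carrier, ∀ v ∈ T.carrier, u ∈ T.axis → v ∈ T.axis → u.2 = v.2 →
    u = v ∨ (u ∈ T.collapsed ∧ v ∈ T.collapsed)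
  collapsed : ∀ u ∈ T.carrier, u ∈ T.collapsed → u.2 = 0 ∧ u ∈ T.axis

/-- The abscissa at which the leaves `P u.1` and `Q u.2` cross, left of `d`; an arbitrary number if
there is no crossing. -/
def crossingAbscissa (s : ℝ → ℝ) (c d : ℝ) (P Q : ℝ → ℝ → ℝ) (u : ℝ × ℝ) : ℝ :=
  Classical.epsilon fun x => x < d ∧ IsCrossing s c d (P u.1) (Q u.2) x

/-- The point at which the leaves `P u.1` and `Q u.2` cross. -/
def crossingPoint (s : ℝ → ℝ) (c d : ℝ) (P Q : ℝ → ℝ → ℝ) (u : ℝ × ℝ) : ℝ × ℝ :=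
  (crossingAbscissa s c d P Q u, Q u.2 (crossingAbscissa s c d P Q u))

namespace LeafLabelling

variable {s : ℝ → ℝ} {c d x : ℝ} {T : LabelDomain} {P Q : ℝ → ℝ → ℝ} {u v : ℝ × ℝ}

local notation "X" => crossingAbscissa s c d P Q

lemma crossingAbscissa_spec (H : LeafLabelling s c d T P Q) (hu : u ∈ T.carrier) :
    X u < d ∧ IsCrossing s c d (P u.1) (Q u.2) (X u) :=
  Classical.epsilon_spec (H.exists_isCrossing u hu)

lemma isCrossing (H : LeafLabelling s c d T P Q) (hu : u ∈ T.carrier) :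
    IsCrossing s c d (P u.1) (Q u.2) (X u) :=
  (H.crossingAbscissa_spec hu).2

lemma crossingAbscissa_mem_Ico (H : LeafLabelling s c d T P Q) (hu : u ∈ T.carrier) :
    X u ∈ Ico c d :=
  ⟨(H.isCrossing hu).mem_Icc.1, (H.crossingAbscissa_spec hu).1⟩

lemma crossingAbscissa_eq (H : LeafLabelling s c d T P Q) (hu : u ∈ T.carrier)
    (hx : IsCrossing s c d (P u.1) (Q u.2) x) : X u = x :=
  (H.isCrossing hu).unique H.continuous H.injOn (H.isAscending _) (H.isDescending _) hx

lemma crossingAbscissa_eq_left_iff (H : LeafLabelling s c d T P Q) (hu : u ∈ T.carrier) :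
    X u = c ↔ u ∈ T.axis := by
  rw [← H.mem_axis_iff u hu]
  constructor
  · intro h
    have hcross := H.isCrossing hu
    rw [h] at hcross
    simpa only [H.left_eq] using And.intro hcross.eq hcross.le
  · rintro ⟨heq, hle⟩
    have hc : c ∈ Icc c d := left_mem_Icc.2 (H.zero_mem_Ico.1.trans H.zero_mem_Ico.2.le)
    exact H.crossingAbscissa_eq hu ⟨hc, by rwa [H.left_eq], by rwa [H.left_eq]⟩

lemma continuousOn_ascending_labels (H : LeafLabelling s c d T P Q) :
    ContinuousOn (fun q : (ℝ × ℝ) × ℝ => P q.1.1 q.2) (T.carrier ×ˢ Icc c d) :=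
  H.continuousOn_ascending.comp (f := fun q : (ℝ × ℝ) × ℝ => (q.1.1, q.2)) (by fun_prop)
    fun q hq => ⟨⟨q.1, hq.1, rfl⟩, hq.2⟩

lemma continuousOn_descending_labels (H : LeafLabelling s c d T P Q) :
    ContinuousOn (fun q : (ℝ × ℝ) × ℝ => Q q.1.2 q.2) (T.carrier ×ˢ Icc c d) :=
  H.continuousOn_descending.comp (f := fun q : (ℝ × ℝ) × ℝ => (q.1.2, q.2)) (by fun_prop)
    fun _ hq => ⟨mem_univ _, hq.2⟩

lemma isCompact_setOf_isCrossing (H : LeafLabelling s c d T P Q) :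
    IsCompact {q : (ℝ × ℝ) × ℝ | q.1 ∈ T.carrier ∧ IsCrossing s c d (P q.1.1) (Q q.1.2) q.2} := by
  have hbox : IsCompact (T.carrier ×ˢ Icc c d) := H.isCompact.prod isCompact_Icc
  have heq := (H.continuousOn_ascending_labels.sub
    H.continuousOn_descending_labels).preimage_isClosed_of_isClosed hbox.isClosed
    (isClosed_singleton (x := 0))
  have hle := (H.continuousOn_descending_labels.sub (H.continuous.comp_continuousOn
    continuousOn_snd)).preimage_isClosed_of_isClosed hbox.isClosed (isClosed_Ici (a := 0))
  refine hbox.of_isClosed_subset ?_ fun q hq => ⟨hq.1, hq.2.mem_Icc⟩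
  convert heq.inter hle using 1
  ext q
  constructor
  · rintro ⟨hq, hx, he, hl⟩
    exact ⟨⟨⟨hq, hx⟩, sub_eq_zero.2 he⟩, ⟨hq, hx⟩, sub_nonneg.2 hl⟩
  · rintro ⟨⟨⟨hq, hx⟩, he⟩, -, hl⟩
    exact ⟨hq, hx, sub_eq_zero.1 he, sub_nonneg.1 hl⟩

lemma continuousOn_crossingPoint (H : LeafLabelling s c d T P Q) :
    ContinuousOn (crossingPoint s c d P Q) T.carrier := by
  have hcont := continuousOn_image_of_comp_eq H.isCompact_setOf_isCrossing
    (p := Prod.fst) (f := fun q => (q.2, Q q.1.2 q.2)) (h := crossingPoint s c d P Q)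
    continuousOn_fst
    (continuousOn_snd.prodMk (H.continuousOn_descending_labels.mono
      fun q hq => ⟨hq.1, hq.2.mem_Icc⟩))
    fun q hq => by simp only [crossingPoint, H.crossingAbscissa_eq hq.1 hq.2]
  exact hcont.mono fun u hu => ⟨(u, X u), ⟨hu, H.isCrossing hu⟩, rfl⟩

lemma clampSqrt_crossingPoint (H : LeafLabelling s c d T P Q) (hu : u ∈ T.carrier) :
    clampSqrt (Q u.2 (X u) - s (X u)) = √(Q u.2 (X u) - s (X u)) := by
  have hX := (H.isCrossing hu).mem_Icc
  have hanti := (H.isDescending u.2).antitoneOn (left_mem_Icc.2 (hX.1.trans hX.2)) hX hX.1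
  rw [H.left_eq] at hanti
  exact clampSqrt_eq_sqrt (sub_nonneg.2 (H.isCrossing hu).le)
    (by linarith [H.sub_le_one u hu _ hX])

lemma clampSqrt_of_mem_image {p : ℝ × ℝ} (H : LeafLabelling s c d T P Q)
    (hp : p ∈ crossingPoint s c d P Q '' T.carrier) : clampSqrt (p.2 - s p.1) = √(p.2 - s p.1) := by
  obtain ⟨u, hu, rfl⟩ := hp
  exact H.clampSqrt_crossingPoint hu

lemma crossingPoint_eq_iff (H : LeafLabelling s c d T P Q) (hu : u ∈ T.carrier)
    (hv : v ∈ T.carrier) : crossingPoint s c d P Q u = crossingPoint s c d P Q v ↔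
      u = v ∨ (u ∈ T.collapsed ∧ v ∈ T.collapsed) := by
  simp only [crossingPoint, Prod.mk.injEq]
  constructor
  · rintro ⟨hX, hQ⟩
    rw [hX] at hQ
    have hsnd := H.snd_eq_of_eq u hu v hv _ (H.crossingAbscissa_mem_Ico hv) hQ
    rcases (H.crossingAbscissa_mem_Ico hv).1.eq_or_lt with h | h
    · exact H.eq_or_collapsed u hu v hv ((H.crossingAbscissa_eq_left_iff hu).1 (hX.trans h.symm))
        ((H.crossingAbscissa_eq_left_iff hv).1 h.symm) hsnd
    · have hP := (H.isCrossing hu).eq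
      rw [hX, hQ, ← (H.isCrossing hv).eq] at hP
      have hfst := H.fst_eq_of_eq u hu v hv _ ⟨h, (H.crossingAbscissa_mem_Ico hv).2⟩ hP
      exact Or.inl (Prod.ext hfst hsnd)
  · rintro (rfl | ⟨hu', hv'⟩)
    · exact ⟨rfl, rfl⟩
    · obtain ⟨hu₂, hu₁⟩ := H.collapsed u hu hu'
      obtain ⟨hv₂, hv₁⟩ := H.collapsed v hv hv'
      rw [(H.crossingAbscissa_eq_left_iff hu).2 hu₁, (H.crossingAbscissa_eq_left_iff hv).2 hv₁,
        hu₂, hv₂]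
      exact ⟨rfl, rfl⟩

lemma crossingPoint_zero (H : LeafLabelling s c d T P Q) : crossingPoint s c d P Q 0 = 0 := by
  have hcross : IsCrossing s c d (P (0 : ℝ × ℝ).1) (Q (0 : ℝ × ℝ).2) 0 :=
    ⟨Ico_subset_Icc_self H.zero_mem_Ico, H.ascending_zero.trans H.descending_zero.symm,
      (H.map_zero.trans H.descending_zero.symm).le⟩
  have hX := H.crossingAbscissa_eq H.zero_mem hcross
  exact Prod.ext hX (by rw [crossingPoint, hX]; exact H.descending_zero)

lemma image_crossingPoint_mem_nhdsWithin (H : LeafLabelling s c d T P Q) :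
    crossingPoint s c d P Q '' T.carrier ∈ 𝓝[aboveFold s c] 0 := by
  filter_upwards [H.eventually_exists_label, self_mem_nhdsWithin] with p hp hfold
  obtain ⟨hpx, u, hu, hP, hQ⟩ := hp
  have hX : X u = p.1 := H.crossingAbscissa_eq hu
    ⟨Ico_subset_Icc_self hpx, hP.trans hQ.symm, by rw [hQ]; exact hfold.2⟩
  exact ⟨u, hu, Prod.ext hX (by rw [crossingPoint, hX]; exact hQ)⟩

section Arc

variable {a b : ℝ} {y : ℝ → ℝ}

lemma fst_eq_of_ascending (H : LeafLabelling s c d T P Q) (hca : c ≤ a)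
    (hy : ∀ x ∈ Ioo a b, (x, y x) ∈ crossingPoint s c d P Q '' T.carrier ∧
      HasDerivAt y (√(y x - s x)) x)
    (hu : u ∈ T.carrier) (hv : v ∈ T.carrier) (hua : X u ∈ Ioo a b) (hva : X v ∈ Ioo a b)
    (hyu : Q u.2 (X u) = y (X u)) (hyv : Q v.2 (X v) = y (X v)) : u.1 = v.1 := by
  wlog hle : X u ≤ X v generalizing u v
  · exact (this hv hu hva hua hyv hyu (le_of_not_ge hle)).symm
  have hasc : IsAscending s (X u) (X v) y := by
    have hsub : Icc (X u) (X v) ⊆ Ioo a b := fun x hx =>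
      ⟨hua.1.trans_le hx.1, hx.2.trans_lt hva.2⟩
    refine ⟨fun x hx => (hy x (hsub hx)).2.continuousAt.continuousWithinAt, fun x hx => ?_⟩
    obtain ⟨hmem, hderiv⟩ := hy x (hsub (Ioo_subset_Icc_self hx))
    rwa [H.clampSqrt_of_mem_image hmem]
  have hP := (H.isAscending v.1).mono (H.isCrossing hu).mem_Icc.1 (H.isCrossing hv).mem_Icc.2
  have heq := hP.eq_of_eq_right hasc ((H.isCrossing hv).eq.trans hyv) (left_mem_Icc.2 hle)
  refine H.fst_eq_of_eq u hu v hv (X u)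
    ⟨hca.trans_lt hua.1, (H.crossingAbscissa_mem_Ico hu).2⟩ ?_
  rw [heq, (H.isCrossing hu).eq, hyu]

lemma snd_eq_of_descending (H : LeafLabelling s c d T P Q)
    (hy : ∀ x ∈ Ioo a b, (x, y x) ∈ crossingPoint s c d P Q '' T.carrier ∧
      HasDerivAt y (-√(y x - s x)) x)
    (hu : u ∈ T.carrier) (hv : v ∈ T.carrier) (hua : X u ∈ Ioo a b) (hva : X v ∈ Ioo a b)
    (hyu : Q u.2 (X u) = y (X u)) (hyv : Q v.2 (X v) = y (X v)) : u.2 = v.2 := by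
  wlog hle : X u ≤ X v generalizing u v
  · exact (this hv hu hva hua hyv hyu (le_of_not_ge hle)).symm
  have hdesc : IsDescending s (X u) (X v) y := by
    have hsub : Icc (X u) (X v) ⊆ Ioo a b := fun x hx =>
      ⟨hua.1.trans_le hx.1, hx.2.trans_lt hva.2⟩
    refine ⟨fun x hx => (hy x (hsub hx)).2.continuousAt.continuousWithinAt, fun x hx => ?_⟩
    obtain ⟨hmem, hderiv⟩ := hy x (hsub (Ioo_subset_Icc_self hx))
    rwa [H.clampSqrt_of_mem_image hmem]
  have hQ := (H.isDescending u.2).mono (H.isCrossing hu).mem_Icc.1 (H.isCrossing hv).mem_Icc.2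
  have heq := hQ.eq_of_eq_left hdesc hyu (right_mem_Icc.2 hle)
  exact H.snd_eq_of_eq u hu v hv (X v) (H.crossingAbscissa_mem_Ico hv) (heq.trans hyv.symm)

end Arc

theorem halfChart (H : LeafLabelling s c d T P Q) : HalfChart s c T (crossingPoint s c d P Q) where
  isCompact := H.isCompact
  continuousOn := H.continuousOn_crossingPoint
  eq_iff u hu v hv := H.crossingPoint_eq_iff hu hv
  le_fst u hu := (H.isCrossing hu).mem_Icc.1
  fst_eq_iff u hu := H.crossingAbscissa_eq_left_iff hu
  deriv_ne_zero u hu hc := H.deriv_ne_zero _ ⟨hc, (H.crossingAbscissa_mem_Ico hu).2⟩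
  le_snd u hu := (H.isCrossing hu).le
  snd_eq_iff u hu := H.mem_fold_iff u hu _ (H.crossingAbscissa_mem_Ico hu).2 (H.isCrossing hu)
  image_mem_nhdsWithin := H.image_crossingPoint_mem_nhdsWithin
  zero_mem := H.zero_mem
  map_zero := H.crossingPoint_zero
  exists_ascending α := by
    refine ⟨P α, ?_⟩
    rintro u hu rfl
    refine ⟨(H.isCrossing hu).eq.symm, fun hc => ?_⟩
    have hderiv := (H.isAscending u.1).hasDerivAt (X u) ⟨hc, (H.crossingAbscissa_mem_Ico hu).2⟩
    rwa [(H.isCrossing hu).eq, H.clampSqrt_crossingPoint hu] at hderiv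
  exists_descending β := by
    refine ⟨Q β, ?_⟩
    rintro u hu rfl
    refine ⟨rfl, fun hc => ?_⟩
    have hderiv := (H.isDescending u.2).hasDerivAt (X u) ⟨hc, (H.crossingAbscissa_mem_Ico hu).2⟩
    rwa [H.clampSqrt_crossingPoint hu] at hderiv
  fst_eq_of_ascending a b y hca hy u hu v hv := H.fst_eq_of_ascending hca hy hu hv
  snd_eq_of_descending a b y _ hy u hu v hv := H.snd_eq_of_descending hy hu hv

end LeafLabelling

/-! ### The chart at a decreasing fold -/

lemma slopesDownInto_of_deriv_neg {s : ℝ → ℝ} {c d z : ℝ} (hneg : ∀ x ∈ Ioo c d, deriv s x < 0)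
    (hcont : ContinuousOn (deriv s) (Ioo c d)) (hz : z ∈ Ioo c d) : SlopesDownInto s z := by
  have hat := hcont.continuousAt (Ioo_mem_nhds hz.1 hz.2)
  refine ⟨-(deriv s z / 2), by linarith [hneg z hz], ?_⟩
  exact (hat.eventually_lt_const (by linarith [hneg z hz])).filter_mono nhdsWithin_le_nhds

lemma slopesUpInto_reflect_of_deriv_neg {s : ℝ → ℝ} {c d z : ℝ}
    (hneg : ∀ x ∈ Ioo c d, deriv s x < 0) (hz : z ∈ Ico c d) : SlopesUpInto (reflect s) (-z) := by
  filter_upwards [Ioo_mem_nhdsLT (neg_lt_neg hz.2)] with x hx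
  have hx' : -x ∈ Ioo c d := ⟨by linarith [hz.1, hx.2], by linarith [hx.1]⟩
  rw [show reflect s = fun x => s (-x) from rfl, deriv_comp_neg]
  linarith [hneg _ hx']

/-- A fold curve through the origin that decreases over `[c, d]`, with `c ≤ 0 < d`: a regular fold
point when `c < 0`, the right half of a folded saddle when `c = 0`. -/
structure DecreasingFold (s : ℝ → ℝ) (c d : ℝ) : Prop where
  continuous : Continuous s
  map_zero : s 0 = 0
  left_nonpos : c ≤ 0
  right_pos : 0 < d
  deriv_neg : ∀ x ∈ Ioo c d, deriv s x < 0
  continuousOn_deriv : ContinuousOn (deriv s) (Ioo c d)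
  abs_le : ∀ x ∈ Icc c d, |s x| ≤ 1 / 2

/-- The labels `-δ ≤ α ≤ β ≤ δ`. The diagonal is mapped to the left edge from the height `e`
upwards, and to the fold below it. -/
def triangleDomain (e δ : ℝ) : LabelDomain where
  carrier := {u | -δ ≤ u.1 ∧ u.1 ≤ u.2 ∧ u.2 ≤ δ}
  collapsed := ∅
  axis := {u | u.1 = u.2 ∧ e ≤ u.2}
  fold := {u | u.1 = u.2 ∧ u.2 ≤ e}

lemma isCompact_carrier_triangleDomain (e δ : ℝ) : IsCompact (triangleDomain e δ).carrier := by
  refine (isCompact_Icc (a := (-δ, -δ)) (b := (δ, δ))).of_isClosed_subset ?_ ?_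
  · exact (isClosed_le continuous_const continuous_fst).inter
      ((isClosed_le continuous_fst continuous_snd).inter
        (isClosed_le continuous_snd continuous_const))
  · rintro u ⟨h₁, h₂, h₃⟩
    exact ⟨⟨h₁, h₁.trans h₂⟩, h₂.trans h₃, h₃⟩

lemma eventually_between {s f g : ℝ → ℝ} {c d : ℝ} (h₀ : (0 : ℝ) ∈ Ico c d)
    (hf : ContinuousOn f (Icc c d)) (hg : ContinuousOn g (Icc c d)) (hf₀ : f 0 < 0)
    (hg₀ : 0 < g 0) :
    ∀ᶠ p in 𝓝[aboveFold s c] 0, p.1 ∈ Ico c d ∧ f p.1 < p.2 ∧ p.2 < g p.1 := by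
  have hsnd : Tendsto Prod.snd (𝓝[aboveFold s c] 0) (𝓝 (0 : ℝ)) :=
    (continuous_snd.tendsto 0).mono_left nhdsWithin_le_nhds
  have hfst : Tendsto Prod.fst (𝓝[aboveFold s c] 0) (𝓝 (0 : ℝ)) :=
    (continuous_fst.tendsto 0).mono_left nhdsWithin_le_nhds
  have hIco : ∀ᶠ p in 𝓝[aboveFold s c] 0, p.1 ∈ Ico c d := by
    filter_upwards [self_mem_nhdsWithin, hfst.eventually_lt_const h₀.2] with p hp hpd
      using ⟨hp.1, hpd⟩
  have hIcc : Tendsto Prod.fst (𝓝[aboveFold s c] 0) (𝓝[Icc c d] 0) :=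
    tendsto_nhdsWithin_iff.2 ⟨hfst, hIco.mono fun _ => fun h => Ico_subset_Icc_self h⟩
  have hf' : Tendsto f (𝓝[Icc c d] 0) (𝓝 (f 0)) := hf 0 (Ico_subset_Icc_self h₀)
  have hg' : Tendsto g (𝓝[Icc c d] 0) (𝓝 (g 0)) := hg 0 (Ico_subset_Icc_self h₀)
  exact hIco.and (((hf'.comp hIcc).eventually_lt hsnd hf₀).and
    (hsnd.eventually_lt (hg'.comp hIcc) hg₀))

namespace DecreasingFold

variable {s : ℝ → ℝ} {c d x k δ : ℝ} {F G : ℝ → ℝ → ℝ}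

lemma zero_mem_Ico (H : DecreasingFold s c d) : (0 : ℝ) ∈ Ico c d := ⟨H.left_nonpos, H.right_pos⟩

lemma lt (H : DecreasingFold s c d) : c < d := H.left_nonpos.trans_lt H.right_pos

lemma strictAntiOn (H : DecreasingFold s c d) : StrictAntiOn s (Icc c d) :=
  strictAntiOn_of_deriv_neg (convex_Icc c d) H.continuous.continuousOn fun x hx =>
    H.deriv_neg x (by simpa only [interior_Icc] using hx)

lemma strictMono_ascending (H : DecreasingFold s c d) (L : Leaves s c d F G) (hx : x ∈ Icc c d) :
    StrictMono fun a => F a x := fun a a' h =>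
  (L.isAscending a).lt_of_lt_right H.continuous (L.isAscending a') (by rwa [L.right_eq, L.right_eq])
    (fun _ hz _ => Or.inr (Or.inr (slopesUpInto_reflect_of_deriv_neg H.deriv_neg hz))) x hx

lemma strictMono_descending (H : DecreasingFold s c d) (L : Leaves s c d F G) (hx : x ∈ Ico c d) :
    StrictMono fun b => G b x := fun b b' h =>
  ((L.isDescending b).mono le_rfl hx.2.le).lt_of_lt_left H.continuous
    ((L.isDescending b').mono le_rfl hx.2.le) (by rwa [L.left_eq, L.left_eq])
    (fun _ hz _ => Or.inr (Or.inl (slopesDownInto_of_deriv_neg H.deriv_neg H.continuousOn_deriv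
      ⟨hz.1, hz.2.trans_lt hx.2⟩))) x (right_mem_Icc.2 hx.1)

lemma exists_leftIndex (H : DecreasingFold s c d) (L : Leaves s c d F G) :
    ∃ κ : ℝ ≃o ℝ, ∀ k, F (κ k) c = k := by
  have hc := left_mem_Icc.2 L.lt.le
  let e := (H.strictMono_ascending L hc).orderIsoOfSurjective _ (L.surjective_ascending hc)
  exact ⟨e.symm, e.apply_symm_apply⟩

variable {κ : ℝ ≃o ℝ}

lemma leftIndex_apply (H : DecreasingFold s c d) (L : Leaves s c d F G)
    (hκ : ∀ k, F (κ k) c = k) (a : ℝ) : κ (F a c) = a :=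
  (H.strictMono_ascending L (left_mem_Icc.2 L.lt.le)).injective (hκ _)

lemma nonneg (H : DecreasingFold s c d) (hx : x ∈ Icc c 0) : 0 ≤ s x := by
  rw [← H.map_zero]
  exact H.strictAntiOn.antitoneOn ⟨hx.1, hx.2.trans H.right_pos.le⟩
    (Ico_subset_Icc_self H.zero_mem_Ico) hx.2

lemma ascending_zero (H : DecreasingFold s c d) (L : Leaves s c d F G)
    (hκ : ∀ k, F (κ k) c = k) (hk : k ≤ 0) : F (κ k) 0 = k := by
  obtain ⟨a, ha⟩ := L.surjective_ascending (Ico_subset_Icc_self H.zero_mem_Ico) k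
  have hconst := ((L.isAscending a).mono le_rfl H.right_pos.le).eq_const
    (fun x hx => hk.trans (H.nonneg hx)) ha (left_mem_Icc.2 H.left_nonpos)
  rw [← hconst, H.leftIndex_apply L hκ, hconst]
  exact ha

lemma descending_zero (H : DecreasingFold s c d) (L : Leaves s c d F G) : G 0 0 = 0 :=
  ((L.isDescending 0).mono le_rfl H.right_pos.le).eq_const (fun _ hx => H.nonneg hx) (L.left_eq 0)
    (right_mem_Icc.2 H.left_nonpos)

lemma descending_lt_leftIndex (H : DecreasingFold s c d) (L : Leaves s c d F G)
    (hκ : ∀ k, F (κ k) c = k) : G 0 d < κ 0 := by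
  by_contra! hle
  have hκ₀ := L.ascending_le (left_mem_Icc.2 L.lt.le) (κ 0)
  rw [hκ] at hκ₀
  have hfold := (L.isDescending 0).le_of_left_le_right H.continuous L.lt
    (by rw [L.left_eq]; exact hκ₀.trans hle) d (right_mem_Icc.2 L.lt.le)
  have hneg := H.strictAntiOn (Ico_subset_Icc_self H.zero_mem_Ico) (right_mem_Icc.2 L.lt.le)
    H.right_pos
  rw [L.left_eq] at hfold
  linarith [H.map_zero]

lemma exists_isCrossing (H : DecreasingFold s c d) (L : Leaves s c d F G)
    (hκ : ∀ k, F (κ k) c = k) (hgap : G δ d < κ (-δ)) {u : ℝ × ℝ}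
    (hu : u ∈ (triangleDomain (s c) δ).carrier) :
    ∃ x < d, IsCrossing s c d (F (κ u.1)) (G u.2) x := by
  refine FoldedBDE.exists_isCrossing H.continuous L.lt (L.isAscending _) (L.isDescending _) ?_ ?_
  · rw [hκ, L.left_eq]
    exact hu.2.1
  · rw [L.right_eq]
    calc G u.2 d ≤ G δ d := L.monotone_descending (right_mem_Icc.2 L.lt.le) hu.2.2
      _ < κ (-δ) := hgap
      _ ≤ κ u.1 := κ.monotone hu.1

lemma eventually_exists_label (H : DecreasingFold s c d) (L : Leaves s c d F G)
    (hκ : ∀ k, F (κ k) c = k) (hδ : 0 < δ) :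
    ∀ᶠ p in 𝓝[aboveFold s c] 0, p.1 ∈ Ico c d ∧
      ∃ u ∈ (triangleDomain (s c) δ).carrier, F (κ u.1) p.1 = p.2 ∧ G u.2 p.1 = p.2 := by
  have hbelow : F (κ (-δ)) 0 < 0 := by
    rw [H.ascending_zero L hκ (by linarith)]
    linarith
  have habove : 0 < G δ 0 :=
    (H.descending_zero L).symm.trans_lt (H.strictMono_descending L H.zero_mem_Ico hδ)
  filter_upwards [eventually_between H.zero_mem_Ico (L.isAscending (κ (-δ))).continuousOn
    (L.isDescending δ).continuousOn hbelow habove] with p hp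
  obtain ⟨hpx, hpF, hpG⟩ := hp
  have hpx' := Ico_subset_Icc_self hpx
  obtain ⟨a, ha : F a p.1 = p.2⟩ := L.surjective_ascending hpx' p.2
  obtain ⟨b, hb : G b p.1 = p.2⟩ := L.surjective_descending hpx' p.2
  refine ⟨hpx, (F a c, b), ⟨?_, ?_, ?_⟩, by rw [H.leftIndex_apply L hκ, ha], hb⟩
  · have hlt := (L.monotone_ascending hpx').reflect_lt (hpF.trans_eq ha.symm)
    rw [← κ.le_iff_le, H.leftIndex_apply L hκ]
    exact hlt.le
  · calc F a c ≤ F a p.1 := (L.isAscending a).monotoneOn (left_mem_Icc.2 L.lt.le) hpx' hpx.1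
      _ = G b p.1 := ha.trans hb.symm
      _ ≤ b := L.descending_le hpx' b
  · exact ((L.monotone_descending hpx').reflect_lt (hb.trans_lt hpG)).le

lemma descending_eq_iff_mem_fold (H : DecreasingFold s c d) (L : Leaves s c d F G)
    (hκ : ∀ k, F (κ k) c = k) {u : ℝ × ℝ} (hxd : x < d)
    (hx : IsCrossing s c d (F (κ u.1)) (G u.2) x) :
    G u.2 x = s x ↔ u ∈ (triangleDomain (s c) δ).fold := by
  have hcx := hx.mem_Icc.1
  have hF := (L.isAscending (κ u.1)).mono le_rfl hxd.le
  have hG := (L.isDescending u.2).mono le_rfl hxd.le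
  constructor
  · intro he
    have hle : ∀ t ∈ Icc c x, s x ≤ s t := fun t ht =>
      H.strictAntiOn.antitoneOn ⟨ht.1, ht.2.trans hxd.le⟩ hx.mem_Icc ht.2
    have hα := hF.eq_const hle (hx.eq.trans he) (left_mem_Icc.2 hcx)
    have hsx := ((L.isDescending (s x)).mono le_rfl hxd.le).eq_const hle (L.left_eq _)
      (right_mem_Icc.2 hcx)
    have hβ : u.2 = s x := (H.strictMono_descending L ⟨hcx, hxd⟩).injective (he.trans hsx.symm)
    rw [hκ] at hα
    exact ⟨hα.trans hβ.symm, hβ.trans_le (hle c (left_mem_Icc.2 hcx))⟩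
  · rintro ⟨hdiag, hle⟩
    have hFx := hF.monotoneOn (left_mem_Icc.2 hcx) (right_mem_Icc.2 hcx) hcx
    rw [hκ, hx.eq, hdiag] at hFx
    have hGx : G u.2 x = u.2 := le_antisymm (L.descending_le hx.mem_Icc _) hFx
    refine le_antisymm ?_ hx.le
    rcases hcx.eq_or_lt with rfl | hlt
    · rwa [hGx]
    · have hfold := hG.le_of_left_le_right H.continuous hlt (by rw [L.left_eq, hGx]) x
        (right_mem_Icc.2 hcx)
      rwa [L.left_eq, ← hGx] at hfold

lemma leafLabelling (H : DecreasingFold s c d) (L : Leaves s c d F G)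
    (hκ : ∀ k, F (κ k) c = k) (hδ : 0 < δ) (hδ' : δ ≤ 1 / 2) (hgap : G δ d < κ (-δ)) :
    LeafLabelling s c d (triangleDomain (s c) δ) (fun α => F (κ α)) G where
  continuous := H.continuous
  injOn := H.strictAntiOn.injOn
  deriv_ne_zero x hx := (H.deriv_neg x hx).ne
  map_zero := H.map_zero
  zero_mem_Ico := H.zero_mem_Ico
  isCompact := isCompact_carrier_triangleDomain _ _
  zero_mem := ⟨neg_nonpos.2 hδ.le, le_rfl, hδ.le⟩
  isAscending α := L.isAscending _
  isDescending := L.isDescending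
  left_eq := L.left_eq
  ascending_zero := H.ascending_zero L hκ le_rfl
  descending_zero := H.descending_zero L
  continuousOn_ascending := L.continuousOn_ascending.comp
    (f := fun p : ℝ × ℝ => (κ p.1, p.2)) (by have := κ.continuous; fun_prop)
    fun p hp => ⟨mem_univ _, hp.2⟩
  continuousOn_descending := L.continuousOn_descending
  sub_le_one u hu x hx := by linarith [hu.2.2, _root_.abs_le.1 (H.abs_le x hx)]
  exists_isCrossing u hu := H.exists_isCrossing L hκ hgap hu
  fst_eq_of_eq u _ v _ x hx h :=
    κ.injective ((H.strictMono_ascending L (Ioo_subset_Icc_self hx)).injective h)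
  snd_eq_of_eq u _ v _ x hx h := (H.strictMono_descending L hx).injective h
  eventually_exists_label := H.eventually_exists_label L hκ hδ
  mem_axis_iff u _ := by rw [hκ]; rfl
  mem_fold_iff u _ x hxd hx := H.descending_eq_iff_mem_fold L hκ hxd hx
  eq_or_collapsed u _ v _ hu hv h := Or.inl (Prod.ext (hu.1.trans (h.trans hv.1.symm)) h)
  collapsed u _ h := h.elim

theorem eventually_exists_halfChart (H : DecreasingFold s c d) :
    ∀ᶠ δ in 𝓝[>] 0, ∃ pt, HalfChart s c (triangleDomain (s c) δ) pt := by
  obtain ⟨F, G, L⟩ := exists_leaves H.continuous H.lt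
  obtain ⟨κ, hκ⟩ := H.exists_leftIndex L
  have hgap : ∀ᶠ δ in 𝓝 0, G δ d < κ (-δ) := by
    refine (L.continuous_descending (right_mem_Icc.2 L.lt.le)).continuousAt.eventually_lt
      (κ.continuous.comp continuous_neg).continuousAt ?_
    simpa using H.descending_lt_leftIndex L hκ
  filter_upwards [self_mem_nhdsWithin, hgap.filter_mono nhdsWithin_le_nhds,
    (eventually_le_nhds (show (0 : ℝ) < 1 / 2 by norm_num)).filter_mono nhdsWithin_le_nhds]
    with δ hδ hδgap hδ'
  exact ⟨_, (H.leafLabelling L hκ hδ hδ' hδgap).halfChart⟩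

end DecreasingFold

/-! ### The chart at a folded node -/

/-- A fold curve that rises from the origin over `[0, ε]`, slowly enough for the solutions near it
to fall back into the origin: the right half of a folded node. -/
structure IncreasingFold (s : ℝ → ℝ) (ε : ℝ) : Prop where
  continuous : Continuous s
  map_zero : s 0 = 0
  pos : 0 < ε
  le_one : ε ≤ 1
  deriv_pos : ∀ x ∈ Ioo 0 ε, 0 < deriv s x
  continuousOn_deriv : ContinuousOn (deriv s) (Ioo 0 ε)
  le_sq : ∀ x ∈ Icc 0 ε, s x ≤ x ^ 2 / 16

/-- Labels of the leaves at a node. The descending leaf is labelled by its height on the left edge,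
an ascending leaf by its height on the left edge if this is positive; the leaves running into the
origin get the labels in `[-1 - δ, 0]`, in such a way that those meeting the fold at the same point
as the descending leaf `β` are labelled `β - 1 - δ`. -/
def nodeDomain (δ : ℝ) : LabelDomain where
  carrier := {u | 0 ≤ u.2 ∧ u.2 ≤ δ ∧ u.2 - 1 - δ ≤ u.1 ∧ u.1 ≤ u.2}
  collapsed := {u | u.2 = 0}
  axis := {u | u.1 = u.2 ∨ u.2 = 0}
  fold := {u | u.1 = u.2 - 1 - δ ∨ u.2 = 0}

lemma isCompact_carrier_nodeDomain (δ : ℝ) : IsCompact (nodeDomain δ).carrier := by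
  refine (isCompact_Icc (a := (-1 - δ, 0)) (b := (δ, δ))).of_isClosed_subset ?_ ?_
  · exact (isClosed_le continuous_const continuous_snd).inter
      ((isClosed_le continuous_snd continuous_const).inter
        ((isClosed_le (by fun_prop) continuous_fst).inter
          (isClosed_le continuous_fst continuous_snd)))
  · rintro u ⟨h₁, h₂, h₃, h₄⟩
    exact ⟨⟨by linarith, h₁⟩, h₄.trans h₂, h₂⟩

-- On the parabola `y = x² / 8` the slope `√(y - s)` is at least `√(x² / 16) = x / 4`, the slope
-- of the parabola, so an ascending solution that ends below it never was above it.
lemma IsAscending.left_nonpos {s f : ℝ → ℝ} {ε : ℝ} (hε : 0 < ε) (hε₁ : ε ≤ 1)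
    (hs : ∀ x ∈ Icc 0 ε, s x ≤ x ^ 2 / 16) (hf : IsAscending s 0 ε f) (he : f ε ≤ ε ^ 2 / 16) :
    f 0 ≤ 0 := by
  have hcont : ContinuousOn (fun x => f x - x ^ 2 / 8) (Icc 0 ε) :=
    hf.continuousOn.sub (by fun_prop)
  have hcompact : IsCompact (Icc 0 ε ∩ (fun x => f x - x ^ 2 / 8) ⁻¹' (Iic 0)) :=
    isCompact_Icc.of_isClosed_subset
      (hcont.preimage_isClosed_of_isClosed isClosed_Icc isClosed_Iic) inter_subset_left
  have hend : f ε - ε ^ 2 / 8 ≤ 0 := by nlinarith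
  obtain ⟨z, ⟨hz, hzle : f z - z ^ 2 / 8 ≤ 0⟩, hzmin⟩ :=
    hcompact.exists_isLeast ⟨ε, right_mem_Icc.2 hε.le, hend⟩
  have habove : ∀ x ∈ Ioo 0 z, x ^ 2 / 8 < f x := fun x hx => by
    by_contra! h
    exact hx.2.not_ge (hzmin ⟨⟨hx.1.le, hx.2.le.trans hz.2⟩, sub_nonpos.2 h⟩)
  have hmono : MonotoneOn (fun x => f x - x ^ 2 / 8) (Icc 0 z) := by
    refine monotoneOn_Icc_of_hasDerivAt (f' := fun x => clampSqrt (f x - s x) - x / 4)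
      (hcont.mono (Icc_subset_Icc le_rfl hz.2)) (fun x hx => ?_) fun x hx => ?_
    · have hsq := ((hasDerivAt_id x).pow 2).div_const 8
      refine ((hf.hasDerivAt x ⟨hx.1, hx.2.trans_le hz.2⟩).sub hsq).congr_deriv ?_
      simp only [id_eq]
      ring
    · have hx' : x ∈ Icc 0 ε := ⟨hx.1.le, hx.2.le.trans hz.2⟩
      have hslope : clampSqrt (x ^ 2 / 16) = x / 4 := by
        rw [clampSqrt_eq_sqrt (by positivity) (by nlinarith [hx.1, hx'.2]),
          show x ^ 2 / 16 = (x / 4) ^ 2 by ring, Real.sqrt_sq (by linarith [hx.1])]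
      have hle : clampSqrt (x ^ 2 / 16) ≤ clampSqrt (f x - s x) :=
        monotone_clampSqrt (by linarith [habove x hx, hs x hx'])
      linarith
  have hstart := hmono (left_mem_Icc.2 hz.1) (right_mem_Icc.2 hz.1) hz.1
  simp only at hstart
  linarith

lemma exists_orderIso_interpolating (e : ℝ ≃o ℝ) {V : ℝ → ℝ} {p q : ℝ} (hpq : p < q)
    (hV : Continuous V) (hmono : StrictMonoOn V (Ici q)) (hVq : V q = 0)
    (htop : Tendsto V atTop atTop) :
    ∃ θ : ℝ ≃o ℝ, (∀ a ≤ p, θ a = e a - e p - 1) ∧ ∀ a, q ≤ a → θ a = V a := by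
  have hlen : 0 < q - p := sub_pos.2 hpq
  let θ : ℝ → ℝ := fun a =>
    V (max a q) + (max p (min a q) - q) / (q - p) + (e (min a p) - e p)
  have hlow : ∀ a ≤ p, θ a = e a - e p - 1 := fun a ha => by
    simp only [θ, max_eq_right (ha.trans hpq.le), hVq, min_eq_left (ha.trans hpq.le),
      max_eq_left ha, min_eq_left ha]
    rw [show p - q = -(q - p) by ring, neg_div, div_self hlen.ne']
    ring
  have hhigh : ∀ a, q ≤ a → θ a = V a := fun a ha => by
    simp only [θ, max_eq_left ha, min_eq_right ha, max_eq_right hpq.le,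
      min_eq_right (hpq.le.trans ha), sub_self, zero_div, add_zero]
  have hcont : Continuous θ := by
    have he := e.continuous
    fun_prop
  have hstrict : StrictMono θ := by
    have h₁ : StrictMonoOn θ (Iic p) := fun a ha b hb hab => by
      rw [hlow a ha, hlow b hb]
      linarith [e.strictMono hab]
    have h₂ : StrictMonoOn θ (Icc p q) := fun a ha b hb hab => by
      simp only [θ, max_eq_right ha.2, max_eq_right hb.2, min_eq_left ha.2, min_eq_left hb.2,
        max_eq_right ha.1, max_eq_right hb.1, min_eq_right ha.1, min_eq_right hb.1]
      gcongr
    have h₃ : StrictMonoOn θ (Ici q) := hmono.congr fun a ha => (hhigh a ha).symm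
    have h₁₂ := h₁.union h₂ isGreatest_Iic (isLeast_Icc hpq.le)
    rw [Iic_union_Icc_eq_Iic hpq.le] at h₁₂
    exact h₁₂.Iic_union_Ici h₃
  have hθtop : Tendsto θ atTop atTop :=
    htop.congr' ((eventually_ge_atTop q).mono fun a ha => (hhigh a ha).symm)
  have hθbot : Tendsto θ atBot atBot := by
    refine (e.tendsto_atBot.atBot_add (tendsto_const_nhds (x := -e p - 1))).congr' ?_
    filter_upwards [eventually_le_atBot p] with a ha
    rw [hlow a ha]
    ring
  exact ⟨hstrict.orderIsoOfSurjective θ (hcont.surjective hθtop hθbot), hlow, hhigh⟩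

namespace IncreasingFold

variable {s : ℝ → ℝ} {ε x δ : ℝ} {F G : ℝ → ℝ → ℝ}

lemma left_mem (H : IncreasingFold s ε) : (0 : ℝ) ∈ Icc 0 ε := left_mem_Icc.2 H.pos.le

lemma right_mem (H : IncreasingFold s ε) : ε ∈ Icc 0 ε := right_mem_Icc.2 H.pos.le

lemma strictMonoOn (H : IncreasingFold s ε) : StrictMonoOn s (Icc 0 ε) :=
  strictMonoOn_of_deriv_pos (convex_Icc 0 ε) H.continuous.continuousOn fun x hx =>
    H.deriv_pos x (by simpa only [interior_Icc] using hx)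

lemma nonneg (H : IncreasingFold s ε) (hx : x ∈ Icc 0 ε) : 0 ≤ s x := by
  rw [← H.map_zero]
  exact H.strictMonoOn.monotoneOn H.left_mem hx hx.1

lemma right_value_pos (H : IncreasingFold s ε) : 0 < s ε := by
  rw [← H.map_zero]
  exact H.strictMonoOn H.left_mem H.right_mem H.pos

lemma le_of_le (H : IncreasingFold s ε) (hx : 0 ≤ x) : ∀ t ∈ Icc x ε, s x ≤ s t := fun _ ht =>
  H.strictMonoOn.monotoneOn ⟨hx, ht.1.trans ht.2⟩ ⟨hx.trans ht.1, ht.2⟩ ht.1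

lemma slopesUpInto (H : IncreasingFold s ε) {z : ℝ} (hz : z ∈ Ioc 0 ε) : SlopesUpInto s z := by
  filter_upwards [Ioo_mem_nhdsLT hz.1] with x hx using H.deriv_pos x ⟨hx.1, hx.2.trans_le hz.2⟩

lemma slopesDownInto_reflect (H : IncreasingFold s ε) {z : ℝ} (hz : z ∈ Ioo 0 ε) :
    SlopesDownInto (reflect s) (-z) := by
  have hneg : ∀ x ∈ Ioo (-ε) 0, -x ∈ Ioo 0 ε := fun x hx =>
    ⟨by linarith [hx.2], by linarith [hx.1]⟩
  have hderiv : deriv (reflect s) = fun x => -deriv s (-x) := funext fun x => deriv_comp_neg s x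
  refine slopesDownInto_of_deriv_neg (c := -ε) (d := 0) (fun x hx => ?_) ?_
    ⟨neg_lt_neg hz.2, neg_lt_zero.2 hz.1⟩
  · rw [hderiv]
    linarith [H.deriv_pos _ (hneg x hx)]
  · rw [hderiv]
    exact (H.continuousOn_deriv.comp continuousOn_neg hneg).neg

lemma strictMono_descending (H : IncreasingFold s ε) (L : Leaves s 0 ε F G) (hx : x ∈ Icc 0 ε) :
    StrictMono fun b => G b x := fun b b' h =>
  (L.isDescending b).lt_of_lt_left H.continuous (L.isDescending b') (by rwa [L.left_eq, L.left_eq])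
    (fun _ hz _ => Or.inr (Or.inr (H.slopesUpInto hz))) x hx

lemma strictMono_ascending (H : IncreasingFold s ε) (L : Leaves s 0 ε F G) (hx : x ∈ Ioc 0 ε) :
    StrictMono fun a => F a x := fun a a' h =>
  ((L.isAscending a).mono hx.1.le le_rfl).lt_of_lt_right H.continuous
    ((L.isAscending a').mono hx.1.le le_rfl) (by rwa [L.right_eq, L.right_eq])
    (fun _ hz _ => Or.inr (Or.inl (H.slopesDownInto_reflect ⟨hx.1.trans_le hz.1, hz.2⟩))) x
    (left_mem_Icc.2 hx.2)

lemma ascending_lt_of_ne_zero (H : IncreasingFold s ε) (L : Leaves s 0 ε F G) {a a' : ℝ}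
    (h : a < a') (h₀ : F a 0 ≠ 0) : F a 0 < F a' 0 := by
  refine (L.isAscending a).lt_of_lt_right H.continuous (L.isAscending a')
    (by rwa [L.right_eq, L.right_eq]) (fun z hz _ => ?_) 0 H.left_mem
  rcases hz.1.eq_or_lt with rfl | hpos
  · left
    rwa [H.map_zero]
  · exact Or.inr (Or.inl (H.slopesDownInto_reflect ⟨hpos, hz.2⟩))

lemma ascending_nonneg (H : IncreasingFold s ε) (L : Leaves s 0 ε F G) (hx : x ∈ Icc 0 ε) {a : ℝ}
    (ha : 0 ≤ a) : 0 ≤ F a x := by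
  rw [← (L.isAscending 0).eq_const (fun t ht => H.nonneg ht) (L.right_eq 0) hx]
  exact L.monotone_ascending hx ha

lemma descending_zero (H : IncreasingFold s ε) (L : Leaves s 0 ε F G) (hx : x ∈ Icc 0 ε) :
    G 0 x = 0 :=
  (L.isDescending 0).eq_const (fun _ ht => H.nonneg ht) (L.left_eq 0) hx

lemma descending_nonneg (H : IncreasingFold s ε) (L : Leaves s 0 ε F G) (hx : x ∈ Icc 0 ε) {b : ℝ}
    (hb : 0 ≤ b) : 0 ≤ G b x := by
  rw [← H.descending_zero L hx]
  exact L.monotone_descending hx hb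

lemma exists_separatrix (H : IncreasingFold s ε) (L : Leaves s 0 ε F G) :
    ∃ q, s ε ≤ q ∧ IsGreatest {a | F a 0 = 0} q := by
  have hsε : F (s ε) 0 = 0 := by
    refine le_antisymm ?_ (H.ascending_nonneg L H.left_mem H.right_value_pos.le)
    exact (L.isAscending _).left_nonpos H.pos H.le_one H.le_sq
      (by rw [L.right_eq]; exact H.le_sq ε H.right_mem)
  have hclosed : IsClosed {a | F a 0 = 0} :=
    isClosed_singleton.preimage (L.continuous_ascending H.left_mem)
  have hbdd : BddAbove {a | F a 0 = 0} := ⟨ε, fun a (ha : F a 0 = 0) => by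
    linarith [L.sub_le_ascending H.left_mem a]⟩
  exact ⟨_, le_csSup hbdd hsε, hclosed.csSup_mem ⟨_, hsε⟩ hbdd, fun a ha => le_csSup hbdd ha⟩

lemma exists_nodeIndex (H : IncreasingFold s ε) (L : Leaves s 0 ε F G) (hδ : δ < s ε) :
    ∃ κ : ℝ ≃o ℝ, (∀ α, 0 ≤ κ α → F (κ α) 0 = max α 0) ∧
      ∀ b ≤ δ, κ (b - 1 - δ) = G b ε := by
  obtain ⟨q, hsq, hq, hqmax⟩ := H.exists_separatrix L
  have hq : F q 0 = 0 := hq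
  let e := (H.strictMono_descending L H.right_mem).orderIsoOfSurjective _
    (L.surjective_descending H.right_mem)
  have he : ∀ b, e.symm (G b ε) = b := e.symm_apply_apply
  have hpq : G δ ε < q := (L.descending_le H.right_mem δ).trans_lt (hδ.trans_le hsq)
  have hmono : StrictMonoOn (fun a => F a 0) (Ici q) := fun a ha a' _ h => by
    by_cases h₀ : F a 0 = 0
    · refine (L.monotone_ascending H.left_mem h.le).lt_of_ne fun heq => ?_
      exact (h.trans_le (hqmax (heq.symm.trans h₀))).not_ge ha
    · exact H.ascending_lt_of_ne_zero L h h₀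
  have htop : Tendsto (fun a => F a 0) atTop atTop :=
    tendsto_atTop_mono (fun a => L.sub_le_ascending H.left_mem a)
      (tendsto_atTop_add_const_right _ _ tendsto_id)
  obtain ⟨θ, hlow, hhigh⟩ := exists_orderIso_interpolating e.symm hpq
    (L.continuous_ascending H.left_mem) hmono hq htop
  refine ⟨θ.symm, fun α hα => ?_, fun b hb => ?_⟩
  · rcases le_total (θ.symm α) q with h | h
    · have hα₀ : α ≤ 0 := by simpa only [θ.apply_symm_apply, hhigh q le_rfl, hq] using θ.monotone h
      rw [max_eq_right hα₀]
      exact le_antisymm ((L.monotone_ascending H.left_mem h).trans_eq hq)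
        (H.ascending_nonneg L H.left_mem hα)
    · have hα' : F (θ.symm α) 0 = α := by rw [← hhigh _ h, θ.apply_symm_apply]
      rw [hα', max_eq_left]
      exact hα' ▸ H.ascending_nonneg L H.left_mem hα
  · rw [θ.symm_apply_eq, hlow _ (L.monotone_descending H.right_mem hb), he, he]
    ring

variable {κ : ℝ ≃o ℝ} {u : ℝ × ℝ}

lemma descending_le_nodeIndex (hG : ∀ b ≤ δ, κ (b - 1 - δ) = G b ε)
    (hu : u ∈ (nodeDomain δ).carrier) : G u.2 ε ≤ κ u.1 := by
  rw [← hG u.2 hu.2.1]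
  exact κ.monotone hu.2.2.1

lemma ascending_zero (H : IncreasingFold s ε) (L : Leaves s 0 ε F G)
    (hF : ∀ α, 0 ≤ κ α → F (κ α) 0 = max α 0) (hG : ∀ b ≤ δ, κ (b - 1 - δ) = G b ε)
    (hu : u ∈ (nodeDomain δ).carrier) : F (κ u.1) 0 = max u.1 0 :=
  hF _ ((H.descending_nonneg L H.right_mem hu.1).trans (descending_le_nodeIndex hG hu))

lemma exists_descending_eq (H : IncreasingFold s ε) (L : Leaves s 0 ε F G) {b : ℝ} (hb : 0 ≤ b)
    (hbε : b < s ε) : ∃ x ∈ Ico 0 ε, G b x = s x ∧ G b ε = s x := by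
  have hGε : G b ε < s ε := (L.descending_le H.right_mem b).trans_lt hbε
  obtain ⟨x, hx, hxe⟩ := intermediate_value_Icc H.pos.le
    (H.continuous.continuousOn.sub (L.isDescending b).continuousOn)
    (show (0 : ℝ) ∈ Icc _ _ from
      ⟨by simp only [Pi.sub_apply, H.map_zero, L.left_eq]; linarith, sub_nonneg.2 hGε.le⟩)
  have he : G b x = s x := (sub_eq_zero.1 hxe).symm
  have hlt : x < ε := hx.2.lt_of_ne fun h => (h ▸ hGε).ne he
  exact ⟨x, ⟨hx.1, hlt⟩, he, ((L.isDescending b).mono hx.1 le_rfl).eq_const (H.le_of_le hx.1) he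
    (right_mem_Icc.2 hlt.le)⟩

lemma ascending_eq_of_le (H : IncreasingFold s ε) (L : Leaves s 0 ε F G) (hx : x ∈ Icc 0 ε) :
    F (s x) x = s x :=
  ((L.isAscending _).mono hx.1 le_rfl).eq_const (H.le_of_le hx.1) (L.right_eq _)
    (left_mem_Icc.2 hx.2)

lemma exists_isCrossing (H : IncreasingFold s ε) (L : Leaves s 0 ε F G) (hδ : δ < s ε)
    (hF : ∀ α, 0 ≤ κ α → F (κ α) 0 = max α 0) (hG : ∀ b ≤ δ, κ (b - 1 - δ) = G b ε)
    (hu : u ∈ (nodeDomain δ).carrier) : ∃ x < ε, IsCrossing s 0 ε (F (κ u.1)) (G u.2) x := by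
  obtain ⟨z, hz, hzs, hzε⟩ := H.exists_descending_eq L hu.1 (hu.2.1.trans_lt hδ)
  have hz' := Ico_subset_Icc_self hz
  have hleft : F (κ u.1) 0 ≤ G u.2 0 := by
    rw [H.ascending_zero L hF hG hu, L.left_eq]
    exact max_le hu.2.2.2 hu.1
  have hright : G u.2 z ≤ F (κ u.1) z :=
    calc G u.2 z = F (s z) z := hzs.trans (H.ascending_eq_of_le L hz').symm
      _ ≤ F (κ u.1) z := L.monotone_ascending hz'
          (hzε ▸ descending_le_nodeIndex hG hu)
  obtain ⟨x, hx, hxe⟩ := intermediate_value_Icc hz.1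
    (((L.isAscending _).continuousOn.sub (L.isDescending u.2).continuousOn).mono
      (Icc_subset_Icc le_rfl hz.2.le))
    (show (0 : ℝ) ∈ Icc _ _ from ⟨sub_nonpos.2 hleft, sub_nonneg.2 hright⟩)
  have hx' : x ∈ Icc 0 ε := ⟨hx.1, hx.2.trans hz.2.le⟩
  refine ⟨x, hx.2.trans_lt hz.2, hx', sub_eq_zero.1 hxe, ?_⟩
  calc s x ≤ s z := H.le_of_le hx.1 z ⟨hx.2, hz.2.le⟩
    _ = G u.2 z := hzs.symm
    _ ≤ G u.2 x := (L.isDescending u.2).antitoneOn hx' hz' hx.2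

lemma eventually_exists_label (H : IncreasingFold s ε) (L : Leaves s 0 ε F G) (hδ : 0 < δ)
    (hF : ∀ α, 0 ≤ κ α → F (κ α) 0 = max α 0) (hG : ∀ b ≤ δ, κ (b - 1 - δ) = G b ε) :
    ∀ᶠ p in 𝓝[aboveFold s 0] 0, p.1 ∈ Ico 0 ε ∧
      ∃ u ∈ (nodeDomain δ).carrier, F (κ u.1) p.1 = p.2 ∧ G u.2 p.1 = p.2 := by
  filter_upwards [self_mem_nhdsWithin, eventually_between (f := fun _ => -1) ⟨le_rfl, H.pos⟩
    continuousOn_const (L.isDescending δ).continuousOn (by norm_num)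
    (by rwa [L.left_eq])] with p hp hbetween
  obtain ⟨hpx, -, hpG⟩ := hbetween
  have hpx' := Ico_subset_Icc_self hpx
  have hp₀ : 0 ≤ p.2 := (H.nonneg hpx').trans hp.2
  obtain ⟨a, ha : F a p.1 = p.2⟩ := L.surjective_ascending hpx' p.2
  obtain ⟨b, hb : G b p.1 = p.2⟩ := L.surjective_descending hpx' p.2
  have ha₀ : 0 ≤ a := by linarith [L.ascending_le hpx' a]
  have hb₀ : 0 ≤ b := by linarith [L.descending_le hpx' b]
  have hbδ : b ≤ δ := ((L.monotone_descending hpx').reflect_lt (hb.trans_lt hpG)).le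
  refine ⟨hpx, (κ.symm a, b), ⟨hb₀, hbδ, ?_, ?_⟩, by rw [κ.apply_symm_apply, ha], hb⟩
  · rw [κ.le_symm_apply, hG b hbδ]
    calc G b ε ≤ G b p.1 := (L.isDescending b).antitoneOn hpx' H.right_mem hpx.2.le
      _ = F a p.1 := hb.trans ha.symm
      _ ≤ a := L.ascending_le hpx' a
  · have hmax := hF (κ.symm a) (by rwa [κ.apply_symm_apply])
    rw [κ.apply_symm_apply] at hmax
    calc κ.symm a ≤ F a 0 := hmax ▸ le_max_left _ _
      _ ≤ F a p.1 := (L.isAscending a).monotoneOn H.left_mem hpx' hpx.1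
      _ = G b p.1 := ha.trans hb.symm
      _ ≤ b := L.descending_le hpx' b

lemma ascending_eq_iff_mem_axis (H : IncreasingFold s ε) (L : Leaves s 0 ε F G)
    (hF : ∀ α, 0 ≤ κ α → F (κ α) 0 = max α 0) (hG : ∀ b ≤ δ, κ (b - 1 - δ) = G b ε)
    (hu : u ∈ (nodeDomain δ).carrier) :
    (F (κ u.1) 0 = u.2 ∧ s 0 ≤ u.2) ↔ u ∈ (nodeDomain δ).axis := by
  rw [H.ascending_zero L hF hG hu, H.map_zero]
  change _ ↔ u.1 = u.2 ∨ u.2 = 0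
  have h₀ := hu.1
  have hle := hu.2.2.2
  constructor
  · rintro ⟨h, -⟩
    rcases max_choice u.1 0 with hmax | hmax
    · exact Or.inl (hmax.symm.trans h)
    · exact Or.inr (h.symm.trans hmax)
  · rintro (h | h)
    · exact ⟨by rw [h, max_eq_left h₀], h₀⟩
    · exact ⟨by rw [max_eq_right (h ▸ hle), h], h₀⟩

lemma descending_eq_iff_mem_fold (H : IncreasingFold s ε) (L : Leaves s 0 ε F G)
    (hG : ∀ b ≤ δ, κ (b - 1 - δ) = G b ε) (hu : u ∈ (nodeDomain δ).carrier) (hxε : x < ε)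
    (hx : IsCrossing s 0 ε (F (κ u.1)) (G u.2) x) :
    G u.2 x = s x ↔ u ∈ (nodeDomain δ).fold := by
  have hGx := (L.isDescending u.2).mono hx.mem_Icc.1 le_rfl
  constructor
  · intro he
    rcases hx.mem_Icc.1.eq_or_lt with rfl | hpos
    · right
      rwa [L.left_eq, H.map_zero] at he
    · left
      have hκ : κ u.1 = s x := (H.strictMono_ascending L ⟨hpos, hxε.le⟩).injective
        (hx.eq.trans (he.trans (H.ascending_eq_of_le L hx.mem_Icc).symm))
      have hGε := hGx.eq_const (H.le_of_le hpos.le) he (right_mem_Icc.2 hxε.le)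
      exact κ.injective (by rw [hκ, hG u.2 hu.2.1, hGε])
  · rintro (h | h)
    · have hκ : κ u.1 = G u.2 ε := by rw [← hG u.2 hu.2.1, h]
      refine le_antisymm ?_ hx.le
      exact hGx.le_of_left_le_right H.continuous hxε
        (by rw [← hx.eq, ← hκ]; exact L.ascending_le hx.mem_Icc _) x (left_mem_Icc.2 hxε.le)
    · have hzero := H.descending_zero L hx.mem_Icc
      have hle := hx.le
      rw [h, hzero] at hle ⊢
      exact le_antisymm (H.nonneg hx.mem_Icc) hle

lemma leafLabelling (H : IncreasingFold s ε) (L : Leaves s 0 ε F G) (hδ : 0 < δ)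
    (hδ₁ : δ ≤ 1) (hδs : δ < s ε) (hF : ∀ α, 0 ≤ κ α → F (κ α) 0 = max α 0)
    (hG : ∀ b ≤ δ, κ (b - 1 - δ) = G b ε) :
    LeafLabelling s 0 ε (nodeDomain δ) (fun α => F (κ α)) G where
  continuous := H.continuous
  injOn := H.strictMonoOn.injOn
  deriv_ne_zero x hx := (H.deriv_pos x hx).ne'
  map_zero := H.map_zero
  zero_mem_Ico := ⟨le_rfl, H.pos⟩
  isCompact := isCompact_carrier_nodeDomain δ
  zero_mem := ⟨le_rfl, hδ.le, by change (0 : ℝ) - 1 - δ ≤ 0; linarith, le_rfl⟩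
  isAscending α := L.isAscending _
  isDescending := L.isDescending
  left_eq := L.left_eq
  ascending_zero := by
    have hκ := κ.monotone (show 0 - 1 - δ ≤ 0 by linarith)
    rw [hG 0 hδ.le, H.descending_zero L H.right_mem] at hκ
    simpa using hF 0 hκ
  descending_zero := L.left_eq 0
  continuousOn_ascending := L.continuousOn_ascending.comp
    (f := fun p : ℝ × ℝ => (κ p.1, p.2)) (by have := κ.continuous; fun_prop)
    fun p hp => ⟨mem_univ _, hp.2⟩
  continuousOn_descending := L.continuousOn_descending
  sub_le_one u hu x hx := by linarith [hu.2.1, H.nonneg hx]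
  exists_isCrossing u hu := H.exists_isCrossing L hδs hF hG hu
  fst_eq_of_eq u _ v _ x hx h :=
    κ.injective ((H.strictMono_ascending L (Ioo_subset_Ioc_self hx)).injective h)
  snd_eq_of_eq u _ v _ x hx h :=
    (H.strictMono_descending L (Ico_subset_Icc_self hx)).injective h
  eventually_exists_label := H.eventually_exists_label L hδ hF hG
  mem_axis_iff u hu := H.ascending_eq_iff_mem_axis L hF hG hu
  mem_fold_iff u hu x hxε hx := H.descending_eq_iff_mem_fold L hG hu hxε hx
  eq_or_collapsed u _ v _ hu hv h := by
    by_cases h₀ : u.2 = 0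
    · exact Or.inr ⟨h₀, h.symm.trans h₀⟩
    · have hu' : u.1 = u.2 := hu.resolve_right h₀
      have hv' : v.1 = v.2 := hv.resolve_right (h ▸ h₀)
      exact Or.inl (Prod.ext (hu'.trans (h.trans hv'.symm)) h)
  collapsed u _ h := ⟨h, Or.inr h⟩

theorem eventually_exists_halfChart (H : IncreasingFold s ε) :
    ∀ᶠ δ in 𝓝[>] 0, ∃ pt, HalfChart s 0 (nodeDomain δ) pt := by
  obtain ⟨F, G, L⟩ := exists_leaves H.continuous H.pos
  filter_upwards [self_mem_nhdsWithin,
    (eventually_le_nhds (zero_lt_one (α := ℝ))).filter_mono nhdsWithin_le_nhds,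
    (eventually_lt_nhds H.right_value_pos).filter_mono nhdsWithin_le_nhds] with δ hδ hδ₁ hδs
  obtain ⟨κ, hF, hG⟩ := H.exists_nodeIndex L hδs
  exact ⟨_, (H.leafLabelling L hδ hδ₁ hδs hF hG).halfChart⟩

end IncreasingFold

/-! ### Solutions as graphs -/

section Inverse

variable {ξ : ℝ → ℝ} {a b M : ℝ}

lemma image_Ioo_eq_Ioo_of_strictMonoOn (hab : a < b) (hξ : ContinuousOn ξ (Ioo a b))
    (hmono : StrictMonoOn ξ (Ioo a b)) (hM : ∀ x ∈ Ioo a b, |ξ x| ≤ M) :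
    ξ '' Ioo a b = Ioo (sInf (ξ '' Ioo a b)) (sSup (ξ '' Ioo a b)) := by
  have hne : (ξ '' Ioo a b).Nonempty := (nonempty_Ioo.2 hab).image ξ
  have hbdd : Bornology.IsBounded (ξ '' Ioo a b) :=
    (Metric.isBounded_Icc (-M) M).subset <| image_subset_iff.2 fun x hx => abs_le.1 (hM x hx)
  apply Subset.antisymm
  · rintro _ ⟨x, hx, rfl⟩
    obtain ⟨w, haw, hwx⟩ := exists_between hx.1
    obtain ⟨v, hxv, hvb⟩ := exists_between hx.2
    have hw : w ∈ Ioo a b := ⟨haw, hwx.trans hx.2⟩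
    have hv : v ∈ Ioo a b := ⟨hx.1.trans hxv, hvb⟩
    exact ⟨(csInf_le hbdd.bddBelow (mem_image_of_mem ξ hw)).trans_lt (hmono hw hx hwx),
      (hmono hx hv hxv).trans_le (le_csSup hbdd.bddAbove (mem_image_of_mem ξ hv))⟩
  · intro t ht
    obtain ⟨p, hp, hpt⟩ := exists_lt_of_csInf_lt hne ht.1
    obtain ⟨q, hq, htq⟩ := exists_lt_of_lt_csSup hne ht.2
    exact (isPreconnected_Ioo.image ξ hξ).ordConnected.out hp hq ⟨hpt.le, htq.le⟩

lemma continuousOn_of_strictMonoOn_of_invOn {g : ℝ → ℝ} {a' b' : ℝ}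
    (hmono : StrictMonoOn ξ (Ioo a b)) (hmaps : MapsTo ξ (Ioo a b) (Ioo a' b'))
    (gmaps : MapsTo g (Ioo a' b') (Ioo a b)) (hinv : InvOn g ξ (Ioo a b) (Ioo a' b')) :
    ContinuousOn g (Ioo a' b') := by
  have gmono : StrictMonoOn g (Ioo a' b') := fun u hu v hv huv => by
    rwa [← hmono.lt_iff_lt (gmaps hu) (gmaps hv), hinv.2 hu, hinv.2 hv]
  intro u hu
  refine (gmono.continuousAt_of_image_mem_nhds (Ioo_mem_nhds hu.1 hu.2) ?_).continuousWithinAt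
  exact mem_of_superset (Ioo_mem_nhds (gmaps hu).1 (gmaps hu).2)
    fun x hx => ⟨ξ x, hmaps hx, hinv.1 hx⟩

lemma exists_continuousOn_invOn_of_strictMonoOn (hab : a < b) (hξ : ContinuousOn ξ (Ioo a b))
    (hmono : StrictMonoOn ξ (Ioo a b)) (hM : ∀ x ∈ Ioo a b, |ξ x| ≤ M) :
    ∃ (a' b' : ℝ) (g : ℝ → ℝ), ContinuousOn g (Ioo a' b') ∧ MapsTo ξ (Ioo a b) (Ioo a' b') ∧
      MapsTo g (Ioo a' b') (Ioo a b) ∧ InvOn g ξ (Ioo a b) (Ioo a' b') := by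
  have himage := image_Ioo_eq_Ioo_of_strictMonoOn hab hξ hmono hM
  set a' := sInf (ξ '' Ioo a b)
  set b' := sSup (ξ '' Ioo a b)
  have hmaps : MapsTo ξ (Ioo a b) (Ioo a' b') := himage ▸ mapsTo_image ξ _
  have hsurj : SurjOn ξ (Ioo a b) (Ioo a' b') := himage.ge
  have hinv : InvOn (Function.invFunOn ξ (Ioo a b)) ξ (Ioo a b) (Ioo a' b') :=
    (BijOn.mk hmaps hmono.injOn hsurj).invOn_invFunOn
  exact ⟨a', b', _, continuousOn_of_strictMonoOn_of_invOn hmono hmaps hsurj.mapsTo_invFunOn hinv,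
    hmaps, hsurj.mapsTo_invFunOn, hinv⟩

lemma exists_continuousOn_invOn_of_injOn (hξ : ContinuousOn ξ (Ioo a b))
    (hinj : InjOn ξ (Ioo a b)) (hM : ∀ x ∈ Ioo a b, |ξ x| ≤ M) :
    ∃ (a' b' : ℝ) (g : ℝ → ℝ), ContinuousOn g (Ioo a' b') ∧ MapsTo ξ (Ioo a b) (Ioo a' b') ∧
      MapsTo g (Ioo a' b') (Ioo a b) ∧ InvOn g ξ (Ioo a b) (Ioo a' b') := by
  rcases le_or_gt b a with hab | hab
  · exact ⟨0, 0, id, by simp, by simp [hab], by simp [mapsTo_empty],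
      by simp [InvOn, LeftInvOn, hab]⟩
  rcases hξ.strictMonoOn_of_injOn_Ioo hab hinj with hmono | hanti
  · exact exists_continuousOn_invOn_of_strictMonoOn hab hξ hmono hM
  · obtain ⟨a', b', g, hg, hmaps, gmaps, hinv⟩ :=
      exists_continuousOn_invOn_of_strictMonoOn (ξ := fun x => -ξ x) hab hξ.neg
        (fun x hx y hy hxy => neg_lt_neg (hanti hx hy hxy))
        (fun x hx => (abs_neg (ξ x)).trans_le (hM x hx))
    have hneg : MapsTo Neg.neg (Ioo (-b') (-a')) (Ioo a' b') := fun u hu =>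
      ⟨lt_neg.1 hu.2, neg_lt.1 hu.1⟩
    refine ⟨-b', -a', g ∘ Neg.neg, hg.comp continuous_neg.continuousOn hneg, fun x hx => ?_,
      gmaps.comp hneg, fun x hx => hinv.1 hx, fun u hu => neg_injective (hinv.2 (hneg hu))⟩
    exact ⟨neg_lt.1 (hmaps hx).2, lt_neg.1 (hmaps hx).1⟩

end Inverse

lemma hasDerivAt_of_forall_mem_Ioo_ne {y z : ℝ → ℝ} {a b p : ℝ} (hp : p ∈ Ioo a b)
    (hy : ContinuousAt y p) (hz : ContinuousAt z p)
    (hderiv : ∀ x ∈ Ioo a b, x ≠ p → HasDerivAt y (z x) x) : HasDerivAt y (z p) p := by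
  have hright : HasDerivWithinAt y (z p) (Ici p) p := by
    have hd : ∀ x ∈ Ioo p b, HasDerivAt y (z x) x := fun x hx =>
      hderiv x ⟨hp.1.trans hx.1, hx.2⟩ hx.1.ne'
    refine hasDerivWithinAt_Ici_of_tendsto_deriv (s := Ioo p b)
      (fun x hx => (hd x hx).differentiableAt.differentiableWithinAt) hy.continuousWithinAt
      (Ioo_mem_nhdsGT hp.2) ((hz.tendsto.mono_left nhdsWithin_le_nhds).congr' ?_)
    filter_upwards [Ioo_mem_nhdsGT hp.2] with x hx using (hd x hx).deriv.symm
  have hleft : HasDerivWithinAt y (z p) (Iic p) p := by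
    have hd : ∀ x ∈ Ioo a p, HasDerivAt y (z x) x := fun x hx =>
      hderiv x ⟨hx.1, hx.2.trans hp.2⟩ hx.2.ne
    refine hasDerivWithinAt_Iic_of_tendsto_deriv (s := Ioo a p)
      (fun x hx => (hd x hx).differentiableAt.differentiableWithinAt) hy.continuousWithinAt
      (Ioo_mem_nhdsLT hp.1) ((hz.tendsto.mono_left nhdsWithin_le_nhds).congr' ?_)
    filter_upwards [Ioo_mem_nhdsLT hp.1] with x hx using (hd x hx).deriv.symm
  simpa only [Iic_union_Ici, hasDerivWithinAt_univ] using hleft.union hright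

/-- `y` solves `(y')² = y - s x` on `(a, b)` with continuous slope `y' = z`. Its graph is an
integral curve of `dy² = (y - s x) dx²`, which may touch the fold and change branch there. -/
structure IsSolution (s : ℝ → ℝ) (a b : ℝ) (y z : ℝ → ℝ) : Prop where
  continuousOn_slope : ContinuousOn z (Ioo a b)
  hasDerivAt : ∀ x ∈ Ioo a b, HasDerivAt y (z x) x
  sq_slope : ∀ x ∈ Ioo a b, z x ^ 2 = y x - s x

/-- The graph of `y` over the open interval `(a, b)`. -/
def graphIoo (a b : ℝ) (y : ℝ → ℝ) : Set (ℝ × ℝ) := (fun x => (x, y x)) '' Ioo a b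

namespace IsSolution

variable {s y z : ℝ → ℝ} {a b x : ℝ}

lemma continuousOn (h : IsSolution s a b y z) : ContinuousOn y (Ioo a b) :=
  fun x hx => (h.hasDerivAt x hx).continuousAt.continuousWithinAt

lemma mono (h : IsSolution s a b y z) {a' b' : ℝ} (hsub : Ioo a' b' ⊆ Ioo a b) :
    IsSolution s a' b' y z where
  continuousOn_slope := h.continuousOn_slope.mono hsub
  hasDerivAt x hx := h.hasDerivAt x (hsub hx)
  sq_slope x hx := h.sq_slope x (hsub hx)

lemma reflect (h : IsSolution s a b y z) :
    IsSolution (reflect s) (-b) (-a) (reflect y) (fun x => -z (-x)) := by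
  have hneg : ∀ x ∈ Ioo (-b) (-a), -x ∈ Ioo a b := fun x hx => ⟨lt_neg.1 hx.2, neg_lt.1 hx.1⟩
  refine ⟨(h.continuousOn_slope.comp continuous_neg.continuousOn hneg).neg, fun x hx => ?_,
    fun x hx => by simpa using h.sq_slope (-x) (hneg x hx)⟩
  rw [← mul_neg_one]
  exact (h.hasDerivAt (-x) (hneg x hx)).comp x (hasDerivAt_neg x)

-- Where `z` vanishes, `y - s = z²` has a minimum, so `s` has the derivative of `y`, namely `0`.
lemma slope_ne_zero (h : IsSolution s a b y z) (hx : x ∈ Ioo a b) (hs : deriv s x ≠ 0) :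
    z x ≠ 0 := by
  intro hzero
  have hmin : IsLocalMin (fun t => y t - s t) x := by
    filter_upwards [Ioo_mem_nhds hx.1 hx.2] with t ht
    rw [← h.sq_slope x hx, ← h.sq_slope t ht, hzero, sq, zero_mul]
    exact sq_nonneg _
  have hderiv := (h.hasDerivAt x hx).sub (differentiableAt_of_deriv_ne_zero hs).hasDerivAt
  have := hmin.hasDerivAt_eq_zero hderiv
  exact hs (by linarith)

lemma slope_pos_or_neg (h : IsSolution s a b y z) (hs : ∀ x ∈ Ioo a b, deriv s x ≠ 0) :
    (∀ x ∈ Ioo a b, 0 < z x) ∨ ∀ x ∈ Ioo a b, z x < 0 := by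
  by_contra! hcon
  obtain ⟨⟨x, hx, hzx⟩, w, hw, hzw⟩ := hcon
  have himage := (isPreconnected_Ioo.image z h.continuousOn_slope).ordConnected
  obtain ⟨t, ht, hzt⟩ := himage.out (mem_image_of_mem z hx) (mem_image_of_mem z hw) ⟨hzx, hzw⟩
  exact h.slope_ne_zero ht (hs t ht) hzt

lemma hasDerivAt_sqrt (h : IsSolution s a b y z) (hx : x ∈ Ioo a b) (hz : 0 ≤ z x) :
    HasDerivAt y (√(y x - s x)) x := by
  rw [← h.sq_slope x hx, Real.sqrt_sq hz]
  exact h.hasDerivAt x hx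

lemma hasDerivAt_neg_sqrt (h : IsSolution s a b y z) (hx : x ∈ Ioo a b) (hz : z x ≤ 0) :
    HasDerivAt y (-√(y x - s x)) x := by
  rw [← h.sq_slope x hx, Real.sqrt_sq_eq_abs, abs_of_nonpos hz, neg_neg]
  exact h.hasDerivAt x hx

end IsSolution

/-- Over `S`, the curve `(ξ, η)` runs on the graph of a single function, whose slope at `ξ x`
is `ζ x`. -/
def LiesOnGraph (S : Set ℝ) (ξ η ζ : ℝ → ℝ) : Prop :=
  ∃ f : ℝ → ℝ, ∀ x ∈ S, η x = f (ξ x) ∧ HasDerivAt f (ζ x) (ξ x)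

lemma LiesOnGraph.hasDerivAt_comp {S : Set ℝ} {ξ η ζ g : ℝ → ℝ} {a b t : ℝ}
    (h : LiesOnGraph S ξ η ζ) (hS : S ∈ 𝓝 (g t)) (hg : ContinuousAt g t) (ht : t ∈ Ioo a b)
    (hinv : RightInvOn g ξ (Ioo a b)) : HasDerivAt (η ∘ g) (ζ (g t)) t := by
  obtain ⟨f, hf⟩ := h
  have hderiv := (hf (g t) (mem_of_mem_nhds hS)).2
  rw [hinv ht] at hderiv
  refine hderiv.congr_of_eventuallyEq ?_
  filter_upwards [hg.eventually hS, Ioo_mem_nhds ht.1 ht.2] with w hw hwab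
  rw [Function.comp_apply, (hf (g w) hw).1, hinv hwab]

lemma exists_isSolution_of_liesOnGraph {s ξ η ζ : ℝ → ℝ} {a b e M : ℝ}
    (hξ : ContinuousOn ξ (Ioo a b)) (hη : ContinuousOn η (Ioo a b)) (hζ : ContinuousOn ζ (Ioo a b))
    (hinj : InjOn ξ (Ioo a b)) (hM : ∀ x ∈ Ioo a b, |ξ x| ≤ M)
    (hsq : ∀ x ∈ Ioo a b, ζ x ^ 2 = η x - s (ξ x))
    (hleft : LiesOnGraph (Ioo a b ∩ Iio e) ξ η ζ) (hright : LiesOnGraph (Ioo a b ∩ Ioi e) ξ η ζ) :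
    ∃ a' b' y z, IsSolution s a' b' y z ∧ (fun x => (ξ x, η x)) '' Ioo a b = graphIoo a' b' y := by
  obtain ⟨a', b', g, hg, hmaps, gmaps, hinv⟩ := exists_continuousOn_invOn_of_injOn hξ hinj hM
  have hcont : ∀ t ∈ Ioo a' b', ContinuousAt g t := fun t ht =>
    hg.continuousAt (Ioo_mem_nhds ht.1 ht.2)
  have hderiv : ∀ t ∈ Ioo a' b', g t ≠ e → HasDerivAt (η ∘ g) (ζ (g t)) t := by
    intro t ht hne
    have hnhds := Ioo_mem_nhds (gmaps ht).1 (gmaps ht).2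
    rcases hne.lt_or_gt with hlt | hgt
    · exact hleft.hasDerivAt_comp (inter_mem hnhds (Iio_mem_nhds hlt)) (hcont t ht) ht hinv.2
    · exact hright.hasDerivAt_comp (inter_mem hnhds (Ioi_mem_nhds hgt)) (hcont t ht) ht hinv.2
  have hηg := hη.comp hg gmaps
  have hζg := hζ.comp hg gmaps
  refine ⟨a', b', η ∘ g, ζ ∘ g, ⟨hζg, fun t ht => ?_, fun t ht => ?_⟩, ?_⟩
  · by_cases hte : g t = e
    · have hnhds := Ioo_mem_nhds ht.1 ht.2
      refine hasDerivAt_of_forall_mem_Ioo_ne ht (hηg.continuousAt hnhds) (hζg.continuousAt hnhds)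
        fun w hw hwt => hderiv w hw fun hwe => hwt ?_
      rw [← hinv.2 hw, ← hinv.2 ht, hwe, hte]
    · exact hderiv t ht hte
  · simpa only [Function.comp_apply, hinv.2 ht] using hsq (g t) (gmaps ht)
  · apply Subset.antisymm
    · rintro _ ⟨x, hx, rfl⟩
      exact ⟨ξ x, hmaps hx, by simp [hinv.1 hx]⟩
    · rintro _ ⟨t, ht, rfl⟩
      exact ⟨g t, gmaps ht, by simp [hinv.2 ht]⟩

/-! ### Transfer between charts -/

lemma continuousOn_sign_mul {X : Type*} [TopologicalSpace X] {S : Set X} {z Q : X → ℝ}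
    (hz : ContinuousOn z S) (hQ : ContinuousOn Q S) (hzero : ∀ x ∈ S, z x = 0 → Q x = 0) :
    ContinuousOn (fun x => Real.sign (z x) * Q x) S := by
  intro x hx
  rcases lt_trichotomy (z x) 0 with hneg | heq | hpos
  · refine (hQ x hx).neg.congr_of_eventuallyEq ?_ (by simp [Real.sign_of_neg hneg])
    filter_upwards [(hz x hx).eventually (gt_mem_nhds hneg)] with t ht
    simp [Real.sign_of_neg ht]
  · have habs : Tendsto (fun t => |Q t|) (𝓝[S] x) (𝓝 0) := by
      simpa [hzero x hx heq] using (hQ x hx).abs.tendsto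
    rw [ContinuousWithinAt, hzero x hx heq, mul_zero]
    refine squeeze_zero_norm (fun t => ?_) habs
    rcases Real.sign_apply_eq (z t) with h | h | h <;> simp [h]
  · refine (hQ x hx).congr_of_eventuallyEq ?_ (by simp [Real.sign_of_pos hpos])
    filter_upwards [(hz x hx).eventually (lt_mem_nhds hpos)] with t ht
    simp [Real.sign_of_pos ht]

lemma sign_mul_sq {z Q : ℝ} (hzero : z = 0 → Q = 0) : (Real.sign z * Q) ^ 2 = Q ^ 2 := by
  by_cases hz : z = 0
  · simp [hzero hz]
  · rcases Real.sign_apply_eq_of_ne_zero z hz with h | h <;> simp [h]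

/-- The slope at `γ x` of the branch of `dy² = (y - s x) dx²` whose sign is that of `z x`. -/
def branchSlope (s z : ℝ → ℝ) (γ : ℝ → ℝ × ℝ) (x : ℝ) : ℝ :=
  Real.sign (z x) * √((γ x).2 - s (γ x).1)

namespace LiesOnGraph

variable {S : Set ℝ} {ξ η ζ ξ' η' ζ' : ℝ → ℝ}

lemma congr (h : LiesOnGraph S ξ η ζ) (hξ : EqOn ξ' ξ S) (hη : EqOn η' η S) (hζ : EqOn ζ' ζ S) :
    LiesOnGraph S ξ' η' ζ' := by
  obtain ⟨f, hf⟩ := h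
  refine ⟨f, fun x hx => ?_⟩
  rw [hξ hx, hη hx, hζ hx]
  exact hf x hx

lemma reflect (h : LiesOnGraph S ξ η ζ) :
    LiesOnGraph (Neg.neg ⁻¹' S) (fun x => -ξ (-x)) (fun x => η (-x)) (fun x => -ζ (-x)) := by
  obtain ⟨f, hf⟩ := h
  refine ⟨FoldedBDE.reflect f, fun x hx => ⟨by simpa using (hf (-x) hx).1, ?_⟩⟩
  have hderiv := (hf (-x) hx).2
  rw [← neg_neg (ξ (-x))] at hderiv
  change HasDerivAt _ (-ζ (-x)) (-ξ (-x))
  rw [← mul_neg_one]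
  exact hderiv.comp _ (hasDerivAt_neg _)

lemma injOn {γ : ℝ → ℝ × ℝ} (h : LiesOnGraph S (fun x => (γ x).1) (fun x => (γ x).2) ζ)
    (hγ : InjOn γ S) : InjOn (fun x => (γ x).1) S := by
  obtain ⟨f, hf⟩ := h
  intro x hx w hw hxw
  exact hγ hx hw (Prod.ext hxw (((hf x hx).1.trans (congrArg f hxw)).trans (hf w hw).1.symm))

end LiesOnGraph

lemma injOn_of_injOn_Iio_of_injOn_Ioi {S : Set ℝ} {ξ : ℝ → ℝ} {e ε : ℝ}
    (hleft : InjOn ξ (S ∩ Iio e)) (hright : InjOn ξ (S ∩ Ioi e))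
    (hlt : ∀ x ∈ S, ξ x < ε ↔ x < e) (hgt : ∀ x ∈ S, ε < ξ x ↔ e < x) : InjOn ξ S := by
  intro x hx w hw hxw
  have hlt_iff : x < e ↔ w < e := by rw [← hlt x hx, hxw, hlt w hw]
  have hgt_iff : e < x ↔ e < w := by rw [← hgt x hx, hxw, hgt w hw]
  rcases lt_trichotomy x e with hxe | rfl | hxe
  · exact hleft ⟨hx, hxe⟩ ⟨hw, hlt_iff.1 hxe⟩ hxw
  · exact le_antisymm (not_lt.1 (hlt_iff.not.1 (lt_irrefl x)))
      (not_lt.1 (hgt_iff.not.1 (lt_irrefl x)))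
  · exact hright ⟨hx, hxe⟩ ⟨hw, hgt_iff.1 hxe⟩ hxw

lemma exists_isSolution_image {s z : ℝ → ℝ} {γ : ℝ → ℝ × ℝ} {a b e ε M : ℝ} (hs : Continuous s)
    (hγ : ContinuousOn γ (Ioo a b)) (hz : ContinuousOn z (Ioo a b)) (hinj : InjOn γ (Ioo a b))
    (hM : ∀ x ∈ Ioo a b, |(γ x).1| ≤ M) (hle : ∀ x ∈ Ioo a b, s (γ x).1 ≤ (γ x).2)
    (hfold : ∀ x ∈ Ioo a b, z x = 0 → (γ x).2 = s (γ x).1)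
    (hlt : ∀ x ∈ Ioo a b, (γ x).1 < ε ↔ x < e) (hgt : ∀ x ∈ Ioo a b, ε < (γ x).1 ↔ e < x)
    (hleft : LiesOnGraph (Ioo a b ∩ Iio e) (fun x => (γ x).1) (fun x => (γ x).2)
      (branchSlope s z γ))
    (hright : LiesOnGraph (Ioo a b ∩ Ioi e) (fun x => (γ x).1) (fun x => (γ x).2)
      (branchSlope s z γ)) :
    ∃ a' b' y' z', IsSolution s a' b' y' z' ∧ γ '' Ioo a b = graphIoo a' b' y' := by
  have hξ : ContinuousOn (fun x => (γ x).1) (Ioo a b) := hγ.fst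
  have hη : ContinuousOn (fun x => (γ x).2) (Ioo a b) := hγ.snd
  have hzero : ∀ x ∈ Ioo a b, z x = 0 → √((γ x).2 - s (γ x).1) = 0 := fun x hx h => by
    rw [hfold x hx h, sub_self, Real.sqrt_zero]
  refine exists_isSolution_of_liesOnGraph (ζ := branchSlope s z γ) hξ hη
    (continuousOn_sign_mul hz (hη.sub (hs.comp_continuousOn hξ)).sqrt hzero) ?_ hM
    (fun x hx => ?_) hleft hright
  · exact injOn_of_injOn_Iio_of_injOn_Ioi (hleft.injOn (hinj.mono inter_subset_left))
      (hright.injOn (hinj.mono inter_subset_left)) hlt hgt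
  · rw [branchSlope, sign_mul_sq (hzero x hx), Real.sq_sqrt (sub_nonneg.2 (hle x hx))]

/-- The change of charts `pt' ∘ pt⁻¹`, well defined on `pt '' T.carrier` when both `pt` and `pt'`
are charts with label domain `T`. -/
def transfer (T : LabelDomain) (pt pt' : ℝ × ℝ → ℝ × ℝ) (p : ℝ × ℝ) : ℝ × ℝ :=
  pt' (Function.invFunOn pt T.carrier p)

namespace HalfChart

variable {s s' y z : ℝ → ℝ} {c c' a b : ℝ} {T : LabelDomain} {pt pt' : ℝ × ℝ → ℝ × ℝ}
  {u p : ℝ × ℝ}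

lemma le_snd_of_mem_image (H : HalfChart s c T pt) (hp : p ∈ pt '' T.carrier) : s p.1 ≤ p.2 := by
  obtain ⟨u, hu, rfl⟩ := hp
  exact H.le_snd u hu

lemma exists_abs_fst_le (H : HalfChart s c T pt) : ∃ M, ∀ p ∈ pt '' T.carrier, |p.1| ≤ M :=
  (H.isCompact.image_of_continuousOn H.continuousOn).exists_bound_of_continuousOn
    continuous_fst.continuousOn

lemma transfer_apply (H : HalfChart s c T pt) (H' : HalfChart s' c' T pt') (hu : u ∈ T.carrier) :
    transfer T pt pt' (pt u) = pt' u := by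
  have hmem : pt u ∈ pt '' T.carrier := mem_image_of_mem pt hu
  have hinv := Function.invFunOn_mem hmem
  rw [transfer, H'.eq_iff _ hinv u hu, ← H.eq_iff _ hinv u hu, Function.invFunOn_eq hmem]

lemma continuousOn_transfer (H : HalfChart s c T pt) (H' : HalfChart s' c' T pt') :
    ContinuousOn (transfer T pt pt') (pt '' T.carrier) :=
  continuousOn_image_of_comp_eq H.isCompact H.continuousOn H'.continuousOn
    fun _ hu => H.transfer_apply H' hu

lemma mapsTo_transfer (H : HalfChart s c T pt) (H' : HalfChart s' c' T pt') :
    MapsTo (transfer T pt pt') (pt '' T.carrier) (pt' '' T.carrier) := by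
  rintro _ ⟨u, hu, rfl⟩
  exact ⟨u, hu, (H.transfer_apply H' hu).symm⟩

lemma leftInvOn_transfer (H : HalfChart s c T pt) (H' : HalfChart s' c' T pt') :
    LeftInvOn (transfer T pt' pt) (transfer T pt pt') (pt '' T.carrier) := by
  rintro _ ⟨u, hu, rfl⟩
  rw [H.transfer_apply H' hu, H'.transfer_apply H hu]

lemma transfer_zero (H : HalfChart s c T pt) (H' : HalfChart s' c' T pt') :
    transfer T pt pt' 0 = 0 := by
  simpa only [H.map_zero, H'.map_zero] using H.transfer_apply H' H.zero_mem

lemma transfer_snd_eq (H : HalfChart s c T pt) (H' : HalfChart s' c' T pt')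
    (hp : p ∈ pt '' T.carrier) (hfold : p.2 = s p.1) :
    (transfer T pt pt' p).2 = s' (transfer T pt pt' p).1 := by
  obtain ⟨u, hu, rfl⟩ := hp
  rw [H.transfer_apply H' hu, H'.snd_eq_iff u hu, ← H.snd_eq_iff u hu, hfold]

lemma le_transfer_fst (H : HalfChart s c T pt) (H' : HalfChart s' c' T pt')
    (hp : p ∈ pt '' T.carrier) : c' ≤ (transfer T pt pt' p).1 := by
  obtain ⟨u, hu, rfl⟩ := hp
  rw [H.transfer_apply H' hu]
  exact H'.le_fst u hu

lemma lt_transfer_fst_iff (H : HalfChart s c T pt) (H' : HalfChart s' c' T pt')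
    (hp : p ∈ pt '' T.carrier) : c' < (transfer T pt pt' p).1 ↔ c < p.1 := by
  obtain ⟨u, hu, rfl⟩ := hp
  rw [H.transfer_apply H' hu, (H.le_fst u hu).lt_iff_ne', (H'.le_fst u hu).lt_iff_ne', Ne, Ne,
    H.fst_eq_iff u hu, H'.fst_eq_iff u hu]

section Leaf

variable {S : Set ℝ} {γ : ℝ → ℝ × ℝ}

lemma liesOnGraph_of_fst_eq (H : HalfChart s c T pt) {ℓ : ℝ → ℝ × ℝ} {α : ℝ}
    (hℓ : ∀ x ∈ S, ℓ x ∈ T.carrier ∧ (ℓ x).1 = α ∧ pt (ℓ x) = γ x) (hc : ∀ x ∈ S, c < (γ x).1)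
    (hz : ∀ x ∈ S, 0 < z x) :
    LiesOnGraph S (fun x => (γ x).1) (fun x => (γ x).2) (branchSlope s z γ) := by
  obtain ⟨f, hf⟩ := H.exists_ascending α
  refine ⟨f, fun x hx => ?_⟩
  obtain ⟨hmem, hlabel, hpt⟩ := hℓ x hx
  have := hf (ℓ x) hmem hlabel
  rw [hpt] at this
  rw [branchSlope, Real.sign_of_pos (hz x hx), one_mul]
  exact ⟨this.1, this.2 (hc x hx)⟩

lemma liesOnGraph_of_snd_eq (H : HalfChart s c T pt) {ℓ : ℝ → ℝ × ℝ} {β : ℝ}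
    (hℓ : ∀ x ∈ S, ℓ x ∈ T.carrier ∧ (ℓ x).2 = β ∧ pt (ℓ x) = γ x) (hc : ∀ x ∈ S, c < (γ x).1)
    (hz : ∀ x ∈ S, z x < 0) :
    LiesOnGraph S (fun x => (γ x).1) (fun x => (γ x).2) (branchSlope s z γ) := by
  obtain ⟨f, hf⟩ := H.exists_descending β
  refine ⟨f, fun x hx => ?_⟩
  obtain ⟨hmem, hlabel, hpt⟩ := hℓ x hx
  have := hf (ℓ x) hmem hlabel
  rw [hpt] at this
  rw [branchSlope, Real.sign_of_neg (hz x hx), neg_one_mul]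
  exact ⟨this.1, this.2 (hc x hx)⟩

end Leaf

lemma liesOnGraph_transfer_of_le (H : HalfChart s c T pt) (H' : HalfChart s' c' T pt')
    (h : IsSolution s a b y z) (hca : c ≤ a) (hmem : ∀ x ∈ Ioo a b, (x, y x) ∈ pt '' T.carrier) :
    LiesOnGraph (Ioo a b) (fun x => (transfer T pt pt' (x, y x)).1)
      (fun x => (transfer T pt pt' (x, y x)).2)
      (branchSlope s' z fun x => transfer T pt pt' (x, y x)) := by
  rcases (Ioo a b).eq_empty_or_nonempty with hempty | ⟨x₀, hx₀⟩
  · exact ⟨id, by simp [hempty]⟩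
  choose! ℓ hℓ hpt using hmem
  have himage : ∀ x ∈ Ioo a b, (x, y x) ∈ pt '' T.carrier := fun x hx => ⟨ℓ x, hℓ x hx, hpt x hx⟩
  have hfst : ∀ x ∈ Ioo a b, (pt (ℓ x)).1 ∈ Ioo a b := fun x hx => by rwa [hpt x hx]
  have hsnd : ∀ x ∈ Ioo a b, (pt (ℓ x)).2 = y (pt (ℓ x)).1 := fun x hx => by rw [hpt x hx]
  have hpt' : ∀ x ∈ Ioo a b, pt' (ℓ x) = transfer T pt pt' (x, y x) := fun x hx => by
    rw [← hpt x hx, H.transfer_apply H' (hℓ x hx)]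
  have hc' : ∀ x ∈ Ioo a b, c' < (transfer T pt pt' (x, y x)).1 := fun x hx =>
    (H.lt_transfer_fst_iff H' (himage x hx)).2 (hca.trans_lt hx.1)
  have hderiv : ∀ x ∈ Ioo a b, deriv s x ≠ 0 := fun x hx => by
    have hne := H.deriv_ne_zero (ℓ x) (hℓ x hx)
    rw [hpt x hx] at hne
    exact hne (hca.trans_lt hx.1)
  rcases h.slope_pos_or_neg hderiv with hpos | hneg
  · have hasc := fun x hx => And.intro (himage x hx) (h.hasDerivAt_sqrt hx (hpos x hx).le)
    exact H'.liesOnGraph_of_fst_eq (ℓ := ℓ) (fun x hx => ⟨hℓ x hx, H.fst_eq_of_ascending a b y hca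
      hasc _ (hℓ x hx) _ (hℓ x₀ hx₀) (hfst x hx) (hfst x₀ hx₀) (hsnd x hx) (hsnd x₀ hx₀),
      hpt' x hx⟩) hc' hpos
  · have hdesc := fun x hx => And.intro (himage x hx) (h.hasDerivAt_neg_sqrt hx (hneg x hx).le)
    exact H'.liesOnGraph_of_snd_eq (ℓ := ℓ) (fun x hx => ⟨hℓ x hx, H.snd_eq_of_descending a b y hca
      hdesc _ (hℓ x hx) _ (hℓ x₀ hx₀) (hfst x hx) (hfst x₀ hx₀) (hsnd x hx) (hsnd x₀ hx₀),
      hpt' x hx⟩) hc' hneg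

lemma liesOnGraph_transfer (H : HalfChart s c T pt) (H' : HalfChart s' c' T pt')
    (h : IsSolution s a b y z) (hmem : ∀ x ∈ Ioo a b ∩ Ioi c, (x, y x) ∈ pt '' T.carrier) :
    LiesOnGraph (Ioo a b ∩ Ioi c) (fun x => (transfer T pt pt' (x, y x)).1)
      (fun x => (transfer T pt pt' (x, y x)).2)
      (branchSlope s' z fun x => transfer T pt pt' (x, y x)) := by
  rw [Ioo_inter_Ioi] at hmem ⊢
  exact H.liesOnGraph_transfer_of_le H' (h.mono (Ioo_subset_Ioo_left (le_max_left a c)))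
    (le_max_right a c) hmem

end HalfChart

/-- `h` maps the neighbourhood `C` of the origin in `{s x ≤ y}` continuously to `C'`, taking the
fold and the solutions of `dy² = (y - s x) dx²` to the fold and the solutions for `s'`. -/
structure IsSolutionMap (s s' : ℝ → ℝ) (C C' : Set (ℝ × ℝ)) (h : ℝ × ℝ → ℝ × ℝ) : Prop where
  continuousOn : ContinuousOn h C
  mapsTo : MapsTo h C C'
  le_snd : ∀ p ∈ C, s p.1 ≤ p.2
  snd_eq : ∀ p ∈ C, p.2 = s p.1 → (h p).2 = s' (h p).1
  map_zero : h 0 = 0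
  mem_nhdsWithin : C ∈ 𝓝[{p | s p.1 ≤ p.2}] 0
  exists_abs_fst_le : ∃ M, ∀ p ∈ C, |p.1| ≤ M
  image_graphIoo : ∀ a b y z, IsSolution s a b y z → graphIoo a b y ⊆ C →
    ∃ a' b' y' z', IsSolution s' a' b' y' z' ∧ h '' graphIoo a b y = graphIoo a' b' y'

lemma exists_isSolution_image_graphIoo {s s' y z : ℝ → ℝ} {C C' : Set (ℝ × ℝ)}
    {h : ℝ × ℝ → ℝ × ℝ} {a b e ε M : ℝ} (hs' : Continuous s') (hh : ContinuousOn h C)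
    (hmaps : MapsTo h C C') (hinj : InjOn h C) (hM : ∀ p ∈ C', |p.1| ≤ M)
    (hle : ∀ p ∈ C', s' p.1 ≤ p.2) (hfold : ∀ p ∈ C, p.2 = s p.1 → (h p).2 = s' (h p).1)
    (hlt : ∀ p ∈ C, (h p).1 < ε ↔ p.1 < e) (hgt : ∀ p ∈ C, ε < (h p).1 ↔ e < p.1)
    (hy : IsSolution s a b y z) (hC : ∀ x ∈ Ioo a b, (x, y x) ∈ C)
    (hleft : LiesOnGraph (Ioo a b ∩ Iio e) (fun x => (h (x, y x)).1) (fun x => (h (x, y x)).2)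
      (branchSlope s' z fun x => h (x, y x)))
    (hright : LiesOnGraph (Ioo a b ∩ Ioi e) (fun x => (h (x, y x)).1) (fun x => (h (x, y x)).2)
      (branchSlope s' z fun x => h (x, y x))) :
    ∃ a' b' y' z', IsSolution s' a' b' y' z' ∧ h '' graphIoo a b y = graphIoo a' b' y' := by
  have hgraph : ContinuousOn (fun x => (x, y x)) (Ioo a b) := continuousOn_id.prodMk hy.continuousOn
  rw [graphIoo, image_image]
  refine exists_isSolution_image hs' (hh.comp hgraph hC) hy.continuousOn_slope ?_
    (fun x hx => hM _ (hmaps (hC x hx))) (fun x hx => hle _ (hmaps (hC x hx))) (fun x hx hz => ?_)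
    (fun x hx => hlt _ (hC x hx)) (fun x hx => hgt _ (hC x hx)) hleft hright
  · exact fun x hx w hw hxw => congrArg Prod.fst (hinj (hC x hx) (hC w hw) hxw)
  · have hsq := hy.sq_slope x hx
    rw [hz] at hsq
    exact hfold _ (hC x hx) (by linarith)

theorem HalfChart.isSolutionMap_transfer {s s' : ℝ → ℝ} {c c' : ℝ} {T : LabelDomain}
    {pt pt' : ℝ × ℝ → ℝ × ℝ} (hs' : Continuous s') (H : HalfChart s c T pt)
    (H' : HalfChart s' c' T pt') (hc : c < 0) :
    IsSolutionMap s s' (pt '' T.carrier) (pt' '' T.carrier) (transfer T pt pt') where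
  continuousOn := H.continuousOn_transfer H'
  mapsTo := H.mapsTo_transfer H'
  le_snd p hp := H.le_snd_of_mem_image hp
  snd_eq p hp := H.transfer_snd_eq H' hp
  map_zero := H.transfer_zero H'
  mem_nhdsWithin := by
    have hnhds := H.image_mem_nhdsWithin
    rw [show aboveFold s c = {p | s p.1 ≤ p.2} ∩ {p | c ≤ p.1} from inter_comm _ _,
      nhdsWithin_inter_of_mem'] at hnhds
    · exact hnhds
    · exact mem_nhdsWithin_of_mem_nhds (continuous_fst.continuousAt (Ici_mem_nhds hc))
  exists_abs_fst_le := H.exists_abs_fst_le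
  image_graphIoo a b y z hy hC := by
    obtain ⟨M, hM⟩ := H'.exists_abs_fst_le
    have hmem : ∀ x ∈ Ioo a b, (x, y x) ∈ pt '' T.carrier := fun x hx => hC ⟨x, hx, rfl⟩
    have hle : ∀ p ∈ pt '' T.carrier, c ≤ p.1 := by rintro _ ⟨u, hu, rfl⟩; exact H.le_fst u hu
    have hempty : Ioo a b ∩ Iio c = ∅ := by
      ext x; simpa using fun hax hxb => hle _ (hmem x ⟨hax, hxb⟩)
    refine exists_isSolution_image_graphIoo hs' (H.continuousOn_transfer H') (H.mapsTo_transfer H')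
      (H.leftInvOn_transfer H').injOn hM (fun p => H'.le_snd_of_mem_image)
      (fun p => H.transfer_snd_eq H') (fun p hp => ?_) (fun p => H.lt_transfer_fst_iff H') hy hmem
      (by rw [hempty]; exact ⟨id, by simp⟩) (H.liesOnGraph_transfer H' hy fun x hx => hmem x hx.1)
    exact iff_of_false (H.le_transfer_fst H' hp).not_gt (hle p hp).not_gt

/-! ### Mirror images -/

/-- The points whose reflection into the half-plane `0 ≤ x` lies in `C`. -/
def mirrorSet (C : Set (ℝ × ℝ)) : Set (ℝ × ℝ) :=
  preimage (fun p => (|p.1|, p.2)) C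

/-- The map which agrees with `h` on the half-plane `0 ≤ x` and commutes with the reflection in the
axis `x = 0`; it sends that axis to itself. -/
def mirror (h : ℝ × ℝ → ℝ × ℝ) (p : ℝ × ℝ) : ℝ × ℝ :=
  (Real.sign p.1 * (h (|p.1|, p.2)).1, (h (|p.1|, p.2)).2)

lemma mirror_of_pos {h : ℝ × ℝ → ℝ × ℝ} {x y : ℝ} (hx : 0 < x) : mirror h (x, y) = h (x, y) := by
  simp [mirror, Real.sign_of_pos hx, abs_of_pos hx]

lemma mirror_of_neg {h : ℝ × ℝ → ℝ × ℝ} {x y : ℝ} (hx : x < 0) :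
    mirror h (x, y) = (-(h (-x, y)).1, (h (-x, y)).2) := by
  simp [mirror, Real.sign_of_neg hx, abs_of_neg hx]

lemma apply_abs_of_even {s : ℝ → ℝ} (hs : Function.Even s) (x : ℝ) : s |x| = s x := by
  rcases abs_choice x with h | h <;> simp [h, hs x]

namespace HalfChart

variable {s s' y z : ℝ → ℝ} {a b : ℝ} {T : LabelDomain} {pt pt' : ℝ × ℝ → ℝ × ℝ} {p : ℝ × ℝ}

lemma mirror_transfer_fst_neg_iff (H : HalfChart s 0 T pt) (H' : HalfChart s' 0 T pt')
    (hp : p ∈ mirrorSet (pt '' T.carrier)) : (mirror (transfer T pt pt') p).1 < 0 ↔ p.1 < 0 := by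
  have hpos := H.lt_transfer_fst_iff H' hp
  rw [abs_pos] at hpos
  rcases lt_trichotomy p.1 0 with h | h | h
  · simpa [mirror, Real.sign_of_neg h, h] using hpos.2 h.ne
  · simp [mirror, h]
  · simpa [mirror, Real.sign_of_pos h, h.not_gt] using (hpos.2 h.ne').le

lemma mirror_transfer_fst_pos_iff (H : HalfChart s 0 T pt) (H' : HalfChart s' 0 T pt')
    (hp : p ∈ mirrorSet (pt '' T.carrier)) : 0 < (mirror (transfer T pt pt') p).1 ↔ 0 < p.1 := by
  have hpos := H.lt_transfer_fst_iff H' hp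
  rw [abs_pos] at hpos
  rcases lt_trichotomy p.1 0 with h | h | h
  · simpa [mirror, Real.sign_of_neg h, h.not_gt] using (hpos.2 h.ne).le
  · simp [mirror, h]
  · simpa [mirror, Real.sign_of_pos h, h] using hpos.2 h.ne'

lemma sign_mirror_transfer_fst (H : HalfChart s 0 T pt) (H' : HalfChart s' 0 T pt')
    (hp : p ∈ mirrorSet (pt '' T.carrier)) :
    Real.sign (mirror (transfer T pt pt') p).1 = Real.sign p.1 := by
  simp only [Real.sign, H.mirror_transfer_fst_neg_iff H' hp, H.mirror_transfer_fst_pos_iff H' hp]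

lemma transfer_fst_eq_zero (H : HalfChart s 0 T pt) (H' : HalfChart s' 0 T pt')
    (hp : p ∈ mirrorSet (pt '' T.carrier)) (h : p.1 = 0) :
    (transfer T pt pt' (|p.1|, p.2)).1 = 0 :=
  le_antisymm (not_lt.1 fun hlt => abs_pos.1 ((H.lt_transfer_fst_iff H' hp).1 hlt) h)
    (H.le_transfer_fst H' hp)

lemma abs_mirror_transfer (H : HalfChart s 0 T pt) (H' : HalfChart s' 0 T pt')
    (hp : p ∈ mirrorSet (pt '' T.carrier)) :
    (|(mirror (transfer T pt pt') p).1|, (mirror (transfer T pt pt') p).2) =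
      transfer T pt pt' (|p.1|, p.2) := by
  have hnonneg := H.le_transfer_fst H' hp
  refine Prod.ext ?_ rfl
  by_cases h : p.1 = 0
  · rw [H.transfer_fst_eq_zero H' hp h, mirror, h, Real.sign_zero, zero_mul, abs_zero]
  · rcases Real.sign_apply_eq_of_ne_zero p.1 h with hsign | hsign <;>
      simp [mirror, hsign, abs_of_nonneg hnonneg]

lemma mapsTo_mirror_transfer (H : HalfChart s 0 T pt) (H' : HalfChart s' 0 T pt') :
    MapsTo (mirror (transfer T pt pt')) (mirrorSet (pt '' T.carrier))
      (mirrorSet (pt' '' T.carrier)) := fun p hp => by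
  rw [mirrorSet, mem_preimage, H.abs_mirror_transfer H' hp]
  exact H.mapsTo_transfer H' hp

lemma leftInvOn_mirror_transfer (H : HalfChart s 0 T pt) (H' : HalfChart s' 0 T pt') :
    LeftInvOn (mirror (transfer T pt' pt)) (mirror (transfer T pt pt'))
      (mirrorSet (pt '' T.carrier)) := by
  intro p hp
  rw [mirror, H.abs_mirror_transfer H' hp, H.leftInvOn_transfer H' hp,
    H.sign_mirror_transfer_fst H' hp]
  exact Prod.ext (by rcases lt_trichotomy p.1 0 with h | h | h <;>
    simp [h, Real.sign_of_neg, Real.sign_of_pos, abs_of_neg, abs_of_pos]) rfl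

lemma continuousOn_mirror_transfer (H : HalfChart s 0 T pt) (H' : HalfChart s' 0 T pt') :
    ContinuousOn (mirror (transfer T pt pt')) (mirrorSet (pt '' T.carrier)) := by
  have hcomp : ContinuousOn (fun p : ℝ × ℝ => transfer T pt pt' (|p.1|, p.2))
      (mirrorSet (pt '' T.carrier)) :=
    (H.continuousOn_transfer H').comp (by fun_prop) fun p hp => hp
  exact (continuousOn_sign_mul continuousOn_fst hcomp.fst
    fun p hp => H.transfer_fst_eq_zero H' hp).prodMk hcomp.snd

lemma le_snd_of_mem_mirrorSet (hs : Function.Even s) (H : HalfChart s 0 T pt)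
    (hp : p ∈ mirrorSet (pt '' T.carrier)) : s p.1 ≤ p.2 := by
  simpa [apply_abs_of_even hs] using H.le_snd_of_mem_image hp

lemma exists_abs_fst_le_of_mem_mirrorSet (H : HalfChart s 0 T pt) :
    ∃ M, ∀ p ∈ mirrorSet (pt '' T.carrier), |p.1| ≤ M := by
  obtain ⟨M, hM⟩ := H.exists_abs_fst_le
  exact ⟨M, fun p hp => by simpa using hM _ hp⟩

lemma mirror_transfer_snd_eq (hs : Function.Even s) (hs' : Function.Even s')
    (H : HalfChart s 0 T pt) (H' : HalfChart s' 0 T pt') (hp : p ∈ mirrorSet (pt '' T.carrier))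
    (hfold : p.2 = s p.1) :
    (mirror (transfer T pt pt') p).2 = s' (mirror (transfer T pt pt') p).1 := by
  have hfst := congrArg Prod.fst (H.abs_mirror_transfer H' hp)
  rw [← apply_abs_of_even hs' (mirror _ p).1, show |(mirror _ p).1| = _ from hfst]
  exact H.transfer_snd_eq H' hp (by rw [apply_abs_of_even hs, hfold])

lemma mirrorSet_mem_nhdsWithin (hs : Function.Even s) (H : HalfChart s 0 T pt) :
    mirrorSet (pt '' T.carrier) ∈ 𝓝[{p | s p.1 ≤ p.2}] 0 := by
  have hcont : ContinuousWithinAt (fun p : ℝ × ℝ => (|p.1|, p.2)) {p | s p.1 ≤ p.2} 0 := by fun_prop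
  have hmaps : MapsTo (fun p : ℝ × ℝ => (|p.1|, p.2)) {p | s p.1 ≤ p.2} (aboveFold s 0) :=
    fun p hp => ⟨abs_nonneg _, (apply_abs_of_even hs p.1).trans_le hp⟩
  refine hcont.tendsto_nhdsWithin hmaps ?_
  simpa [← Prod.zero_eq_mk] using H.image_mem_nhdsWithin

lemma liesOnGraph_mirror_transfer_Ioi (H : HalfChart s 0 T pt) (H' : HalfChart s' 0 T pt')
    (hy : IsSolution s a b y z) (hmem : ∀ x ∈ Ioo a b, (x, y x) ∈ mirrorSet (pt '' T.carrier)) :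
    LiesOnGraph (Ioo a b ∩ Ioi 0) (fun x => (mirror (transfer T pt pt') (x, y x)).1)
      (fun x => (mirror (transfer T pt pt') (x, y x)).2)
      (branchSlope s' z fun x => mirror (transfer T pt pt') (x, y x)) := by
  have hright : ∀ x ∈ Ioo a b ∩ Ioi 0, (x, y x) ∈ pt '' T.carrier := fun x hx => by
    simpa only [mirrorSet, mem_preimage, abs_of_pos (mem_Ioi.1 hx.2)] using hmem x hx.1
  have heq : ∀ x ∈ Ioo a b ∩ Ioi 0,
      mirror (transfer T pt pt') (x, y x) = transfer T pt pt' (x, y x) := fun x hx =>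
    mirror_of_pos hx.2
  exact (H.liesOnGraph_transfer H' hy hright).congr (fun x hx => by simp only [heq x hx])
    (fun x hx => by simp only [heq x hx]) (fun x hx => by simp only [branchSlope, heq x hx])

lemma liesOnGraph_mirror_transfer_Iio (hs : Function.Even s) (hs' : Function.Even s')
    (H : HalfChart s 0 T pt) (H' : HalfChart s' 0 T pt') (hy : IsSolution s a b y z)
    (hmem : ∀ x ∈ Ioo a b, (x, y x) ∈ mirrorSet (pt '' T.carrier)) :
    LiesOnGraph (Ioo a b ∩ Iio 0) (fun x => (mirror (transfer T pt pt') (x, y x)).1)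
      (fun x => (mirror (transfer T pt pt') (x, y x)).2)
      (branchSlope s' z fun x => mirror (transfer T pt pt') (x, y x)) := by
  have hy_neg : IsSolution s (-b) (-a) (reflect y) fun x => -z (-x) := by
    simpa only [show reflect s = s from funext hs] using hy.reflect
  have hleft : ∀ x ∈ Ioo (-b) (-a) ∩ Ioi 0, (x, reflect y x) ∈ pt '' T.carrier := fun x hx => by
    have := hmem (-x) ⟨by linarith [hx.1.2], by linarith [hx.1.1]⟩
    simpa only [mirrorSet, mem_preimage, abs_neg, abs_of_pos (mem_Ioi.1 hx.2), reflect_apply]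
      using this
  have hdomain : Neg.neg ⁻¹' (Ioo (-b) (-a) ∩ Ioi 0) = Ioo a b ∩ Iio (0 : ℝ) := by
    simp [preimage_inter]
  have hgraph := (H.liesOnGraph_transfer H' hy_neg hleft).reflect
  rw [hdomain] at hgraph
  have heq : ∀ x ∈ Ioo a b ∩ Iio 0, mirror (transfer T pt pt') (x, y x) =
      (-(transfer T pt pt' (-x, y x)).1, (transfer T pt pt' (-x, y x)).2) := fun x hx =>
    mirror_of_neg hx.2
  refine hgraph.congr (fun x hx => ?_) (fun x hx => ?_) (fun x hx => ?_)
  · simp [heq x hx]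
  · simp [heq x hx]
  · simp [branchSlope, heq x hx, hs' _, Real.sign_neg]

theorem isSolutionMap_mirror_transfer (hcont : Continuous s') (hs : Function.Even s)
    (hs' : Function.Even s') (H : HalfChart s 0 T pt) (H' : HalfChart s' 0 T pt') :
    IsSolutionMap s s' (mirrorSet (pt '' T.carrier)) (mirrorSet (pt' '' T.carrier))
      (mirror (transfer T pt pt')) where
  continuousOn := H.continuousOn_mirror_transfer H'
  mapsTo := H.mapsTo_mirror_transfer H'
  le_snd p hp := H.le_snd_of_mem_mirrorSet hs hp
  snd_eq p hp := H.mirror_transfer_snd_eq hs hs' H' hp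
  map_zero := by simp [mirror, H.transfer_zero H', ← Prod.zero_eq_mk]
  mem_nhdsWithin := H.mirrorSet_mem_nhdsWithin hs
  exists_abs_fst_le := H.exists_abs_fst_le_of_mem_mirrorSet
  image_graphIoo a b y z hy hC := by
    obtain ⟨M, hM⟩ := H'.exists_abs_fst_le_of_mem_mirrorSet
    have hmem : ∀ x ∈ Ioo a b, (x, y x) ∈ mirrorSet (pt '' T.carrier) := fun x hx => hC ⟨x, hx, rfl⟩
    exact exists_isSolution_image_graphIoo hcont (H.continuousOn_mirror_transfer H')
      (H.mapsTo_mirror_transfer H') (H.leftInvOn_mirror_transfer H').injOn hM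
      (fun _ => H'.le_snd_of_mem_mirrorSet hs') (fun _ => H.mirror_transfer_snd_eq hs hs' H')
      (fun _ => H.mirror_transfer_fst_neg_iff H') (fun _ => H.mirror_transfer_fst_pos_iff H')
      hy hmem
      (H.liesOnGraph_mirror_transfer_Iio hs hs' H' hy hmem)
      (H.liesOnGraph_mirror_transfer_Ioi H' hy hmem)

end HalfChart

/-! ### Topological equivalence -/

/-- `h` maps every integral curve of `ω` contained in `U` onto an integral curve of `Ω`. -/
def CarriesIntegralCurves (ω Ω : ℝ × ℝ → ℝ × ℝ → ℝ) (h : ℝ × ℝ → ℝ × ℝ) (U : Set (ℝ × ℝ)) : Prop :=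
  ∀ γ I, IsIntegralCurveOnBDE ω γ I → MapsTo γ I U →
    ∃ σ J, IsIntegralCurveOnBDE Ω σ J ∧ h '' (γ '' I) = σ '' J

section TopEquiv

variable {ω Ω Θ : ℝ × ℝ → ℝ × ℝ → ℝ} {h h' k : ℝ × ℝ → ℝ × ℝ} {U U' V : Set (ℝ × ℝ)}

lemma CarriesIntegralCurves.mono (hω : CarriesIntegralCurves ω Ω h U) (hU : U' ⊆ U) :
    CarriesIntegralCurves ω Ω h U' :=
  fun γ I hγ hmaps => hω γ I hγ (hmaps.mono_right hU)

lemma CarriesIntegralCurves.comp (hΩ : CarriesIntegralCurves Ω Θ h' U')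
    (hω : CarriesIntegralCurves ω Ω h U) :
    CarriesIntegralCurves ω Θ (h' ∘ h) (U ∩ h ⁻¹' U') := by
  intro γ I hγ hmaps
  obtain ⟨σ, J, hσ, himage⟩ := hω γ I hγ (hmaps.mono_right inter_subset_left)
  have hσ_maps : MapsTo σ J U' := by
    rw [mapsTo_iff_image_subset, ← himage, image_image, image_subset_iff]
    exact hmaps.mono_right inter_subset_right
  obtain ⟨τ, K, hτ, himage'⟩ := hΩ σ J hσ hσ_maps
  exact ⟨τ, K, hτ, by rw [image_comp, himage, himage']⟩

theorem topEquivAt0_of_leftInvOn (hU : U ∈ 𝓝 0) (hV : V ∈ 𝓝 0) (h0 : h 0 = 0)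
    (hh : ContinuousOn h U) (hk : ContinuousOn k V) (hkh : LeftInvOn k h U) (hhk : LeftInvOn h k V)
    (hω : CarriesIntegralCurves ω Ω h U) (hΩ : CarriesIntegralCurves Ω ω k V) :
    TopEquivAt0 ω Ω := by
  have k0 : k 0 = 0 := by simpa only [h0] using hkh (mem_of_mem_nhds hU)
  have hU₀ := mem_interior_iff_mem_nhds.2 hU
  have hV₀ := mem_interior_iff_mem_nhds.2 hV
  have hUU : interior U ∩ h ⁻¹' interior V ⊆ U := inter_subset_left.trans interior_subset
  have hVV : interior V ∩ k ⁻¹' interior U ⊆ V := inter_subset_left.trans interior_subset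
  have hinv : InvOn k h (interior U ∩ h ⁻¹' interior V) (interior V ∩ k ⁻¹' interior U) :=
    ⟨hkh.mono hUU, hhk.mono hVV⟩
  refine ⟨_, _, h, k, (hh.mono interior_subset).isOpen_inter_preimage isOpen_interior
    isOpen_interior, (hk.mono interior_subset).isOpen_inter_preimage isOpen_interior
    isOpen_interior, ⟨hU₀, by rwa [mem_preimage, h0]⟩, ⟨hV₀, by rwa [mem_preimage, k0]⟩, h0,
    hh.mono hUU, hk.mono hVV, hinv.bijOn (fun p hp => ⟨hp.2, ?_⟩) (fun p hp => ⟨hp.2, ?_⟩), hinv,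
    hω.mono hUU, hΩ.mono hVV⟩
  · rw [mem_preimage, hinv.1 hp]
    exact hp.1
  · rw [mem_preimage, hinv.2 hp]
    exact hp.1

lemma topEquivAt0_symm (H : TopEquivAt0 ω Ω) : TopEquivAt0 Ω ω := by
  obtain ⟨U, V, h, k, hU, hV, hU₀, hV₀, h0, hh, hk, hbij, hinv, hω, hΩ⟩ := H
  exact ⟨V, U, k, h, hV, hU, hV₀, hU₀, (congrArg k h0).symm.trans (hinv.1 hU₀), hk, hh,
    hbij.symm hinv.symm, hinv.symm, hΩ, hω⟩

lemma topEquivAt0_trans (H : TopEquivAt0 ω Ω) (K : TopEquivAt0 Ω Θ) : TopEquivAt0 ω Θ := by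
  obtain ⟨U, V, h, k, hU, hV, hU₀, hV₀, h0, hh, hk, -, hinv, hω, hΩ⟩ := H
  obtain ⟨U', V', h', k', hU', hV', hU'₀, hV'₀, h'0, hh', hk', -, hinv', hΩ', hΘ⟩ := K
  have k'0 : k' 0 = 0 := by simpa only [h'0] using hinv'.1 hU'₀
  refine topEquivAt0_of_leftInvOn (h := h' ∘ h) (k := k ∘ k')
    ((hh.isOpen_inter_preimage hU hU').mem_nhds ⟨hU₀, by rwa [mem_preimage, h0]⟩)
    ((hk'.isOpen_inter_preimage hV' hV).mem_nhds ⟨hV'₀, by rwa [mem_preimage, k'0]⟩)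
    (by rw [Function.comp_apply, h0, h'0])
    (hh'.comp (hh.mono inter_subset_left) fun p hp => hp.2)
    (hk.comp (hk'.mono inter_subset_left) fun p hp => hp.2) (fun p hp => ?_) (fun p hp => ?_)
    (CarriesIntegralCurves.comp hΩ' hω) (CarriesIntegralCurves.comp hΩ hΘ)
  · rw [Function.comp_apply, Function.comp_apply, hinv'.1 hp.2, hinv.1 hp.1]
  · rw [Function.comp_apply, Function.comp_apply, hinv.2 hp.2, hinv'.2 hp.1]

lemma carriesIntegralCurves_of_contDiff (hh : ContDiff ℝ 1 h)
    (hinj : ∀ p, Function.Injective (fderiv ℝ h p))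
    (hω : ∀ p ∈ U, ∀ v, ω p v = 0 → Ω (h p) (fderiv ℝ h p v) = 0) :
    CarriesIntegralCurves ω Ω h U := by
  rintro γ I ⟨hI, dγ, hdγ, hderiv⟩ hmaps
  have hγ : ContinuousOn γ I := fun t ht => (hderiv t ht).1.continuousAt.continuousWithinAt
  refine ⟨h ∘ γ, I, ⟨hI, fun t => fderiv ℝ h (γ t) (dγ t), ?_, fun t ht => ⟨?_, ?_, ?_⟩⟩,
    by rw [image_comp]⟩
  · exact ((hh.continuous_fderiv one_ne_zero).comp_continuousOn hγ).clm_apply hdγ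
  · exact (hh.differentiable one_ne_zero _).hasFDerivAt.comp_hasDerivAt t (hderiv t ht).1
  · exact (map_ne_zero_iff _ (hinj _)).2 (hderiv t ht).2.1
  · exact hω _ (hmaps ht) _ (hderiv t ht).2.2

theorem topEquivAt0_of_contDiff (h : ℝ × ℝ ≃ ℝ × ℝ) (hh : ContDiff ℝ 1 h)
    (hk : ContDiff ℝ 1 h.symm) (h0 : h 0 = 0) (hU : U ∈ 𝓝 0)
    (hω : ∀ p ∈ U, ∀ v, ω p v = 0 ↔ Ω (h p) (fderiv ℝ h p v) = 0) : TopEquivAt0 ω Ω := by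
  have hkh : ∀ p, Function.LeftInverse (fderiv ℝ h.symm (h p)) (fderiv ℝ h p) := fun p v => by
    have hchain := fderiv_comp p (hk.differentiable one_ne_zero (h p))
      (hh.differentiable one_ne_zero p)
    rw [h.symm_comp_self, fderiv_id] at hchain
    exact (DFunLike.congr_fun hchain v).symm
  have hhk : ∀ p, Function.LeftInverse (fderiv ℝ h (h.symm p)) (fderiv ℝ h.symm p) := fun p v => by
    have hchain := fderiv_comp p (hh.differentiable one_ne_zero (h.symm p))
      (hk.differentiable one_ne_zero p)
    rw [h.self_comp_symm, fderiv_id] at hchain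
    exact (DFunLike.congr_fun hchain v).symm
  have k0 : h.symm 0 = 0 := h.symm_apply_eq.2 h0.symm
  refine topEquivAt0_of_leftInvOn hU (hk.continuous.continuousAt.preimage_mem_nhds (by rwa [k0])) h0
    hh.continuous.continuousOn hk.continuous.continuousOn (fun p _ => h.symm_apply_apply p)
    (fun p _ => h.apply_symm_apply p)
    (carriesIntegralCurves_of_contDiff hh (fun p => (hkh p).injective) fun p hp v => (hω p hp v).1)
    (carriesIntegralCurves_of_contDiff hk (fun p => (hhk p).injective) fun p hp v hv => ?_)
  rwa [hω _ hp, h.apply_symm_apply, hhk]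

end TopEquiv

/-! ### The folded equation `dy² = (y - s x) dx²` -/

/-- The BDE `dy² + (-y + s x) dx² = 0`, whose two directions come together over the curve
`y = s x`, the fold. -/
def foldedBDE (s : ℝ → ℝ) : ℝ × ℝ → ℝ × ℝ → ℝ :=
  BDE (fun _ => 1) (fun _ => 0) fun p => -p.2 + s p.1

/-- The retraction of the plane onto `{s x ≤ y}` along vertical lines. -/
def liftToFold (s : ℝ → ℝ) (p : ℝ × ℝ) : ℝ × ℝ := (p.1, max p.2 (s p.1))

/-- The extension below the fold, by vertical translation, of a map `h` defined on `{s x ≤ y}`. -/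
def extendBelow (s : ℝ → ℝ) (h : ℝ × ℝ → ℝ × ℝ) (p : ℝ × ℝ) : ℝ × ℝ :=
  h (liftToFold s p) + (0, min (p.2 - s p.1) 0)

section Folded

variable {s s' y z : ℝ → ℝ} {γ : ℝ → ℝ × ℝ} {I : Set ℝ} {a b M : ℝ} {p v : ℝ × ℝ}
  {C C' : Set (ℝ × ℝ)} {h h' : ℝ × ℝ → ℝ × ℝ}

lemma foldedBDE_apply : foldedBDE s p v = v.2 ^ 2 - (p.2 - s p.1) * v.1 ^ 2 := by
  simp only [foldedBDE, BDE]
  ring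

lemma fst_ne_zero_of_foldedBDE_eq_zero (h : foldedBDE s p v = 0) (hv : v ≠ 0) : v.1 ≠ 0 := by
  rintro hfst
  rw [foldedBDE_apply, hfst] at h
  exact hv (Prod.ext hfst (by simpa using h))

lemma div_sq_of_foldedBDE_eq_zero (h : foldedBDE s p v = 0) (hv : v ≠ 0) :
    (v.2 / v.1) ^ 2 = p.2 - s p.1 := by
  have hfst := fst_ne_zero_of_foldedBDE_eq_zero h hv
  rw [foldedBDE_apply] at h
  rw [div_pow, div_eq_iff (pow_ne_zero 2 hfst)]
  linarith

lemma injOn_Ioo_of_hasDerivAt_ne_zero {f f' : ℝ → ℝ} (hf : ∀ x ∈ Ioo a b, HasDerivAt f (f' x) x)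
    (hf' : ∀ x ∈ Ioo a b, f' x ≠ 0) : InjOn f (Ioo a b) := by
  have hne : ∀ x ∈ Ioo a b, ∀ w ∈ Ioo a b, x < w → f x ≠ f w := by
    intro x hx w hw hxw heq
    have hsub : Icc x w ⊆ Ioo a b := Icc_subset_Ioo hx.1 hw.2
    obtain ⟨t, ht, hzero⟩ := exists_hasDerivAt_eq_zero hxw
      (fun t ht => (hf t (hsub ht)).continuousAt.continuousWithinAt) heq
      fun t ht => hf t (hsub (Ioo_subset_Icc_self ht))
    exact hf' t (hsub (Ioo_subset_Icc_self ht)) hzero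
  intro x hx w hw heq
  by_contra hxw
  rcases lt_or_gt_of_ne hxw with hlt | hlt
  · exact hne x hx w hw hlt heq
  · exact hne w hw x hx hlt heq.symm

lemma image_eq_graphIoo {g : ℝ → ℝ} {a' b' : ℝ}
    (hmaps : MapsTo (fun t => (γ t).1) (Ioo a b) (Ioo a' b')) (hg : MapsTo g (Ioo a' b') (Ioo a b))
    (hinv : InvOn g (fun t => (γ t).1) (Ioo a b) (Ioo a' b')) :
    γ '' Ioo a b = graphIoo a' b' fun x => (γ (g x)).2 := by
  refine Subset.antisymm ?_ ?_
  · rintro _ ⟨t, ht, rfl⟩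
    exact ⟨(γ t).1, hmaps ht, Prod.ext rfl (congrArg (fun w => (γ w).2) (hinv.1 ht))⟩
  · rintro _ ⟨x, hx, rfl⟩
    exact ⟨g x, hg hx, Prod.ext (hinv.2 hx) rfl⟩

lemma exists_isSolution_of_isIntegralCurveOnBDE (hγ : IsIntegralCurveOnBDE (foldedBDE s) γ I)
    (hM : ∀ t ∈ I, |(γ t).1| ≤ M) : ∃ a b y z, IsSolution s a b y z ∧ γ '' I = graphIoo a b y := by
  obtain ⟨⟨a, b, rfl⟩, dγ, hdγ, hcurve⟩ := hγ
  have hne : ∀ t ∈ Ioo a b, (dγ t).1 ≠ 0 := fun t ht =>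
    fst_ne_zero_of_foldedBDE_eq_zero (hcurve t ht).2.2 (hcurve t ht).2.1
  have hfst : ∀ t ∈ Ioo a b, HasDerivAt (fun t => (γ t).1) (dγ t).1 t := fun t ht =>
    (hcurve t ht).1.fst
  obtain ⟨a', b', g, hg, hmaps, hgmaps, hinv⟩ := exists_continuousOn_invOn_of_injOn
    (fun t ht => (hfst t ht).continuousAt.continuousWithinAt)
    (injOn_Ioo_of_hasDerivAt_ne_zero hfst hne) hM
  refine ⟨a', b', fun x => (γ (g x)).2, fun x => (dγ (g x)).2 / (dγ (g x)).1,
    ⟨(hdγ.snd.div hdγ.fst hne).comp hg hgmaps, fun x hx => ?_, fun x hx => ?_⟩,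
    image_eq_graphIoo hmaps hgmaps hinv⟩
  · have hgderiv : HasDerivAt g (dγ (g x)).1⁻¹ x :=
      (hfst _ (hgmaps hx)).of_local_left_inverse (hg.continuousAt (Ioo_mem_nhds hx.1 hx.2))
        (hne _ (hgmaps hx)) (by filter_upwards [Ioo_mem_nhds hx.1 hx.2] with t ht using hinv.2 ht)
    have hsnd : HasDerivAt (fun t => (γ t).2) (dγ (g x)).2 (g x) := (hcurve _ (hgmaps hx)).1.snd
    exact hsnd.comp x hgderiv
  · rw [div_sq_of_foldedBDE_eq_zero (hcurve _ (hgmaps hx)).2.2 (hcurve _ (hgmaps hx)).2.1,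
      show (γ (g x)).1 = x from hinv.2 hx]

lemma IsSolution.isIntegralCurveOnBDE (h : IsSolution s a b y z) :
    IsIntegralCurveOnBDE (foldedBDE s) (fun x => (x, y x)) (Ioo a b) := by
  refine ⟨⟨a, b, rfl⟩, fun x => (1, z x), continuousOn_const.prodMk h.continuousOn_slope,
    fun x hx => ⟨(hasDerivAt_id x).prodMk (h.hasDerivAt x hx), by simp, ?_⟩⟩
  rw [foldedBDE_apply, h.sq_slope x hx]
  ring

lemma liftToFold_of_le (hp : s p.1 ≤ p.2) : liftToFold s p = p :=
  Prod.ext rfl (max_eq_left hp)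

lemma liftToFold_of_ge (hp : p.2 ≤ s p.1) : liftToFold s p = (p.1, s p.1) :=
  Prod.ext rfl (max_eq_right hp)

lemma continuous_liftToFold (hs : Continuous s) : Continuous (liftToFold s) := by
  unfold liftToFold
  fun_prop

lemma extendBelow_of_le (hp : s p.1 ≤ p.2) : extendBelow s h p = h p := by
  rw [extendBelow, liftToFold_of_le hp, min_eq_right (sub_nonneg.2 hp), ← Prod.zero_eq_mk, add_zero]

lemma extendBelow_of_ge (hp : p.2 ≤ s p.1) :
    extendBelow s h p = h (p.1, s p.1) + (0, p.2 - s p.1) := by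
  rw [extendBelow, liftToFold_of_ge hp, min_eq_left (sub_nonpos.2 hp)]

namespace IsSolutionMap

lemma leftInvOn_extendBelow (H : IsSolutionMap s s' C C' h) (H' : IsSolutionMap s' s C' C h')
    (hinv : LeftInvOn h' h C) :
    LeftInvOn (extendBelow s' h') (extendBelow s h) (liftToFold s ⁻¹' C) := by
  intro p hp
  rcases le_total (s p.1) p.2 with hle | hge
  · rw [mem_preimage, liftToFold_of_le hle] at hp
    rw [extendBelow_of_le hle, extendBelow_of_le (H'.le_snd _ (H.mapsTo hp)), hinv hp]
  · rw [mem_preimage, liftToFold_of_ge hge] at hp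
    have hfold := H.snd_eq _ hp rfl
    obtain ⟨q, hq⟩ : ∃ q, q = h (p.1, s p.1) := ⟨_, rfl⟩
    have hq_inv : h' (q.1, s' q.1) = (p.1, s p.1) := by
      rw [hq, ← hfold]
      exact hinv hp
    rw [extendBelow_of_ge hge, ← hq, extendBelow_of_ge, Prod.fst_add, add_zero, hq_inv]
    · refine Prod.ext (by simp) ?_
      simp only [Prod.snd_add]
      rw [hq, hfold]
      ring
    · simpa [hq, hfold] using hge

lemma continuousOn_extendBelow (hs : Continuous s) (H : IsSolutionMap s s' C C' h) :
    ContinuousOn (extendBelow s h) (liftToFold s ⁻¹' C) := by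
  have hlift := H.continuousOn.comp (continuous_liftToFold hs).continuousOn (mapsTo_preimage _ C)
  exact hlift.add (by fun_prop)

lemma preimage_liftToFold_mem_nhds (hs : Continuous s) (h0 : s 0 = 0)
    (H : IsSolutionMap s s' C C' h) : liftToFold s ⁻¹' C ∈ 𝓝 0 := by
  have hzero : liftToFold s 0 = 0 := liftToFold_of_le (by simp [h0])
  have htendsto : Tendsto (liftToFold s) (𝓝 0) (𝓝[{p | s p.1 ≤ p.2}] 0) := by
    refine tendsto_nhdsWithin_iff.2 ⟨?_, .of_forall fun p => le_max_right p.2 (s p.1)⟩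
    simpa only [hzero] using (continuous_liftToFold hs).tendsto 0
  exact htendsto H.mem_nhdsWithin

lemma carriesIntegralCurves_extendBelow (H : IsSolutionMap s s' C C' h) :
    CarriesIntegralCurves (foldedBDE s) (foldedBDE s') (extendBelow s h) (liftToFold s ⁻¹' C) := by
  intro γ I hγ hmaps
  have habove : ∀ t ∈ I, s (γ t).1 ≤ (γ t).2 := fun t ht => by
    obtain ⟨-, dγ, -, hcurve⟩ := hγ
    have hsq := div_sq_of_foldedBDE_eq_zero (hcurve t ht).2.2 (hcurve t ht).2.1
    linarith [sq_nonneg ((dγ t).2 / (dγ t).1)]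
  have hmem : ∀ t ∈ I, γ t ∈ C := fun t ht => by
    simpa only [mem_preimage, liftToFold_of_le (habove t ht)] using hmaps ht
  obtain ⟨M, hM⟩ := H.exists_abs_fst_le
  obtain ⟨a, b, y, z, hy, hgraph⟩ :=
    exists_isSolution_of_isIntegralCurveOnBDE hγ fun t ht => hM _ (hmem t ht)
  obtain ⟨a', b', y', z', hy', hgraph'⟩ :=
    H.image_graphIoo a b y z hy (hgraph ▸ image_subset_iff.2 hmem)
  refine ⟨_, _, hy'.isIntegralCurveOnBDE, ?_⟩
  rw [← graphIoo, ← hgraph', ← hgraph]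
  exact image_congr (by rintro _ ⟨t, ht, rfl⟩; exact extendBelow_of_le (habove t ht))

theorem topEquivAt0 (hs : Continuous s) (hs' : Continuous s') (h0 : s 0 = 0) (h0' : s' 0 = 0)
    (H : IsSolutionMap s s' C C' h) (H' : IsSolutionMap s' s C' C h') (hinv : LeftInvOn h' h C)
    (hinv' : LeftInvOn h h' C') : TopEquivAt0 (foldedBDE s) (foldedBDE s') :=
  topEquivAt0_of_leftInvOn (H.preimage_liftToFold_mem_nhds hs h0)
    (H'.preimage_liftToFold_mem_nhds hs' h0')
    (by rw [extendBelow_of_le (by simp [h0]), H.map_zero]) (H.continuousOn_extendBelow hs)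
    (H'.continuousOn_extendBelow hs') (H.leftInvOn_extendBelow H' hinv)
    (H'.leftInvOn_extendBelow H hinv') H.carriesIntegralCurves_extendBelow
    H'.carriesIntegralCurves_extendBelow

end IsSolutionMap

end Folded

/-! ### Topological types of fold germs -/

/-- A curve `y = s x` through the origin which is `C¹` there, so that the origin is a fold point
of `foldedBDE s`. -/
structure IsFoldCurve (s : ℝ → ℝ) : Prop where
  continuous : Continuous s
  map_zero : s 0 = 0
  contDiffAt : ContDiffAt ℝ 1 s 0

/-- The origin is a folded saddle of `foldedBDE s`, on a fold which is symmetric in `x`. -/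
structure IsSaddleFold (s : ℝ → ℝ) : Prop extends IsFoldCurve s where
  even : Function.Even s
  deriv_neg : ∀ᶠ x in 𝓝[>] 0, deriv s x < 0

/-- The origin is a folded node of `foldedBDE s`, on a fold which is symmetric in `x`. The bound
`1 / 16` is the value of `k` above which the BDE `dy² = (y - k x²) dx²` has a folded focus. -/
structure IsNodeFold (s : ℝ → ℝ) : Prop extends IsFoldCurve s where
  even : Function.Even s
  deriv_pos : ∀ᶠ x in 𝓝[>] 0, 0 < deriv s x
  exists_eq_sq_mul : ∃ k : ℝ → ℝ, ContinuousAt k 0 ∧ k 0 < 1 / 16 ∧ ∀ᶠ x in 𝓝 0, s x = x ^ 2 * k x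

/-- `triangleDomain` without left edge: the diagonal is mapped to the fold throughout. -/
def diagonalDomain (δ : ℝ) : LabelDomain where
  carrier := {u | -δ ≤ u.1 ∧ u.1 ≤ u.2 ∧ u.2 ≤ δ}
  collapsed := ∅
  axis := ∅
  fold := {u | u.1 = u.2}

section Germs

variable {s s' : ℝ → ℝ} {c δ : ℝ} {pt pt' : ℝ × ℝ → ℝ × ℝ} {T : LabelDomain} {p : ℝ → Prop}

lemma eventually_forall_mem_Icc (hp : ∀ᶠ x in 𝓝 0, p x) :
    ∀ᶠ r in 𝓝[>] 0, ∀ x ∈ Icc (-r) r, p x := by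
  obtain ⟨ε, hε, hball⟩ := Metric.eventually_nhds_iff.1 hp
  filter_upwards [Ioo_mem_nhdsGT hε] with r hr x hx
  exact hball (by rw [Real.dist_0_eq_abs]; exact (abs_le.2 hx).trans_lt hr.2)

lemma eventually_forall_mem_Ioo (hp : ∀ᶠ x in 𝓝[>] 0, p x) :
    ∀ᶠ r in 𝓝[>] 0, ∀ x ∈ Ioo 0 r, p x := by
  obtain ⟨ε, hε, hsub⟩ := mem_nhdsGT_iff_exists_Ioo_subset.1 hp
  filter_upwards [Ioo_mem_nhdsGT hε] with r hr x hx
  exact hsub ⟨hx.1, hx.2.trans hr.2⟩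

lemma HalfChart.diagonalDomain (hδ : δ < s c) (H : HalfChart s c (triangleDomain (s c) δ) pt) :
    HalfChart s c (diagonalDomain δ) pt :=
  { H with
    fst_eq_iff u hu := (H.fst_eq_iff u hu).trans
      (iff_of_false (fun h => (h.2.trans hu.2.2).not_gt hδ) (notMem_empty u))
    snd_eq_iff u hu := (H.snd_eq_iff u hu).trans (and_iff_left (hu.2.2.trans hδ.le)) }

lemma HalfChart.topEquivAt0_of_neg {c' : ℝ} (hs : IsFoldCurve s) (hs' : IsFoldCurve s') (hc : c < 0)
    (hc' : c' < 0) (H : HalfChart s c T pt) (H' : HalfChart s' c' T pt') :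
    TopEquivAt0 (foldedBDE s) (foldedBDE s') :=
  (H.isSolutionMap_transfer hs'.continuous H' hc).topEquivAt0 hs.continuous hs'.continuous
    hs.map_zero hs'.map_zero (H'.isSolutionMap_transfer hs.continuous H hc')
    (H.leftInvOn_transfer H') (H'.leftInvOn_transfer H)

lemma HalfChart.topEquivAt0_of_even (hs : IsFoldCurve s) (hs' : IsFoldCurve s')
    (heven : Function.Even s) (heven' : Function.Even s') (H : HalfChart s 0 T pt)
    (H' : HalfChart s' 0 T pt') : TopEquivAt0 (foldedBDE s) (foldedBDE s') :=
  (H.isSolutionMap_mirror_transfer hs'.continuous heven heven' H').topEquivAt0 hs.continuous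
    hs'.continuous hs.map_zero hs'.map_zero
    (H'.isSolutionMap_mirror_transfer hs.continuous heven' heven H)
    (H.leftInvOn_mirror_transfer H') (H'.leftInvOn_mirror_transfer H)

namespace IsFoldCurve

lemma eventually_continuousAt_deriv (hs : IsFoldCurve s) :
    ∀ᶠ x in 𝓝 0, ContinuousAt (deriv s) x := by
  filter_upwards [hs.contDiffAt.eventually (by simp)] with x hx
  exact (hx.continuousAt_fderiv one_ne_zero).clm_apply continuousAt_const

lemma eventually_abs_le (hs : IsFoldCurve s) : ∀ᶠ x in 𝓝 0, |s x| ≤ 1 / 2 := by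
  refine hs.continuous.abs.continuousAt.eventually_le_const ?_
  simp [hs.map_zero]

lemma eventually_decreasingFold_of_deriv_neg (hs : IsFoldCurve s) (hneg : deriv s 0 < 0) :
    ∀ᶠ r in 𝓝[>] 0, DecreasingFold s (-r) r := by
  have hneg' := hs.eventually_continuousAt_deriv.self_of_nhds.eventually_lt_const hneg
  filter_upwards [self_mem_nhdsWithin, eventually_forall_mem_Icc hneg',
    eventually_forall_mem_Icc hs.eventually_continuousAt_deriv,
    eventually_forall_mem_Icc hs.eventually_abs_le]
    with r hr hderiv hcont habs
  exact ⟨hs.continuous, hs.map_zero, neg_nonpos.2 (le_of_lt hr), hr,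
    fun x hx => hderiv x (Ioo_subset_Icc_self hx),
    fun x hx => (hcont x (Ioo_subset_Icc_self hx)).continuousWithinAt, habs⟩

lemma eventually_exists_halfChart_diagonalDomain (hs : IsFoldCurve s) (hneg : deriv s 0 < 0) :
    ∃ c < 0, ∀ᶠ δ in 𝓝[>] 0, ∃ pt, HalfChart s c (diagonalDomain δ) pt := by
  obtain ⟨r, hr⟩ := (hs.eventually_decreasingFold_of_deriv_neg hneg).exists
  have hpos : 0 < s (-r) := hs.map_zero ▸ hr.strictAntiOn (left_mem_Icc.2 hr.lt.le)
    ⟨hr.left_nonpos, hr.right_pos.le⟩ (neg_lt_zero.2 hr.right_pos)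
  refine ⟨-r, neg_lt_zero.2 hr.right_pos, ?_⟩
  filter_upwards [hr.eventually_exists_halfChart, Ioo_mem_nhdsGT hpos] with δ ⟨pt, H⟩ hδ
  exact ⟨pt, H.diagonalDomain hδ.2⟩

lemma topEquivAt0_of_deriv_neg (hs : IsFoldCurve s) (hs' : IsFoldCurve s') (hneg : deriv s 0 < 0)
    (hneg' : deriv s' 0 < 0) : TopEquivAt0 (foldedBDE s) (foldedBDE s') := by
  obtain ⟨c, hc, hcharts⟩ := hs.eventually_exists_halfChart_diagonalDomain hneg
  obtain ⟨c', hc', hcharts'⟩ := hs'.eventually_exists_halfChart_diagonalDomain hneg'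
  obtain ⟨δ, ⟨pt, H⟩, ⟨pt', H'⟩⟩ := (hcharts.and hcharts').exists
  exact H.topEquivAt0_of_neg hs hs' hc hc' H'

lemma reflect (hs : IsFoldCurve s) : IsFoldCurve (reflect s) where
  continuous := hs.continuous.comp continuous_neg
  map_zero := by simp [hs.map_zero]
  contDiffAt := ContDiffAt.comp (0 : ℝ) (by simpa using hs.contDiffAt) contDiffAt_fun_id.neg

end IsFoldCurve

lemma topEquivAt0_reflect (s : ℝ → ℝ) : TopEquivAt0 (foldedBDE s) (foldedBDE (reflect s)) := by
  let flip : (ℝ × ℝ) ≃L[ℝ] ℝ × ℝ :=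
    (ContinuousLinearEquiv.neg ℝ).prodCongr (ContinuousLinearEquiv.refl ℝ ℝ)
  refine topEquivAt0_of_contDiff flip.toEquiv flip.contDiff flip.symm.contDiff (map_zero flip)
    univ_mem fun p _ v => ?_
  rw [show fderiv ℝ flip.toEquiv p = flip from flip.fderiv, foldedBDE_apply, foldedBDE_apply]
  simp [flip]

theorem topEquivAt0_of_deriv_mul_pos (hs : IsFoldCurve s) (hs' : IsFoldCurve s')
    (hpos : 0 < deriv s 0 * deriv s' 0) : TopEquivAt0 (foldedBDE s) (foldedBDE s') := by
  rcases pos_and_pos_or_neg_and_neg_of_mul_pos hpos with ⟨h, h'⟩ | ⟨h, h'⟩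
  · have hneg : ∀ {f : ℝ → ℝ}, 0 < deriv f 0 → deriv (reflect f) 0 < 0 := fun {f} hf => by
      rw [show reflect f = fun x => f (-x) from rfl, deriv_comp_neg, neg_zero]
      exact neg_lt_zero.2 hf
    exact topEquivAt0_trans (topEquivAt0_reflect s) (topEquivAt0_trans
      (hs.reflect.topEquivAt0_of_deriv_neg hs'.reflect (hneg h) (hneg h'))
      (topEquivAt0_symm (topEquivAt0_reflect s')))
  · exact hs.topEquivAt0_of_deriv_neg hs' h h'

namespace IsSaddleFold

lemma eventually_decreasingFold (hs : IsSaddleFold s) : ∀ᶠ r in 𝓝[>] 0, DecreasingFold s 0 r := by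
  filter_upwards [self_mem_nhdsWithin, eventually_forall_mem_Ioo hs.deriv_neg,
    eventually_forall_mem_Icc hs.eventually_continuousAt_deriv,
    eventually_forall_mem_Icc hs.eventually_abs_le]
    with r (hr : 0 < r) hderiv hcont habs
  have hsub : Icc 0 r ⊆ Icc (-r) r := Icc_subset_Icc_left (neg_nonpos.2 hr.le)
  exact ⟨hs.continuous, hs.map_zero, le_rfl, hr, hderiv,
    fun x hx => (hcont x (hsub (Ioo_subset_Icc_self hx))).continuousWithinAt,
    fun x hx => habs x (hsub hx)⟩

theorem topEquivAt0 (hs : IsSaddleFold s) (hs' : IsSaddleFold s') :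
    TopEquivAt0 (foldedBDE s) (foldedBDE s') := by
  obtain ⟨r, hr⟩ := hs.eventually_decreasingFold.exists
  obtain ⟨r', hr'⟩ := hs'.eventually_decreasingFold.exists
  have hcharts := hr.eventually_exists_halfChart.and hr'.eventually_exists_halfChart
  rw [hs.map_zero, hs'.map_zero] at hcharts
  obtain ⟨δ, ⟨pt, H⟩, ⟨pt', H'⟩⟩ := hcharts.exists
  exact H.topEquivAt0_of_even hs.toIsFoldCurve hs'.toIsFoldCurve hs.even hs'.even H'

end IsSaddleFold

namespace IsNodeFold

lemma eventually_le_sq (hs : IsNodeFold s) : ∀ᶠ x in 𝓝 0, s x ≤ x ^ 2 / 16 := by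
  obtain ⟨k, hk, hk0, heq⟩ := hs.exists_eq_sq_mul
  filter_upwards [heq, hk.eventually_lt_const hk0] with x hx hkx
  linarith [mul_le_mul_of_nonneg_left hkx.le (sq_nonneg x)]

lemma eventually_increasingFold (hs : IsNodeFold s) : ∀ᶠ ε in 𝓝[>] 0, IncreasingFold s ε := by
  filter_upwards [Ioo_mem_nhdsGT one_pos, eventually_forall_mem_Ioo hs.deriv_pos,
    eventually_forall_mem_Icc hs.eventually_continuousAt_deriv,
    eventually_forall_mem_Icc hs.eventually_le_sq]
    with ε hε hderiv hcont hle
  have hsub : Icc 0 ε ⊆ Icc (-ε) ε := Icc_subset_Icc_left (neg_nonpos.2 hε.1.le)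
  exact ⟨hs.continuous, hs.map_zero, hε.1, hε.2.le, hderiv,
    fun x hx => (hcont x (hsub (Ioo_subset_Icc_self hx))).continuousWithinAt,
    fun x hx => hle x (hsub hx)⟩

theorem topEquivAt0 (hs : IsNodeFold s) (hs' : IsNodeFold s') :
    TopEquivAt0 (foldedBDE s) (foldedBDE s') := by
  obtain ⟨ε, hε⟩ := hs.eventually_increasingFold.exists
  obtain ⟨ε', hε'⟩ := hs'.eventually_increasingFold.exists
  obtain ⟨δ, ⟨pt, H⟩, ⟨pt', H'⟩⟩ :=
    (hε.eventually_exists_halfChart.and hε'.eventually_exists_halfChart).exists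
  exact H.topEquivAt0_of_even hs.toIsFoldCurve hs'.toIsFoldCurve hs.even hs'.even H'

end IsNodeFold

end Germs

/-! ### Unfoldings of a quartic fold -/

/-- An orientation-preserving odd `C¹` change of the abscissa, tangent to the identity at `0`. -/
structure IsRescaling (Y : ℝ → ℝ) : Prop where
  contDiff : ContDiff ℝ 1 Y
  odd : Function.Odd Y
  deriv_pos : ∀ x, 0 < deriv Y x
  deriv_zero : deriv Y 0 = 1

/-- The fold `y = s x` is a member, with parameters `t` and `u`, of an unfolding
`y = t x a(x) + u x² b(x) + x⁴ c(x)` of the quartic fold `y = x⁴ c(x)`. -/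
structure HasQuarticExpansion (s : ℝ → ℝ) (t u : ℝ) (a b c : ℝ → ℝ) : Prop where
  continuous : Continuous s
  even : t = 0 → Function.Even s
  contDiffAt_linear : ContDiffAt ℝ 1 a 0
  contDiffAt_quadratic : ContDiffAt ℝ 1 b 0
  contDiffAt_quartic : ContDiffAt ℝ 1 c 0
  linear_pos : 0 < a 0
  quadratic_pos : 0 < b 0
  eventually_eq : ∀ᶠ x in 𝓝 0, s x = t * x * a x + u * x ^ 2 * b x + x ^ 4 * c x

section Unfolding

variable {s s' Y k a b c a' b' c' : ℝ → ℝ} {t u : ℝ} {n : ℕ}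

namespace IsRescaling

lemma map_zero (hY : IsRescaling Y) : Y 0 = 0 := by
  have hodd := hY.odd 0
  rw [neg_zero] at hodd
  linarith

lemma tendsto_nhdsGT (hY : IsRescaling Y) : Tendsto Y (𝓝[>] 0) (𝓝[>] 0) := by
  have hmono : StrictMono Y := strictMono_of_deriv_pos hY.deriv_pos
  refine tendsto_nhdsWithin_iff.2 ⟨?_, ?_⟩
  · exact (hY.contDiff.continuous.tendsto' 0 0 hY.map_zero).mono_left nhdsWithin_le_nhds
  · filter_upwards [self_mem_nhdsWithin] with x hx
    simpa only [hY.map_zero, mem_Ioi] using hmono hx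

lemma even_comp (hY : IsRescaling Y) (hs : Function.Even s) : Function.Even (s ∘ Y) := fun x => by
  rw [Function.comp_apply, hY.odd, hs, Function.comp_apply]

lemma isFoldCurve_comp (hY : IsRescaling Y) (hs : IsFoldCurve s) : IsFoldCurve (s ∘ Y) where
  continuous := hs.continuous.comp hY.contDiff.continuous
  map_zero := by rw [Function.comp_apply, hY.map_zero, hs.map_zero]
  contDiffAt := ContDiffAt.comp 0 (hY.map_zero.symm ▸ hs.contDiffAt) hY.contDiff.contDiffAt

lemma eventually_deriv_comp (hY : IsRescaling Y) (hs : IsFoldCurve s) :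
    ∀ᶠ x in 𝓝 0, deriv (s ∘ Y) x = deriv s (Y x) * deriv Y x := by
  have htendsto := hY.contDiff.continuous.tendsto' 0 0 hY.map_zero
  filter_upwards [htendsto.eventually (hs.contDiffAt.eventually (by simp))] with x hx
  exact deriv_comp x (hx.differentiableAt one_ne_zero) (hY.contDiff.differentiable one_ne_zero x)

lemma deriv_comp_zero (hY : IsRescaling Y) (hs : IsFoldCurve s) :
    deriv (s ∘ Y) 0 = deriv s 0 := by
  rw [(hY.eventually_deriv_comp hs).self_of_nhds, hY.map_zero, hY.deriv_zero, mul_one]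

lemma isSaddleFold_comp (hY : IsRescaling Y) (hs : IsSaddleFold s) : IsSaddleFold (s ∘ Y) where
  toIsFoldCurve := hY.isFoldCurve_comp hs.toIsFoldCurve
  even := hY.even_comp hs.even
  deriv_neg := by
    filter_upwards [(hY.eventually_deriv_comp hs.toIsFoldCurve).filter_mono nhdsWithin_le_nhds,
      hY.tendsto_nhdsGT.eventually hs.deriv_neg] with x hx hneg
    rw [hx]
    exact mul_neg_of_neg_of_pos hneg (hY.deriv_pos x)

lemma isNodeFold_comp (hY : IsRescaling Y) (hs : IsNodeFold s) : IsNodeFold (s ∘ Y) where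
  toIsFoldCurve := hY.isFoldCurve_comp hs.toIsFoldCurve
  even := hY.even_comp hs.even
  deriv_pos := by
    filter_upwards [(hY.eventually_deriv_comp hs.toIsFoldCurve).filter_mono nhdsWithin_le_nhds,
      hY.tendsto_nhdsGT.eventually hs.deriv_pos] with x hx hpos
    rw [hx]
    exact mul_pos hpos (hY.deriv_pos x)
  exists_eq_sq_mul := by
    obtain ⟨k, hk, hk0, heq⟩ := hs.exists_eq_sq_mul
    have htendsto := hY.contDiff.continuous.tendsto' 0 0 hY.map_zero
    have hslope : ContinuousAt (dslope Y 0) 0 :=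
      continuousAt_dslope_same.2 (hY.contDiff.differentiable one_ne_zero 0)
    refine ⟨fun x => dslope Y 0 x ^ 2 * k (Y x),
      (hslope.pow 2).mul (ContinuousAt.comp (hY.map_zero.symm ▸ hk)
        hY.contDiff.continuous.continuousAt), ?_, ?_⟩
    · simpa [dslope_same, hY.deriv_zero, hY.map_zero] using hk0
    · filter_upwards [htendsto.eventually heq] with x hx
      have hdslope : x * dslope Y 0 x = Y x := by
        simpa [hY.map_zero] using sub_smul_dslope Y 0 x
      rw [Function.comp_apply, hx, ← mul_assoc, ← mul_pow, hdslope]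

end IsRescaling

lemma eventually_deriv_pos_of_eq_pow_mul (hk : ContDiffAt ℝ 1 k 0) (hk0 : 0 < k 0)
    (heq : ∀ᶠ x in 𝓝 0, s x = x ^ (n + 1) * k x) : ∀ᶠ x in 𝓝[>] 0, 0 < deriv s x := by
  have hfactor : ContinuousAt (fun x => (n + 1) * k x + x * deriv k x) 0 :=
    (continuousAt_const.mul hk.continuousAt).add
      (continuousAt_id.mul ((hk.continuousAt_fderiv one_ne_zero).clm_apply continuousAt_const))
  have hpos := hfactor.eventually_const_lt (u := 0) (by simp only [zero_mul, add_zero]; positivity)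
  filter_upwards [self_mem_nhdsWithin, hpos.filter_mono nhdsWithin_le_nhds,
    heq.eventually_nhds.filter_mono nhdsWithin_le_nhds,
    (hk.eventually (by simp)).filter_mono nhdsWithin_le_nhds] with x hx hposx heqx hkx
  have hderiv : HasDerivAt s (x ^ n * ((n + 1) * k x + x * deriv k x)) x := by
    refine (((hasDerivAt_pow (n + 1) x).mul
      (hkx.differentiableAt one_ne_zero).hasDerivAt).congr_deriv ?_).congr_of_eventuallyEq heqx
    rw [Nat.add_sub_cancel, Nat.cast_succ]
    ring
  rw [hderiv.deriv]
  exact mul_pos (pow_pos hx n) hposx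

lemma eventually_deriv_neg_of_eq_pow_mul (hk : ContDiffAt ℝ 1 k 0) (hk0 : k 0 < 0)
    (heq : ∀ᶠ x in 𝓝 0, s x = x ^ (n + 1) * k x) : ∀ᶠ x in 𝓝[>] 0, deriv s x < 0 := by
  have hpos := eventually_deriv_pos_of_eq_pow_mul (s := fun x => -s x) (n := n) hk.neg
    (by simpa using hk0) (heq.mono fun x hx => by simp [hx])
  filter_upwards [hpos] with x hx
  rwa [deriv.fun_neg, neg_pos] at hx

namespace HasQuarticExpansion

lemma isFoldCurve (H : HasQuarticExpansion s t u a b c) : IsFoldCurve s where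
  continuous := H.continuous
  map_zero := by simp [H.eventually_eq.self_of_nhds]
  contDiffAt := by
    have := H.contDiffAt_linear
    have := H.contDiffAt_quadratic
    have := H.contDiffAt_quartic
    exact ContDiffAt.congr_of_eventuallyEq (by fun_prop) H.eventually_eq

lemma deriv_zero (H : HasQuarticExpansion s t u a b c) : deriv s 0 = t * a 0 := by
  have ha := (H.contDiffAt_linear.differentiableAt one_ne_zero).hasDerivAt
  have hb := (H.contDiffAt_quadratic.differentiableAt one_ne_zero).hasDerivAt
  have hc := (H.contDiffAt_quartic.differentiableAt one_ne_zero).hasDerivAt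
  have hderiv := ((((hasDerivAt_id (0 : ℝ)).const_mul t).mul ha).add
    (((hasDerivAt_pow 2 (0 : ℝ)).const_mul u).mul hb)).add ((hasDerivAt_pow 4 (0 : ℝ)).mul hc)
  rw [(hderiv.congr_of_eventuallyEq H.eventually_eq).deriv]
  simp

lemma eventually_eq_sq_mul (H : HasQuarticExpansion s 0 u a b c) :
    ∀ᶠ x in 𝓝 0, s x = x ^ 2 * (u * b x + x ^ 2 * c x) := by
  filter_upwards [H.eventually_eq] with x hx
  rw [hx]
  ring

lemma eventually_eq_pow_four_mul (H : HasQuarticExpansion s 0 0 a b c) :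
    ∀ᶠ x in 𝓝 0, s x = x ^ 4 * c x := by
  filter_upwards [H.eventually_eq] with x hx
  rw [hx]
  ring

lemma contDiffAt_sq_factor (H : HasQuarticExpansion s t u a b c) :
    ContDiffAt ℝ 1 (fun x => u * b x + x ^ 2 * c x) 0 := by
  have := H.contDiffAt_quadratic
  have := H.contDiffAt_quartic
  fun_prop

lemma isSaddleFold (H : HasQuarticExpansion s 0 u a b c) (h : u < 0 ∨ u = 0 ∧ c 0 < 0) :
    IsSaddleFold s where
  toIsFoldCurve := H.isFoldCurve
  even := H.even rfl
  deriv_neg := by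
    rcases h with hu | ⟨rfl, hc⟩
    · exact eventually_deriv_neg_of_eq_pow_mul H.contDiffAt_sq_factor
        (by simpa using mul_neg_of_neg_of_pos hu H.quadratic_pos) H.eventually_eq_sq_mul
    · exact eventually_deriv_neg_of_eq_pow_mul H.contDiffAt_quartic hc H.eventually_eq_pow_four_mul

lemma isNodeFold (H : HasQuarticExpansion s 0 u a b c) (h : 0 < u ∨ u = 0 ∧ 0 < c 0)
    (hu : u * b 0 < 1 / 16) : IsNodeFold s where
  toIsFoldCurve := H.isFoldCurve
  even := H.even rfl
  deriv_pos := by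
    rcases h with hu | ⟨rfl, hc⟩
    · exact eventually_deriv_pos_of_eq_pow_mul H.contDiffAt_sq_factor
        (by simpa using mul_pos hu H.quadratic_pos) H.eventually_eq_sq_mul
    · exact eventually_deriv_pos_of_eq_pow_mul H.contDiffAt_quartic hc H.eventually_eq_pow_four_mul
  exists_eq_sq_mul := ⟨fun x => u * b x + x ^ 2 * c x, H.contDiffAt_sq_factor.continuousAt,
    by simpa using hu, H.eventually_eq_sq_mul⟩

theorem topEquivAt0_comp (H : HasQuarticExpansion s t u a b c)
    (H' : HasQuarticExpansion s' t u a' b' c') (hc : 0 < c 0 * c' 0) (hu : u * b 0 < 1 / 16)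
    (hu' : u * b' 0 < 1 / 16) (hY : IsRescaling Y) :
    TopEquivAt0 (foldedBDE (s ∘ Y)) (foldedBDE s') := by
  rcases ne_or_eq t 0 with ht | rfl
  · refine topEquivAt0_of_deriv_mul_pos (hY.isFoldCurve_comp H.isFoldCurve) H'.isFoldCurve ?_
    rw [hY.deriv_comp_zero H.isFoldCurve, H.deriv_zero, H'.deriv_zero, mul_mul_mul_comm]
    exact mul_pos (mul_self_pos.2 ht) (mul_pos H.linear_pos H'.linear_pos)
  · have saddle (h : u < 0 ∨ u = 0 ∧ c 0 < 0) (h' : u < 0 ∨ u = 0 ∧ c' 0 < 0) :=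
      (hY.isSaddleFold_comp (H.isSaddleFold h)).topEquivAt0 (H'.isSaddleFold h')
    have node (h : 0 < u ∨ u = 0 ∧ 0 < c 0) (h' : 0 < u ∨ u = 0 ∧ 0 < c' 0) :=
      (hY.isNodeFold_comp (H.isNodeFold h hu)).topEquivAt0 (H'.isNodeFold h' hu')
    rcases lt_trichotomy u 0 with hneg | hzero | hpos
    · exact saddle (.inl hneg) (.inl hneg)
    · rcases pos_and_pos_or_neg_and_neg_of_mul_pos hc with ⟨hc, hc'⟩ | ⟨hc, hc'⟩
      · exact node (.inr ⟨hzero, hc⟩) (.inr ⟨hzero, hc'⟩)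
      · exact saddle (.inr ⟨hzero, hc⟩) (.inr ⟨hzero, hc'⟩)
    · exact node (.inl hpos) (.inl hpos)

end HasQuarticExpansion

end Unfolding

/-! ### Reduction of the asymptotic equation to a folded equation -/

/-- The family of surfaces `z = f(x, y; t, u)` under consideration. -/
def unfoldedSurface (γ t u : ℝ) (p : ℝ × ℝ) : ℝ :=
  p.2 ^ 2 + p.1 ^ 2 * p.2 + (1 / 4) * p.1 ^ 4 + γ * p.1 ^ 4 * p.2 + t * p.1 ^ 3 + u * p.1 ^ 4

/-- After completing the square, the coefficient `1 + 6 γ x²` of `y dx²` in the asymptotic equation,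
cut off away from the origin so as to be positive everywhere. -/
def foldWeight (γ x : ℝ) : ℝ := max (1 + 6 * γ * x ^ 2) (1 / 2)

/-- The abscissa in which the weight of the asymptotic equation becomes `1`. -/
def straighten (γ x : ℝ) : ℝ := ∫ w in 0..x, √(foldWeight γ w)

/-- The fold of the asymptotic equation after completing the square, over the original abscissa. -/
def reducedFold (γ t u x : ℝ) : ℝ :=
  (3 * t * x + 6 * u * x ^ 2 - 15 / 2 * γ * x ^ 4 - 7 * γ ^ 2 * x ^ 6) / foldWeight γ x

/-- The fold of the model family. -/
def modelFold (η t u x : ℝ) : ℝ := η * x ^ 4 + u * x ^ 2 + t * x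

section Reduction

variable {γ t u η : ℝ} {p v : ℝ × ℝ}

lemma surjective_of_le_deriv {f : ℝ → ℝ} {C : ℝ} (hC : 0 < C) (hf : Differentiable ℝ f)
    (hle : ∀ x, C ≤ deriv f x) : Function.Surjective f := by
  refine hf.continuous.surjective (tendsto_atTop_mono' atTop (f₁ := fun x => f 0 + C * x) ?_ ?_)
    (tendsto_atBot_mono' atBot (f₁ := fun x => f 0 + C * x) ?_ ?_)
  · filter_upwards [eventually_ge_atTop 0] with x hx
    linarith [mul_sub_le_image_sub_of_le_deriv hf hle hx]
  · exact tendsto_atTop_add_const_left _ _ (tendsto_id.const_mul_atTop hC)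
  · filter_upwards [eventually_le_atBot 0] with x hx
    linarith [mul_sub_le_image_sub_of_le_deriv hf hle hx]
  · exact tendsto_atBot_add_const_left _ _ (tendsto_id.const_mul_atBot hC)

lemma odd_integral_of_even {w : ℝ → ℝ} (hw : Function.Even w) :
    Function.Odd fun x => ∫ y in 0..x, w y := fun x => by
  have hneg := intervalIntegral.integral_comp_neg (a := 0) (b := x) w
  simp only [hw _, neg_zero] at hneg
  exact (intervalIntegral.integral_symm _ _).trans (congrArg Neg.neg hneg.symm)

lemma pdx_unfoldedSurface : pdx (unfoldedSurface γ t u) = fun p =>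
    2 * p.2 * p.1 + p.1 ^ 3 + 4 * γ * p.2 * p.1 ^ 3 + 3 * t * p.1 ^ 2 + 4 * u * p.1 ^ 3 := by
  funext ⟨x, y⟩
  have hpow := fun n => hasDerivAt_pow n x
  have hderiv := ((((((hpow 2).mul_const y).const_add (y ^ 2)).add
    ((hpow 4).const_mul (1 / 4))).add (((hpow 4).const_mul γ).mul_const y)).add
    ((hpow 3).const_mul t)).add ((hpow 4).const_mul u)
  refine hderiv.deriv.trans ?_
  push_cast
  ring

lemma pdy_unfoldedSurface : pdy (unfoldedSurface γ t u) = fun p =>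
    2 * p.2 + p.1 ^ 2 + γ * p.1 ^ 4 := by
  funext ⟨x, y⟩
  have hid := hasDerivAt_id y
  have hderiv := (((((hasDerivAt_pow 2 y).add (hid.const_mul (x ^ 2))).add_const
    (1 / 4 * x ^ 4)).add (hid.const_mul (γ * x ^ 4))).add_const (t * x ^ 3)).add_const (u * x ^ 4)
  refine hderiv.deriv.trans ?_
  push_cast
  ring

lemma fxx_unfoldedSurface : fxx (unfoldedSurface γ t u) p =
    2 * p.2 + 3 * p.1 ^ 2 + 12 * γ * p.1 ^ 2 * p.2 + 6 * t * p.1 + 12 * u * p.1 ^ 2 := by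
  obtain ⟨x, y⟩ := p
  have hpow := fun n => hasDerivAt_pow n x
  have hderiv := (((((hasDerivAt_id x).const_mul (2 * y)).add (hpow 3)).add
    ((hpow 3).const_mul (4 * γ * y))).add ((hpow 2).const_mul (3 * t))).add
    ((hpow 3).const_mul (4 * u))
  rw [fxx, pdx_unfoldedSurface]
  refine hderiv.deriv.trans ?_
  push_cast
  ring

lemma fxy_unfoldedSurface : fxy (unfoldedSurface γ t u) p = 2 * p.1 + 4 * γ * p.1 ^ 3 := by
  obtain ⟨x, y⟩ := p
  have hid := hasDerivAt_id y
  have hderiv := (((((hid.const_mul 2).mul_const x).add_const (x ^ 3)).add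
    ((hid.const_mul (4 * γ)).mul_const (x ^ 3))).add_const (3 * t * x ^ 2)).add_const
    (4 * u * x ^ 3)
  rw [fxy, pdx_unfoldedSurface]
  refine hderiv.deriv.trans ?_
  ring

lemma fyy_unfoldedSurface : fyy (unfoldedSurface γ t u) p = 2 := by
  obtain ⟨x, y⟩ := p
  have hderiv := (((hasDerivAt_id y).const_mul 2).add_const (x ^ 2)).add_const (γ * x ^ 4)
  rw [fyy, pdy_unfoldedSurface]
  exact hderiv.deriv.trans (mul_one 2)

lemma foldWeight_pos (γ x : ℝ) : 0 < foldWeight γ x :=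
  one_half_pos.trans_le (le_max_right _ _)

lemma continuous_foldWeight (γ : ℝ) : Continuous (foldWeight γ) := by
  unfold foldWeight
  fun_prop

lemma even_foldWeight (γ : ℝ) : Function.Even (foldWeight γ) := fun x => by
  rw [foldWeight, neg_sq, foldWeight]

lemma eventually_foldWeight_eq (γ : ℝ) : ∀ᶠ x in 𝓝 0, foldWeight γ x = 1 + 6 * γ * x ^ 2 := by
  have hcont : ContinuousAt (fun x : ℝ => 1 + 6 * γ * x ^ 2) 0 := by fun_prop
  filter_upwards [hcont.eventually_const_lt (u := 1 / 2) (by norm_num)] with x hx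
  exact max_eq_left hx.le

lemma foldWeight_zero (γ : ℝ) : foldWeight γ 0 = 1 := by
  simp [(eventually_foldWeight_eq γ).self_of_nhds]

lemma continuous_sqrt_foldWeight (γ : ℝ) : Continuous fun x => √(foldWeight γ x) :=
  (continuous_foldWeight γ).sqrt

lemma hasDerivAt_straighten (γ x : ℝ) : HasDerivAt (straighten γ) √(foldWeight γ x) x :=
  ((continuous_sqrt_foldWeight γ).integral_hasStrictDerivAt 0 x).hasDerivAt

lemma strictMono_straighten (γ : ℝ) : StrictMono (straighten γ) :=
  strictMono_of_deriv_pos fun x => by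
    rw [(hasDerivAt_straighten γ x).deriv]
    exact Real.sqrt_pos.2 (foldWeight_pos γ x)

lemma surjective_straighten (γ : ℝ) : Function.Surjective (straighten γ) :=
  surjective_of_le_deriv (Real.sqrt_pos.2 one_half_pos)
    (fun x => (hasDerivAt_straighten γ x).differentiableAt) fun x => by
      rw [(hasDerivAt_straighten γ x).deriv]
      exact Real.sqrt_le_sqrt (le_max_right _ _)

lemma straighten_zero (γ : ℝ) : straighten γ 0 = 0 := intervalIntegral.integral_same

lemma odd_straighten (γ : ℝ) : Function.Odd (straighten γ) :=
  odd_integral_of_even fun x => by rw [even_foldWeight]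

/-- `straighten` as an automorphism of the line. -/
def straightenIso (γ : ℝ) : ℝ ≃o ℝ :=
  (strictMono_straighten γ).orderIsoOfSurjective _ (surjective_straighten γ)

lemma hasDerivAt_straightenIso_symm (γ x : ℝ) : HasDerivAt (straightenIso γ).symm
    (√(foldWeight γ ((straightenIso γ).symm x)))⁻¹ x :=
  (hasDerivAt_straighten γ _).of_local_left_inverse (straightenIso γ).symm.continuous.continuousAt
    (Real.sqrt_pos.2 (foldWeight_pos γ _)).ne'
    (.of_forall (straightenIso γ).apply_symm_apply)

lemma contDiff_straighten (γ : ℝ) : ContDiff ℝ 1 (straighten γ) :=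
  contDiff_one_iff_deriv.2 ⟨fun x => (hasDerivAt_straighten γ x).differentiableAt, by
    simpa only [deriv_eq (hasDerivAt_straighten γ)] using continuous_sqrt_foldWeight γ⟩

lemma contDiff_straightenIso_symm (γ : ℝ) : ContDiff ℝ 1 (straightenIso γ).symm := by
  refine contDiff_one_iff_deriv.2
    ⟨fun x => (hasDerivAt_straightenIso_symm γ x).differentiableAt, ?_⟩
  rw [deriv_eq (hasDerivAt_straightenIso_symm γ)]
  exact ((continuous_sqrt_foldWeight γ).comp (straightenIso γ).symm.continuous).inv₀
    fun x => (Real.sqrt_pos.2 (foldWeight_pos γ _)).ne'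

lemma isRescaling_straightenIso_symm (γ : ℝ) : IsRescaling (straightenIso γ).symm where
  contDiff := contDiff_straightenIso_symm γ
  odd x := by
    rw [OrderIso.symm_apply_eq]
    exact ((odd_straighten γ _).trans
      (congrArg Neg.neg ((straightenIso γ).apply_symm_apply x))).symm
  deriv_pos x := by
    rw [(hasDerivAt_straightenIso_symm γ x).deriv]
    exact inv_pos.2 (Real.sqrt_pos.2 (foldWeight_pos γ _))
  deriv_zero := by
    have hzero : (straightenIso γ).symm 0 = 0 :=
      (straightenIso γ).symm_apply_eq.2 (straighten_zero γ).symm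
    rw [(hasDerivAt_straightenIso_symm γ 0).deriv, hzero, foldWeight_zero, Real.sqrt_one, inv_one]

/-- The coordinates `(∫₀ˣ √w, -(y + x²/2 + γ x⁴/2))` that bring the asymptotic equation to the form
`dy² = (y - s x) dx²`: the second one completes the square, the first one normalizes the weight
`w` of the equation. -/
def straightenPlane (γ : ℝ) : ℝ × ℝ ≃ ℝ × ℝ where
  toFun p := (straighten γ p.1, -(p.2 + p.1 ^ 2 / 2 + γ / 2 * p.1 ^ 4))
  invFun q := ((straightenIso γ).symm q.1,
    -q.2 - (straightenIso γ).symm q.1 ^ 2 / 2 - γ / 2 * (straightenIso γ).symm q.1 ^ 4)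
  left_inv p := by
    have hinv : (straightenIso γ).symm (straighten γ p.1) = p.1 :=
      (straightenIso γ).symm_apply_apply p.1
    refine Prod.ext hinv ?_
    simp only [hinv]
    ring
  right_inv q := by
    refine Prod.ext ((straightenIso γ).apply_symm_apply q.1) ?_
    ring

lemma fderiv_straightenPlane : fderiv ℝ (straightenPlane γ) p v =
    (√(foldWeight γ p.1) * v.1, -(v.2 + (p.1 + 2 * γ * p.1 ^ 3) * v.1)) := by
  have hproj : HasFDerivAt Prod.fst (.fst ℝ ℝ ℝ) p := hasFDerivAt_fst
  have hfst := (hasDerivAt_straighten γ p.1).comp_hasFDerivAt p hproj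
  have hpoly : HasDerivAt (fun x => x ^ 2 / 2 + γ / 2 * x ^ 4) (p.1 + 2 * γ * p.1 ^ 3) p.1 := by
    refine (((hasDerivAt_pow 2 p.1).div_const 2).add
      ((hasDerivAt_pow 4 p.1).const_mul (γ / 2))).congr_deriv ?_
    push_cast
    ring
  have hsnd := (hasFDerivAt_snd.add (hpoly.comp_hasFDerivAt p hproj)).neg
  have hplane : HasFDerivAt (straightenPlane γ) _ p :=
    (hfst.prodMk hsnd).congr_of_eventuallyEq (.of_forall fun q =>
      Prod.ext rfl (congrArg Neg.neg (add_assoc q.2 _ _)))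
  rw [hplane.fderiv]
  simp

lemma asymBDE_unfoldedSurface_eq (hw : foldWeight γ p.1 = 1 + 6 * γ * p.1 ^ 2) :
    asymBDE (unfoldedSurface γ t u) p v =
      2 * foldedBDE (reducedFold γ t u ∘ (straightenIso γ).symm) (straightenPlane γ p)
        (fderiv ℝ (straightenPlane γ) p v) := by
  have hfold : reducedFold γ t u p.1 * (1 + 6 * γ * p.1 ^ 2) =
      3 * t * p.1 + 6 * u * p.1 ^ 2 - 15 / 2 * γ * p.1 ^ 4 - 7 * γ ^ 2 * p.1 ^ 6 := by
    rw [← hw, reducedFold, div_mul_cancel₀ _ (foldWeight_pos γ p.1).ne']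
  have hinv : (straightenIso γ).symm (straighten γ p.1) = p.1 :=
    (straightenIso γ).symm_apply_apply p.1
  rw [asymBDE, BDE, fxx_unfoldedSurface, fxy_unfoldedSurface, fyy_unfoldedSurface,
    foldedBDE_apply, fderiv_straightenPlane]
  simp only [straightenPlane, Equiv.coe_fn_mk, Function.comp_apply, hinv, mul_pow,
    Real.sq_sqrt (foldWeight_pos γ p.1).le]
  rw [hw]
  linear_combination (-2 * v.1 ^ 2) * hfold

theorem topEquivAt0_asymBDE_unfoldedSurface (γ t u : ℝ) :
    TopEquivAt0 (asymBDE (unfoldedSurface γ t u))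
      (foldedBDE (reducedFold γ t u ∘ (straightenIso γ).symm)) := by
  have hX := contDiff_straighten γ
  have hY := contDiff_straightenIso_symm γ
  refine topEquivAt0_of_contDiff (straightenPlane γ) ?_ ?_ ?_
    (continuousAt_fst.eventually (eventually_foldWeight_eq γ)) fun p hp v => ?_
  · exact (hX.comp contDiff_fst).prodMk (by fun_prop)
  · have hfst := hY.comp contDiff_fst (E := ℝ × ℝ)
    exact hfst.prodMk ((contDiff_snd.neg.sub ((hfst.pow 2).div_const 2)).sub
      (contDiff_const.mul (hfst.pow 4)))
  · simp [straightenPlane, straighten_zero]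
  · rw [asymBDE_unfoldedSurface_eq hp, mul_eq_zero_iff_left two_ne_zero]

lemma hasQuarticExpansion_reducedFold (γ t u : ℝ) :
    HasQuarticExpansion (reducedFold γ t u) t u (fun x => 3 / foldWeight γ x)
      (fun x => 6 / foldWeight γ x)
      (fun x => -(15 / 2 * γ + 7 * γ ^ 2 * x ^ 2) / foldWeight γ x) := by
  have hweight : ContDiffAt ℝ 1 (foldWeight γ) 0 :=
    ContDiffAt.congr_of_eventuallyEq (by fun_prop) (eventually_foldWeight_eq γ)
  have hne := (foldWeight_pos γ 0).ne'
  refine ⟨?_, ?_, contDiffAt_const.div hweight hne, contDiffAt_const.div hweight hne,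
    ContDiffAt.div (by fun_prop) hweight hne, div_pos three_pos (foldWeight_pos γ 0),
    div_pos (by norm_num) (foldWeight_pos γ 0), .of_forall fun x => ?_⟩
  · exact Continuous.div (by fun_prop) (continuous_foldWeight γ) fun x => (foldWeight_pos γ x).ne'
  · rintro rfl x
    simp only [reducedFold, even_foldWeight γ x]
    ring
  · rw [reducedFold]
    ring

lemma hasQuarticExpansion_modelFold (η t u : ℝ) :
    HasQuarticExpansion (modelFold η t u) t u (fun _ => 1) (fun _ => 1) (fun _ => η) := by
  refine ⟨?_, ?_, contDiffAt_const, contDiffAt_const, contDiffAt_const, one_pos, one_pos,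
    .of_forall fun x => ?_⟩
  · unfold modelFold
    fun_prop
  · rintro rfl x
    simp only [modelFold]
    ring
  · rw [modelFold]
    ring

theorem topEquivAt0_asymBDE_modelFold (hη : η * γ < 0) (hu : u < 1 / 96) :
    TopEquivAt0 (asymBDE (unfoldedSurface γ t u)) (foldedBDE (modelFold η t u)) := by
  refine topEquivAt0_trans (topEquivAt0_asymBDE_unfoldedSurface γ t u)
    ((hasQuarticExpansion_reducedFold γ t u).topEquivAt0_comp (hasQuarticExpansion_modelFold η t u)
      ?_ ?_ ?_ (isRescaling_straightenIso_symm γ))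
  · rw [foldWeight_zero]
    linarith
  · rw [foldWeight_zero]
    linarith
  · linarith

end Reduction

end FoldedBDE

/-- the 2-parameter family of asymptotic BDEs of
`f(x,y;t,u) = y² + x²y + (1/4)x⁴ + γx⁴y + tx³ + ux⁴`, `γ ≠ 0`, is fiber
topologically equivalent at `0` to the family
`dy² + (−y + ηx⁴ + ux² + tx)dx² = 0` for some `η ∈ {1,−1}`. -/
theorem stmt16 (γ : ℝ) (hγ : γ ≠ 0) :
    ∃ η : ℝ, (η = 1 ∨ η = -1) ∧
      FiberTopEquivAt0
        (fun tu => asymBDE (fun p =>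
          p.2 ^ 2 + p.1 ^ 2 * p.2 + (1 / 4) * p.1 ^ 4 + γ * p.1 ^ 4 * p.2 +
            tu.1 * p.1 ^ 3 + tu.2 * p.1 ^ 4))
        (fun tu => BDE (fun _ => 1) (fun _ => 0)
          (fun p => -p.2 + η * p.1 ^ 4 + tu.2 * p.1 ^ 2 + tu.1 * p.1)) := by
  obtain ⟨η, hη, hsign⟩ : ∃ η : ℝ, (η = 1 ∨ η = -1) ∧ η * γ < 0 := by
    rcases lt_or_gt_of_ne hγ with hneg | hpos
    · exact ⟨1, .inl rfl, by linarith⟩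
    · exact ⟨-1, .inr rfl, by linarith⟩
  refine ⟨η, hη, {q | q.2 < 1 / 96}, id, id,
    (isOpen_lt continuous_snd continuous_const).mem_nhds (by norm_num), rfl, continuousOn_id,
    continuousOn_id, ⟨fun _ _ => rfl, fun _ _ => rfl⟩, fun q hq => ?_⟩
  have hequiv := FoldedBDE.topEquivAt0_asymBDE_modelFold (t := q.1) hsign hq
  simpa only [FoldedBDE.foldedBDE, FoldedBDE.modelFold, ← add_assoc] using! hequiv
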